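/- Fix R₁ > 0 and R₂ ∈ ℝ with |R₂| < R₁, and set D := {(t,x) ∈ ℝ^{1+3} : t > 0, (r−t−R₂)(r+t+R₂) > R₁² − R₂²}. Fix constants 0 < γ ≤ 1 and C₁, C₂ > 0 and γ' > 0. Suppose the continuous functions V_J^{I,α} and W_J^I (I,J = 1,…,N; α = 0,…,3) are defined on D and satisfy Σ_{I,J,α} |V_J^{I,α}(t,x)| ≤ C₁(1+t+r)^{−1} and Σ_{I,J} |Σ_α V_J^{I,α}(t,x) ω̂_α| + Σ_{I,J} |W_J^I(t,x)| ≤ C₁(1+t+r)^{−1−γ} for all (t,x) ∈ D, where ω̂ = (−1, x/r). Suppose φ = (φ^I) ∈ C²(D; ℝ^N) solves □̃φ = 0 in D, φ(t,x) = 0 whenever r − t ≥ R₁, and |φ| + |∂φ| ≤ C₂(1+t+r)^{−3/2−γ'} and |(∂_t+∂_r)φ| ≤ C₂(1+t+r)^{−5/2−γ'} on D (|∂φ| denoting the sum of absolute values of all first-order partial derivatives in t,x). Then φ ≡ 0 on D. -/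

import Mathlib

noncomputable section
open MeasureTheory Real Set Filter Topology

namespace UCP

/-- Spacetime `ℝ^{1+3}`: a point is `(t, x)` with `x ∈ ℝ³`. -/
abbrev Spc : Type := ℝ × EuclideanSpace ℝ (Fin 3)

/-- Coordinate directions `e_α`, `α = 0,1,2,3` (`e_0` is the time direction). -/
def eVec (α : Fin 4) : Spc :=
  Fin.cases ((1 : ℝ), (0 : EuclideanSpace ℝ (Fin 3)))
    (fun i => ((0 : ℝ), EuclideanSpace.single i (1 : ℝ))) α

/-- The partial derivative `∂_α u`. -/
def pd (α : Fin 4) (u : Spc → ℝ) (p : Spc) : ℝ := fderiv ℝ u p (eVec α)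

/-- `∂_t u`. -/
def dt (u : Spc → ℝ) : Spc → ℝ := pd 0 u

/-- `∂_i u`, `i = 1,2,3`. -/
def dxi (i : Fin 3) (u : Spc → ℝ) : Spc → ℝ := pd i.succ u

/-- The d'Alembertian `□u = -∂_t² u + Δ_x u`. -/
def box (u : Spc → ℝ) (p : Spc) : ℝ :=
  - dt (dt u) p + ∑ i : Fin 3, dxi i (dxi i u) p

/-- Signs of the Minkowski metric `diag(-1,1,1,1)`, so that `∂^α = eta α • ∂_α`. -/
def eta (α : Fin 4) : ℝ := if α = 0 then -1 else 1

/-- `r = |x|`. -/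
def rr (p : Spc) : ℝ := ‖p.2‖

/-- The radial derivative `∂_r u = Σ_i (x_i/r) ∂_i u`. -/
def dr (u : Spc → ℝ) (p : Spc) : ℝ := ∑ i : Fin 3, (p.2 i / rr p) * dxi i u p

/-- `ω̂ = (-1, x/r)` as a `Fin 4`-indexed family. -/
def hatom (p : Spc) (α : Fin 4) : ℝ := Fin.cases (-1 : ℝ) (fun i => p.2 i / rr p) α

/-- The operator `(□̃φ)^I = □φ^I + Σ_{J,α} V_J^{I,α} ∂_α φ^J + Σ_J W_J^I φ^J`. -/
def boxT {N : ℕ} (V : Fin N → Fin N → Fin 4 → Spc → ℝ)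
    (W : Fin N → Fin N → Spc → ℝ) (φ : Fin N → Spc → ℝ) (I : Fin N) (p : Spc) : ℝ :=
  box (φ I) p + (∑ J : Fin N, ∑ α : Fin 4, V I J α p * pd α (φ J) p)
    + ∑ J : Fin N, W I J p * φ J p

/-- The region `𝒟_{R₁,R₂} = {t > 0, (r-t-R₂)(r+t+R₂) > R₁² - R₂²}`. -/
def DD (R₁ R₂ : ℝ) : Set Spc :=
  {p | 0 < p.1 ∧ R₁ ^ 2 - R₂ ^ 2 < (rr p - p.1 - R₂) * (rr p + p.1 + R₂)}

/-
The proof is a Carleman estimate. The hyperboloids `r² - (t + σ)² - 2a (t + σ) = d` foliate the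
domain, and bending their level function to `F = a - (ε / γ) T^{-γ}`, `T = t + σ`, makes the level
sets pseudoconvex with a gain `y = ε T^{-1-γ}` that matches the decay assumed on the coefficients.
For `w = T m(F) φ`, where `m` is the weight `exp (l e^{μF} / μ)` cut off below a level `k₁ > R₂`,
the multiplier `-X w + h w`, with `X` the derivative along the gradient of `F`, gives a divergence
identity whose bulk term controls `l² e^{2μF} y² w²`, `y (∂_t w)² / T`, the angular derivatives and
`(X w)²`. The null condition on `V` is what lets the first-order terms be absorbed for large `l`:
the coefficient of the derivatives not controlled by `X` and the angular ones decays like `y`.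

The decay of `φ` makes all densities integrable near the light cone and kills the flux through
`t = R` as `R → ∞`; there is no other boundary, since `w` vanishes for `F ≤ k₁` and `r - t ≥ R₁`.
The errors of the cutoff live on `k₁ ≤ F ≤ k₂`, where the weight is smallest, so `l → ∞` forces
`φ = 0` on `F > k₂`. Every point of the domain lies in such a set for suitable small `σ` and `ε`.
-/

section IntegrationByParts

instance : (volume : Measure Spc).IsAddHaarMeasure := by
  rw [Measure.volume_eq_prod]
  infer_instance

lemma pd_congr_of_eventuallyEq {u v : Spc → ℝ} {p : Spc} (h : u =ᶠ[𝓝 p] v) (α : Fin 4) :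
    pd α u p = pd α v p := by
  rw [pd, pd, h.fderiv_eq]

lemma pd_eq_zero_of_eventuallyEq_const {u : Spc → ℝ} {p : Spc} {k : ℝ}
    (h : u =ᶠ[𝓝 p] fun _ => k) (α : Fin 4) : pd α u p = 0 := by
  rw [pd_congr_of_eventuallyEq h, pd, fderiv_fun_const, Pi.zero_apply, zero_apply]

lemma integrable_pd {u : Spc → ℝ} (hu : ContDiff ℝ 1 u) (hc : HasCompactSupport u) (α : Fin 4) :
    Integrable (pd α u) :=
  ((hu.continuous_fderiv one_ne_zero).clm_apply continuous_const).integrable_of_hasCompactSupport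
    (hc.fderiv_apply (𝕜 := ℝ) (eVec α))

lemma integral_pd_eq_zero {u : Spc → ℝ} (hu : ContDiff ℝ 1 u) (hc : HasCompactSupport u)
    (α : Fin 4) : ∫ p, pd α u p = 0 := by
  have hpd : Integrable fun p => (1 : ℝ) * fderiv ℝ u p (eVec α) := by
    simp only [one_mul]
    exact integrable_pd hu hc α
  have parts := integral_mul_fderiv_eq_neg_fderiv_mul_of_integrable (μ := (volume : Measure Spc))
    (f := fun _ => (1 : ℝ)) (g := u) (v := eVec α) (by simp) hpd
    (by simpa only [one_mul] using hu.continuous.integrable_of_hasCompactSupport hc)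
    (fun _ _ => by fun_prop) (fun x _ => hu.differentiable one_ne_zero x)
  simpa [pd] using parts

lemma contDiff_indicator_of_compact {D K : Set Spc} (hD : IsOpen D) (hK : IsCompact K)
    (hKD : K ⊆ D) {u : Spc → ℝ} (hu : ContDiffOn ℝ 1 u D) (hz : ∀ p ∈ D, p ∉ K → u p = 0) :
    ContDiff ℝ 1 (D.indicator u) ∧ ∀ p ∉ K, D.indicator u p = 0 := by
  have hzero : ∀ p ∉ K, D.indicator u p = 0 := fun p hp =>
    (em (p ∈ D)).elim (fun h => (indicator_of_mem h u).trans (hz p h hp))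
      fun h => indicator_of_notMem h u
  refine ⟨contDiff_iff_contDiffAt.2 fun p => ?_, hzero⟩
  by_cases hp : p ∈ D
  · refine (hu.contDiffAt (hD.mem_nhds hp)).congr_of_eventuallyEq ?_
    filter_upwards [hD.mem_nhds hp] with q hq using indicator_of_mem hq u
  · refine contDiffAt_const (c := (0 : ℝ)) |>.congr_of_eventuallyEq ?_
    filter_upwards [hK.isClosed.isOpen_compl.mem_nhds fun h => hp (hKD h)] with q hq
      using hzero q hq

lemma setIntegral_pd_eq_zero {D K : Set Spc} (hD : IsOpen D) (hK : IsCompact K) (hKD : K ⊆ D)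
    {u : Spc → ℝ} (hu : ContDiffOn ℝ 1 u D) (hz : ∀ p ∈ D, p ∉ K → u p = 0) (α : Fin 4) :
    IntegrableOn (pd α u) D ∧ ∫ p in D, pd α u p = 0 := by
  obtain ⟨hsmooth, hzero⟩ := contDiff_indicator_of_compact hD hK hKD hu hz
  have hcompact : HasCompactSupport (D.indicator u) := .intro hK hzero
  have inside : ∀ p ∈ D, pd α (D.indicator u) p = pd α u p := fun p hp =>
    pd_congr_of_eventuallyEq (eventuallyEq_of_mem (hD.mem_nhds hp) fun q hq =>
      indicator_of_mem hq u) α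
  have outside : ∀ p ∉ D, pd α (D.indicator u) p = 0 := fun p hp =>
    pd_eq_zero_of_eventuallyEq_const (eventuallyEq_of_mem
      (hK.isClosed.isOpen_compl.mem_nhds fun h => hp (hKD h)) hzero) α
  refine ⟨(integrable_pd hsmooth hcompact α).integrableOn.congr_fun inside hD.measurableSet, ?_⟩
  rw [← setIntegral_congr_fun hD.measurableSet inside,
    setIntegral_eq_integral_of_forall_compl_eq_zero outside,
    integral_pd_eq_zero hsmooth hcompact]

lemma setIntegral_divergence_eq_zero {D K : Set Spc} (hD : IsOpen D) (hK : IsCompact K)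
    (hKD : K ⊆ D) {P : Fin 4 → Spc → ℝ} (hP : ∀ α, ContDiffOn ℝ 1 (P α) D)
    (hz : ∀ α, ∀ p ∈ D, p ∉ K → P α p = 0) :
    IntegrableOn (fun p => ∑ α, pd α (P α) p) D ∧ ∫ p in D, ∑ α, pd α (P α) p = 0 := by
  have component := fun α => setIntegral_pd_eq_zero hD hK hKD (hP α) (hz α) α
  refine ⟨integrable_finsetSum _ fun α _ => (component α).1, ?_⟩
  rw [integral_finsetSum _ fun α _ => (component α).1]
  exact Finset.sum_eq_zero fun α _ => (component α).2

end IntegrationByParts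

section PartialDerivatives

/-- `u` is differentiable at `p` with `∂_α u(p) = c`: the analogue of `HasDerivAt` for `pd`, used
to compute partial derivatives of composite expressions. -/
def HasPD (α : Fin 4) (u : Spc → ℝ) (p : Spc) (c : ℝ) : Prop :=
  DifferentiableAt ℝ u p ∧ pd α u p = c

namespace HasPD

variable {α : Fin 4} {u v : Spc → ℝ} {p : Spc} {a b : ℝ}

lemma of_differentiableAt (h : DifferentiableAt ℝ u p) (α : Fin 4) : HasPD α u p (pd α u p) :=
  ⟨h, rfl⟩

lemma const (k : ℝ) : HasPD α (fun _ => k) p 0 :=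
  ⟨differentiableAt_const k, pd_eq_zero_of_eventuallyEq_const .rfl α⟩

lemma congr_deriv (hu : HasPD α u p a) (h : a = b) : HasPD α u p b := h ▸ hu

lemma neg (hu : HasPD α u p a) : HasPD α (fun p => -u p) p (-a) := by
  refine ⟨hu.1.fun_neg, ?_⟩
  rw [← hu.2, pd, fderiv_fun_neg]
  rfl

lemma add (hu : HasPD α u p a) (hv : HasPD α v p b) : HasPD α (fun p => u p + v p) p (a + b) := by
  refine ⟨hu.1.fun_add hv.1, ?_⟩
  rw [← hu.2, ← hv.2, pd, fderiv_fun_add hu.1 hv.1]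
  rfl

lemma sub (hu : HasPD α u p a) (hv : HasPD α v p b) : HasPD α (fun p => u p - v p) p (a - b) := by
  refine ⟨hu.1.fun_sub hv.1, ?_⟩
  rw [← hu.2, ← hv.2, pd, fderiv_fun_sub hu.1 hv.1]
  rfl

lemma mul (hu : HasPD α u p a) (hv : HasPD α v p b) :
    HasPD α (fun p => u p * v p) p (a * v p + u p * b) := by
  refine ⟨hu.1.fun_mul hv.1, ?_⟩
  rw [← hu.2, ← hv.2, pd, fderiv_fun_mul hu.1 hv.1]
  simp only [pd, add_apply, smul_apply, smul_eq_mul]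
  ring

lemma sq (hu : HasPD α u p a) : HasPD α (fun p => u p ^ 2) p (2 * u p * a) := by
  simpa only [← pow_two] using (hu.mul hu).congr_deriv (b := 2 * u p * a) (by ring)

lemma comp {g : ℝ → ℝ} {g' : ℝ} (hg : HasDerivAt g g' (u p)) (hu : HasPD α u p a) :
    HasPD α (fun p => g (u p)) p (g' * a) := by
  have h := hg.comp_hasFDerivAt p hu.1.hasFDerivAt
  refine ⟨h.differentiableAt, ?_⟩
  rw [← hu.2]
  exact congrArg (· (eVec α)) h.fderiv

lemma inv (hu : HasPD α u p a) (h0 : u p ≠ 0) : HasPD α (fun p => (u p)⁻¹) p (-a / u p ^ 2) :=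
  (hu.comp (hasDerivAt_inv h0)).congr_deriv (by ring)

lemma sum {ι : Type*} [Fintype ι] {u : ι → Spc → ℝ} {c : ι → ℝ}
    (h : ∀ i, HasPD α (u i) p (c i)) :
    HasPD α (fun p => ∑ i, u i p) p (∑ i, c i) := by
  refine ⟨DifferentiableAt.fun_sum fun i _ => (h i).1, ?_⟩
  rw [pd, fderiv_fun_sum fun i _ => (h i).1, sum_apply]
  exact Finset.sum_congr rfl fun i _ => (h i).2

end HasPD

lemma eVec_zero_fst : (eVec 0).1 = 1 := rfl

lemma eVec_succ_fst (i : Fin 3) : (eVec i.succ).1 = 0 := rfl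

lemma eVec_zero_snd (i : Fin 3) : (eVec 0).2 i = 0 := rfl

lemma eVec_succ_snd (i j : Fin 3) : (eVec i.succ).2 j = if j = i then 1 else 0 := by
  change EuclideanSpace.single i (1 : ℝ) j = _
  rw [PiLp.single_apply]

lemma hasPD_fst (α : Fin 4) (p : Spc) : HasPD α (fun p => p.1) p (eVec α).1 :=
  ⟨differentiableAt_fst, by rw [pd, fderiv_fst, ContinuousLinearMap.coe_fst']⟩

lemma hasPD_snd_apply (α : Fin 4) (i : Fin 3) (p : Spc) :
    HasPD α (fun p => p.2 i) p ((eVec α).2 i) := by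
  have h : HasFDerivAt (fun p : Spc => p.2 i) ((EuclideanSpace.proj i).comp
      (ContinuousLinearMap.snd ℝ ℝ (EuclideanSpace ℝ (Fin 3)))) p :=
    ((EuclideanSpace.proj i).comp (ContinuousLinearMap.snd ℝ ℝ _)).hasFDerivAt
  refine ⟨h.differentiableAt, ?_⟩
  rw [pd, h.fderiv]
  rfl

lemma rr_sq (p : Spc) : rr p ^ 2 = ∑ i : Fin 3, p.2 i ^ 2 := by
  simp only [rr, EuclideanSpace.norm_sq_eq, Real.norm_eq_abs, sq_abs]

lemma hasPD_rr_sq (α : Fin 4) (p : Spc) :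
    HasPD α (fun p => rr p ^ 2) p (∑ i : Fin 3, 2 * p.2 i * (eVec α).2 i) := by
  simpa only [rr_sq] using HasPD.sum fun i => (hasPD_snd_apply α i p).sq

variable {w : Spc → ℝ} {p : Spc}

lemma contDiffAt_pd (hw : ContDiffAt ℝ 2 w p) (α : Fin 4) : ContDiffAt ℝ 1 (pd α w) p :=
  (hw.fderiv_right (m := 1) le_rfl).clm_apply contDiffAt_const

lemma hasPD_pd (hw : ContDiffAt ℝ 2 w p) (α β : Fin 4) :
    HasPD β (pd α w) p (pd β (pd α w) p) :=
  .of_differentiableAt ((contDiffAt_pd hw α).differentiableAt one_ne_zero) β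

lemma pd_pd_eq_fderiv_fderiv (hw : ContDiffAt ℝ 2 w p) (α β : Fin 4) :
    pd β (pd α w) p = fderiv ℝ (fderiv ℝ w) p (eVec β) (eVec α) := by
  have h : DifferentiableAt ℝ (fderiv ℝ w) p :=
    (hw.fderiv_right (m := 1) le_rfl).differentiableAt one_ne_zero
  change fderiv ℝ (fun q => fderiv ℝ w q (eVec α)) p (eVec β) = _
  rw [fderiv_clm_apply h (differentiableAt_const _)]
  simp

lemma pd_comm (hw : ContDiffAt ℝ 2 w p) (α β : Fin 4) : pd β (pd α w) p = pd α (pd β w) p := by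
  rw [pd_pd_eq_fderiv_fderiv hw, pd_pd_eq_fderiv_fderiv hw]
  exact hw.isSymmSndFDerivAt (by simp) _ _

end PartialDerivatives

section EnergyCurrent

/-- The derivative `A_i ∂_i w - f ∂_t w` of `w` along the Minkowski gradient of a function whose
differential has spatial components `A` and time component `f`. -/
def gradDeriv (A : Fin 3 → Spc → ℝ) (f w : Spc → ℝ) (p : Spc) : ℝ :=
  (∑ i, A i p * pd i.succ w p) - f p * pd 0 w p

/-- The Minkowski square `|∇_x w|² - (∂_t w)²` of the differential of `w`. -/
def lagrangian (w : Spc → ℝ) (p : Spc) : ℝ := (∑ i : Fin 3, pd i.succ w p ^ 2) - pd 0 w p ^ 2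

/-- The current `-Q^α_β X^β + h w ∂^α w - ½ B X^α w²` of the Carleman estimate, where `Q` is the
energy-momentum tensor of `w` and `X` the vector field of `gradDeriv A f`. The index `α` is
contravariant, so that the divergence is `∑ α, pd α`. -/
def energyCurrent (A : Fin 3 → Spc → ℝ) (f h B w : Spc → ℝ) (α : Fin 4) : Spc → ℝ :=
  Fin.cases
    (fun p => pd 0 w p * gradDeriv A f w p - (1/2) * (f p * lagrangian w p)
      - h p * (w p * pd 0 w p) + (1/2) * (B p * (f p * w p ^ 2)))
    (fun i p => -(pd i.succ w p * gradDeriv A f w p) + (1/2) * (A i p * lagrangian w p)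
      + h p * (w p * pd i.succ w p) - (1/2) * (B p * (A i p * w p ^ 2))) α

variable {A : Fin 3 → Spc → ℝ} {f h B w : Spc → ℝ} {p : Spc}

lemma hasPD_gradDeriv (hw : ContDiffAt ℝ 2 w p) {α : Fin 4} {dA : Fin 3 → ℝ} {df : ℝ}
    (hA : ∀ i, HasPD α (A i) p (dA i)) (hf : HasPD α f p df) :
    HasPD α (gradDeriv A f w) p
      ((∑ i, (dA i * pd i.succ w p + A i p * pd α (pd i.succ w) p))
        - (df * pd 0 w p + f p * pd α (pd 0 w) p)) :=
  (HasPD.sum fun i => (hA i).mul (hasPD_pd hw i.succ α)).sub (hf.mul (hasPD_pd hw 0 α))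

lemma hasPD_lagrangian (hw : ContDiffAt ℝ 2 w p) (α : Fin 4) :
    HasPD α (lagrangian w) p
      ((∑ i : Fin 3, 2 * pd i.succ w p * pd α (pd i.succ w) p)
        - 2 * pd 0 w p * pd α (pd 0 w) p) :=
  (HasPD.sum fun i => (hasPD_pd hw (Fin.succ i) α).sq).sub (hasPD_pd hw 0 α).sq

lemma divergence_energyCurrent (hw : ContDiffAt ℝ 2 w p) {dA : Fin 3 → Fin 4 → ℝ}
    {df dh dB : Fin 4 → ℝ} (hA : ∀ i α, HasPD α (A i) p (dA i α)) (hf : ∀ α, HasPD α f p (df α))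
    (hh : ∀ α, HasPD α h p (dh α)) (hB : ∀ α, HasPD α B p (dB α))
    (hdA : ∀ i j : Fin 3, dA i j.succ = dA j i.succ) (hdf : ∀ i : Fin 3, dA i 0 = df i.succ) :
    ∑ α, pd α (energyCurrent A f h B w α) p =
      (-gradDeriv A f w p + h p * w p) * box w p
      - ((∑ i : Fin 3, ∑ j : Fin 3, dA i j.succ * pd i.succ w p * pd j.succ w p)
        - 2 * (∑ i : Fin 3, df i.succ * pd i.succ w p) * pd 0 w p + df 0 * pd 0 w p ^ 2)
      + (1/2) * ((∑ i : Fin 3, dA i i.succ) - df 0) * lagrangian w p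
      + w p * ((∑ i : Fin 3, dh i.succ * pd i.succ w p) - dh 0 * pd 0 w p) + h p * lagrangian w p
      - (1/2) * ((∑ i : Fin 3, dB i.succ * A i p) - dB 0 * f p) * w p ^ 2
      - (1/2) * B p * ((∑ i : Fin 3, dA i i.succ) - df 0) * w p ^ 2
      - B p * w p * gradDeriv A f w p := by
  have hw₁ : ∀ α, HasPD α w p (pd α w p) :=
    HasPD.of_differentiableAt (hw.differentiableAt two_ne_zero)
  have hX : ∀ α, HasPD α (gradDeriv A f w) p _ := fun α =>
    hasPD_gradDeriv hw (fun i => hA i α) (hf α)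
  have time : HasPD 0 (energyCurrent A f h B w 0) p _ :=
    ((((hasPD_pd hw 0 0).mul (hX 0)).sub
      ((HasPD.const (1/2)).mul ((hf 0).mul (hasPD_lagrangian hw 0)))).sub
      ((hh 0).mul ((hw₁ 0).mul (hasPD_pd hw 0 0)))).add
      ((HasPD.const (1/2)).mul ((hB 0).mul ((hf 0).mul (hw₁ 0).sq)))
  have space : ∀ i : Fin 3, HasPD i.succ (energyCurrent A f h B w i.succ) p _ := fun i =>
    ((((hasPD_pd hw i.succ i.succ).mul (hX i.succ)).neg.add
      ((HasPD.const (1/2)).mul ((hA i i.succ).mul (hasPD_lagrangian hw i.succ)))).add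
      ((hh i.succ).mul ((hw₁ i.succ).mul (hasPD_pd hw i.succ i.succ)))).sub
      ((HasPD.const (1/2)).mul ((hB i.succ).mul ((hA i i.succ).mul (hw₁ i.succ).sq)))
  rw [Fin.sum_univ_succ, time.2, Finset.sum_congr rfl fun i _ => (space i).2]
  simp only [gradDeriv, lagrangian, box, dt, dxi, Fin.sum_univ_three, hdf]
  rw [hdA 1 0, hdA 2 0, hdA 2 1, pd_comm hw 0 (Fin.succ 0), pd_comm hw 0 (Fin.succ 1),
    pd_comm hw 0 (Fin.succ 2), pd_comm hw (Fin.succ 0) (Fin.succ 1),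
    pd_comm hw (Fin.succ 0) (Fin.succ 2), pd_comm hw (Fin.succ 1) (Fin.succ 2)]
  ring

end EnergyCurrent

section CarlemanFunction

/-- The parameters of the Carleman weight: the time shift `σ`, the hyperboloid constant `d`, the
strength `ε` and exponent `γ` of the correction to the Carleman function, the constant `c` of the
multiplier, the rate `μ` of the exponential weight, and the levels `k₁ < k₂` of the cutoff. -/
structure CarlemanParams where
  σ : ℝ
  d : ℝ
  ε : ℝ
  γ : ℝ
  c : ℝ
  μ : ℝ
  k₁ : ℝ
  k₂ : ℝ

namespace CarlemanParams

variable (P : CarlemanParams) {p : Spc}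

/-- The shifted time `t + σ`. -/
def T (p : Spc) : ℝ := p.1 + P.σ

/-- The function whose level sets are the hyperboloids `|x|² - T² - 2aT = d`. -/
def a (p : Spc) : ℝ := (rr p ^ 2 - P.T p ^ 2 - P.d) * (2 * P.T p)⁻¹

/-- The correction rate `ε T^{-1-γ}`, which matches the decay of the coefficients. -/
def y (p : Spc) : ℝ := P.ε * P.T p ^ (-1 - P.γ)

/-- The Carleman function: `a` bent by a primitive of `y`, which makes its level sets strictly
pseudoconvex. -/
def F (p : Spc) : ℝ := P.a p - P.ε / P.γ * P.T p ^ (-P.γ)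

/-- The spatial derivatives `∂_i F = x_i / T`. -/
def A (i : Fin 3) (p : Spc) : ℝ := p.2 i * (P.T p)⁻¹

/-- The time derivative `∂_t F`. -/
def f (p : Spc) : ℝ := -1 - P.a p * (P.T p)⁻¹ + P.y p

/-- The Minkowski square of the differential of `F`. -/
def n (p : Spc) : ℝ := rr p ^ 2 * (P.T p)⁻¹ ^ 2 - P.f p ^ 2

/-- The zeroth-order weight of the multiplier `-X w + h w`. -/
def h (p : Spc) : ℝ := (P.a p - P.c) * (P.T p)⁻¹ ^ 2 - P.y p * (P.T p)⁻¹

/-- The exponential weight `exp (μ F)`. -/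
def e (p : Spc) : ℝ := exp (P.μ * P.F p)

/-- The zeroth-order weight `(l e)² n` produced by the conjugation with the Carleman weight. -/
def B (l : ℝ) (p : Spc) : ℝ := l ^ 2 * (P.e p ^ 2 * P.n p)

/-- The time derivative of `y`. -/
def yDot (p : Spc) : ℝ := -(1 + P.γ) * P.y p / P.T p

/-- The time derivative of `f`. -/
def fDot (p : Spc) : ℝ := 1 / P.T p + 2 * P.a p / P.T p ^ 2 + P.yDot p

/-- The d'Alembertian of `F`. -/
def boxF (p : Spc) : ℝ := 3 / P.T p - P.fDot p

/-- The derivative of `n` along the Minkowski gradient of `F`. -/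
def gradN (p : Spc) : ℝ :=
  2 * rr p ^ 2 * (1 + P.f p) / P.T p ^ 3 + 2 * P.f p * rr p ^ 2 / P.T p ^ 3
    + 2 * P.f p ^ 2 * P.fDot p

/-- The amount by which `∂_t h` falls short of `f / T²`. -/
def hDefect (p : Spc) : ℝ := 2 * (P.a p - P.c) / P.T p ^ 3 - (1 + P.γ) * P.y p / P.T p ^ 2

/-- The partial derivatives of `F`. -/
def dF (α : Fin 4) (p : Spc) : ℝ := Fin.cases (P.f p) (fun i => P.A i p) α

/-- The partial derivatives of `A i`. -/
def dA (i : Fin 3) (α : Fin 4) (p : Spc) : ℝ :=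
  Fin.cases (-p.2 i / P.T p ^ 2) (fun j => if i = j then 1 / P.T p else 0) α

/-- The partial derivatives of `f`. -/
def df (α : Fin 4) (p : Spc) : ℝ := Fin.cases (P.fDot p) (fun i => -p.2 i / P.T p ^ 2) α

/-- The partial derivatives of `n`. -/
def dn (α : Fin 4) (p : Spc) : ℝ :=
  Fin.cases (-2 * rr p ^ 2 / P.T p ^ 3 - 2 * P.f p * P.fDot p)
    (fun i => 2 * p.2 i / P.T p ^ 2 * (1 + P.f p)) α

/-- The partial derivatives of `h`. -/
def dh (α : Fin 4) (p : Spc) : ℝ :=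
  Fin.cases (P.f p / P.T p ^ 2 - P.hDefect p) (fun i => p.2 i / P.T p ^ 3) α

lemma rr_sq_eq (hT : 0 < P.T p) : rr p ^ 2 = P.T p ^ 2 + 2 * P.T p * P.a p + P.d := by
  rw [a]
  field_simp
  ring

lemma hasPD_T (α : Fin 4) : HasPD α P.T p (eVec α).1 :=
  ((hasPD_fst α p).add (HasPD.const P.σ)).congr_deriv (add_zero _)

lemma hasPD_inv_T (α : Fin 4) (hT : 0 < P.T p) :
    HasPD α (fun p => (P.T p)⁻¹) p (-(eVec α).1 / P.T p ^ 2) :=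
  (P.hasPD_T α).inv hT.ne'

lemma hasPD_T_rpow (α : Fin 4) (s : ℝ) (hT : 0 < P.T p) :
    HasPD α (fun p => P.T p ^ s) p (s * P.T p ^ (s - 1) * (eVec α).1) :=
  (P.hasPD_T α).comp (Real.hasDerivAt_rpow_const (Or.inl hT.ne'))

lemma hasPD_a (α : Fin 4) (hT : 0 < P.T p) :
    HasPD α P.a p (Fin.cases (P.f p - P.y p) (fun i => P.A i p) α) := by
  refine ((((hasPD_rr_sq α p).sub (P.hasPD_T α).sq).sub (HasPD.const P.d)).mul
    (((HasPD.const 2).mul (P.hasPD_T α)).inv (by positivity))).congr_deriv ?_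
  refine Fin.cases ?_ (fun i => ?_) α
  · simp only [Fin.cases_zero, eVec_zero_snd, eVec_zero_fst, f, a, mul_zero,
      Finset.sum_const_zero]
    field_simp
    ring
  · simp only [Fin.cases_succ, eVec_succ_fst, eVec_succ_snd, A, mul_ite, mul_one, mul_zero,
      Finset.sum_ite_eq', Finset.mem_univ, if_true]
    field_simp
    ring

lemma hasPD_y (α : Fin 4) (hT : 0 < P.T p) : HasPD α P.y p (P.yDot p * (eVec α).1) := by
  refine ((HasPD.const P.ε).mul (P.hasPD_T_rpow α (-1 - P.γ) hT)).congr_deriv ?_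
  rw [Real.rpow_sub_one hT.ne', yDot, y]
  field_simp
  ring

lemma hasPD_F (α : Fin 4) (hγ : P.γ ≠ 0) (hT : 0 < P.T p) : HasPD α P.F p (P.dF α p) := by
  refine ((P.hasPD_a α hT).sub
    ((HasPD.const (P.ε / P.γ)).mul (P.hasPD_T_rpow α (-P.γ) hT))).congr_deriv ?_
  refine Fin.cases ?_ (fun i => ?_) α
  · have hy : P.y p = P.ε * P.T p ^ (-P.γ - 1) := by
      rw [y]
      ring_nf
    simp only [Fin.cases_zero, eVec_zero_fst, dF, hy]
    field_simp
    ring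
  · simp only [Fin.cases_succ, eVec_succ_fst, dF]
    ring

lemma hasPD_A (i : Fin 3) (α : Fin 4) (hT : 0 < P.T p) : HasPD α (P.A i) p (P.dA i α p) := by
  refine ((hasPD_snd_apply α i p).mul (P.hasPD_inv_T α hT)).congr_deriv ?_
  refine Fin.cases ?_ (fun j => ?_) α
  · simp only [eVec_zero_snd, eVec_zero_fst, dA, Fin.cases_zero]
    ring
  · simp only [eVec_succ_fst, eVec_succ_snd, dA, Fin.cases_succ]
    split_ifs <;> ring

lemma hasPD_f (α : Fin 4) (hT : 0 < P.T p) : HasPD α P.f p (P.df α p) := by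
  refine (((HasPD.const (-1)).sub ((P.hasPD_a α hT).mul (P.hasPD_inv_T α hT))).add
    (P.hasPD_y α hT)).congr_deriv ?_
  refine Fin.cases ?_ (fun j => ?_) α
  · simp only [eVec_zero_fst, df, Fin.cases_zero, fDot, f]
    field_simp
    ring
  · simp only [eVec_succ_fst, df, Fin.cases_succ, A]
    field_simp
    ring

lemma hasPD_n (α : Fin 4) (hT : 0 < P.T p) : HasPD α P.n p (P.dn α p) := by
  refine (((hasPD_rr_sq α p).mul (P.hasPD_inv_T α hT).sq).sub
    (P.hasPD_f α hT).sq).congr_deriv ?_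
  refine Fin.cases ?_ (fun j => ?_) α
  · simp only [eVec_zero_fst, df, dn, Fin.cases_zero, eVec_zero_snd, mul_zero,
      Finset.sum_const_zero]
    field_simp
    ring
  · simp only [eVec_succ_fst, df, dn, Fin.cases_succ, eVec_succ_snd, mul_ite, mul_one, mul_zero,
      Finset.sum_ite_eq', Finset.mem_univ, if_true]
    field_simp
    ring

lemma hasPD_h (α : Fin 4) (hT : 0 < P.T p) : HasPD α P.h p (P.dh α p) := by
  refine ((((P.hasPD_a α hT).sub (HasPD.const P.c)).mul (P.hasPD_inv_T α hT).sq).sub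
    ((P.hasPD_y α hT).mul (P.hasPD_inv_T α hT))).congr_deriv ?_
  refine Fin.cases ?_ (fun j => ?_) α
  · simp only [eVec_zero_fst, Fin.cases_zero, dh, hDefect, yDot]
    field_simp
    ring
  · simp only [eVec_succ_fst, Fin.cases_succ, dh, A]
    field_simp
    ring

lemma hasPD_e (α : Fin 4) (hγ : P.γ ≠ 0) (hT : 0 < P.T p) :
    HasPD α P.e p (P.μ * P.e p * P.dF α p) := by
  refine (((HasPD.const P.μ).mul (P.hasPD_F α hγ hT)).comp
    (Real.hasDerivAt_exp _)).congr_deriv ?_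
  rw [e]
  ring

lemma hasPD_B (l : ℝ) (α : Fin 4) (hγ : P.γ ≠ 0) (hT : 0 < P.T p) :
    HasPD α (P.B l) p (l ^ 2 * P.e p ^ 2 * (2 * P.μ * P.dF α p * P.n p + P.dn α p)) :=
  ((HasPD.const (l ^ 2)).mul ((P.hasPD_e α hγ hT).sq.mul (P.hasPD_n α hT))).congr_deriv (by ring)

end CarlemanParams

end CarlemanFunction

section MultiplierIdentity

namespace CarlemanParams

variable (P : CarlemanParams) (l : ℝ) (w : Spc → ℝ) (p : Spc)

/-- The derivative of `w` along the Minkowski gradient of the Carleman function. -/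
def X : ℝ := gradDeriv P.A P.f w p

/-- The multiplier `-X w + h w` of the energy identity. -/
def multiplier : ℝ := -P.X w p + P.h p * w p

/-- The leading part of the wave operator conjugated with the weight `T exp (l e^{μF} / μ)`. -/
def conjBox : ℝ :=
  box w p + 2 / P.T p * pd 0 w p - 2 * l * P.e p * P.X w p + l ^ 2 * P.e p ^ 2 * P.n p * w p

/-- The energy current attached to the Carleman function. -/
def current (l : ℝ) (w : Spc → ℝ) : Fin 4 → Spc → ℝ := energyCurrent P.A P.f P.h (P.B l) w

/-- The bulk term by which the divergence of the current differs from the product of the conjugated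
operator and the multiplier. -/
def bulk : ℝ :=
  (1/2) * (1 - P.γ) * (P.y p / P.T p) * ((∑ i : Fin 3, pd i.succ w p ^ 2) + pd 0 w p ^ 2)
  + P.c / P.T p ^ 2 * ((∑ i : Fin 3, pd i.succ w p ^ 2) - pd 0 w p ^ 2)
  - w p * (P.X w p / P.T p ^ 2 + P.hDefect p * pd 0 w p) + 2 / P.T p * pd 0 w p * P.h p * w p
  + 2 * l * P.e p * P.X w p ^ 2 - 2 * l * P.e p * P.h p * w p * P.X w p
  + (1/2) * l ^ 2 * P.e p ^ 2 * (P.n p * P.boxF p + P.gradN p + 2 * P.μ * P.n p ^ 2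
    + 2 * P.n p * P.h p) * w p ^ 2

variable {l w p}

lemma sum_coord_mul_pd (hT : 0 < P.T p) :
    ∑ i : Fin 3, p.2 i * pd i.succ w p = P.T p * (P.X w p + P.f p * pd 0 w p) := by
  simp only [X, gradDeriv, A, Fin.sum_univ_three]
  field_simp
  ring

lemma hessian_F_apply (hT : 0 < P.T p) :
    (∑ i : Fin 3, ∑ j : Fin 3, P.dA i j.succ p * pd i.succ w p * pd j.succ w p)
      - 2 * (∑ i : Fin 3, P.df i.succ p * pd i.succ w p) * pd 0 w p + P.df 0 p * pd 0 w p ^ 2 =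
    (∑ i : Fin 3, pd i.succ w p ^ 2) / P.T p
      + 2 / P.T p * (P.X w p + P.f p * pd 0 w p) * pd 0 w p + P.fDot p * pd 0 w p ^ 2 := by
  have cross : ∑ i : Fin 3, P.df i.succ p * pd i.succ w p
      = -(P.X w p + P.f p * pd 0 w p) / P.T p := by
    have : ∑ i : Fin 3, P.df i.succ p * pd i.succ w p
        = -(∑ i : Fin 3, p.2 i * pd i.succ w p) / P.T p ^ 2 := by
      simp only [df, Fin.cases_succ, Fin.sum_univ_three]
      ring
    rw [this, P.sum_coord_mul_pd hT]
    field_simp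
  have diagonal : ∑ i : Fin 3, ∑ j : Fin 3, P.dA i j.succ p * pd i.succ w p * pd j.succ w p
      = (∑ i : Fin 3, pd i.succ w p ^ 2) / P.T p := by
    simp only [dA, Fin.cases_succ, ite_mul, zero_mul, Finset.sum_ite_eq, Finset.mem_univ, if_true,
      Finset.sum_div]
    exact Finset.sum_congr rfl fun i _ => by ring
  rw [cross, diagonal, df, Fin.cases_zero]
  ring

lemma boxF_eq : (∑ i : Fin 3, P.dA i i.succ p) - P.df 0 p = P.boxF p := by
  simp only [dA, df, boxF, Fin.cases_succ, Fin.cases_zero, if_true, Fin.sum_univ_three]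
  ring

lemma gradDeriv_h_eq (hT : 0 < P.T p) :
    (∑ i : Fin 3, P.dh i.succ p * pd i.succ w p) - P.dh 0 p * pd 0 w p
      = P.X w p / P.T p ^ 2 + P.hDefect p * pd 0 w p := by
  have radial : ∑ i : Fin 3, P.dh i.succ p * pd i.succ w p
      = (∑ i : Fin 3, p.2 i * pd i.succ w p) / P.T p ^ 3 := by
    simp only [dh, Fin.cases_succ, Fin.sum_univ_three]
    ring
  rw [radial, P.sum_coord_mul_pd hT, dh, Fin.cases_zero]
  field_simp
  ring

lemma gradDeriv_B_eq :
    (∑ i : Fin 3, l ^ 2 * P.e p ^ 2 * (2 * P.μ * P.dF i.succ p * P.n p + P.dn i.succ p) * P.A i p)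
      - l ^ 2 * P.e p ^ 2 * (2 * P.μ * P.dF 0 p * P.n p + P.dn 0 p) * P.f p
      = l ^ 2 * P.e p ^ 2 * (2 * P.μ * P.n p ^ 2 + P.gradN p) := by
  have hr : rr p ^ 2 = p.2 0 ^ 2 + p.2 1 ^ 2 + p.2 2 ^ 2 := by rw [rr_sq, Fin.sum_univ_three]
  have hn : P.n p = rr p ^ 2 * (P.T p)⁻¹ ^ 2 - P.f p ^ 2 := rfl
  simp only [dF, dn, gradN, A, Fin.cases_zero, Fin.cases_succ, Fin.sum_univ_three]
  linear_combination (exp := 1) -l ^ 2 * P.e p ^ 2 * 2 * P.μ * P.n p * hn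
    - l ^ 2 * P.e p ^ 2 * (2 * P.μ * P.n p / P.T p ^ 2 + 2 * (1 + P.f p) / P.T p ^ 3) * hr

theorem divergence_current (hγ : P.γ ≠ 0) (hT : 0 < P.T p) (hw : ContDiffAt ℝ 2 w p) :
    ∑ α, pd α (P.current l w α) p = P.conjBox l w p * P.multiplier w p - P.bulk l w p := by
  rw [current, divergence_energyCurrent hw (fun i α => P.hasPD_A i α hT)
    (fun α => P.hasPD_f α hT) (fun α => P.hasPD_h α hT) (fun α => P.hasPD_B l α hγ hT)
    (fun i j => by simp only [dA, Fin.cases_succ, eq_comm]) (fun i => rfl),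
    P.hessian_F_apply hT, P.boxF_eq, P.gradDeriv_h_eq hT, P.gradDeriv_B_eq, ← X]
  have hf : P.f p = -1 - P.a p * (P.T p)⁻¹ + P.y p := rfl
  have hh : P.h p = (P.a p - P.c) * (P.T p)⁻¹ ^ 2 - P.y p * (P.T p)⁻¹ := rfl
  have hfDot : P.fDot p
      = 1 / P.T p + 2 * P.a p / P.T p ^ 2 - (1 + P.γ) * P.y p / P.T p := by
    rw [fDot, yDot]
    ring
  have hboxF : P.boxF p = 3 / P.T p - P.fDot p := rfl
  simp only [bulk, multiplier, conjBox, B, lagrangian]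
  set S := ∑ i : Fin 3, pd i.succ w p ^ 2
  set q := pd 0 w p
  linear_combination (exp := 1) (S - q ^ 2) * hh - (1/2) * (S + q ^ 2) * hfDot
    - 2 * q ^ 2 / P.T p * hf + (1/2) * (S - q ^ 2) * hboxF

end CarlemanParams

end MultiplierIdentity

section Conjugation

namespace CarlemanParams

variable (P : CarlemanParams) {p : Spc} {m m' m'' : ℝ → ℝ} {φ : Spc → ℝ}

/-- The function `T m(F) φ`: a solution localized by a function of the Carleman function. -/
def weighted (m : ℝ → ℝ) (φ : Spc → ℝ) (p : Spc) : ℝ := P.T p * (m (P.F p) * φ p)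

lemma eventually_T_pos (hT : 0 < P.T p) : ∀ᶠ q in 𝓝 p, 0 < P.T q := by
  have hcont : Continuous P.T := by
    unfold T
    fun_prop
  exact hcont.continuousAt.eventually (lt_mem_nhds hT)

lemma hasPD_weighted (hγ : P.γ ≠ 0) (hT : 0 < P.T p) (hm : ∀ s, HasDerivAt m (m' s) s)
    (hφ : DifferentiableAt ℝ φ p) (α : Fin 4) :
    HasPD α (P.weighted m φ) p (P.T p * (m (P.F p) * pd α φ p) + (eVec α).1 * (m (P.F p) * φ p)
      + P.T p * (m' (P.F p) * (P.dF α p * φ p))) :=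
  ((P.hasPD_T α).mul (((P.hasPD_F α hγ hT).comp (hm _)).mul
    (HasPD.of_differentiableAt hφ α))).congr_deriv (by ring)

lemma pd_pd_weighted (hγ : P.γ ≠ 0) (hT : 0 < P.T p) (hm : ∀ s, HasDerivAt m (m' s) s)
    (hm' : ∀ s, HasDerivAt m' (m'' s) s) (hφ : ContDiffAt ℝ 2 φ p) (α : Fin 4) {ddF : ℝ}
    (hddF : HasPD α (P.dF α) p ddF) :
    pd α (pd α (P.weighted m φ)) p = P.T p * (m (P.F p) * pd α (pd α φ) p)
      + 2 * (eVec α).1 * (m (P.F p) * pd α φ p) + 2 * P.T p * (m' (P.F p) * (P.dF α p * pd α φ p))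
      + 2 * (eVec α).1 * (m' (P.F p) * (P.dF α p * φ p))
      + P.T p * (m'' (P.F p) * (P.dF α p ^ 2 * φ p)) + P.T p * (m' (P.F p) * (ddF * φ p)) := by
  have heq : pd α (P.weighted m φ) =ᶠ[𝓝 p] fun p => P.T p * (m (P.F p) * pd α φ p)
      + (eVec α).1 * (m (P.F p) * φ p) + P.T p * (m' (P.F p) * (P.dF α p * φ p)) := by
    filter_upwards [P.eventually_T_pos hT, hφ.eventually (by simp)] with q hTq hφq
    exact (P.hasPD_weighted hγ hTq hm (hφq.differentiableAt two_ne_zero) α).2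
  have hF := P.hasPD_F α hγ hT
  have hφ' := HasPD.of_differentiableAt (hφ.differentiableAt two_ne_zero) α
  have hderiv := (((P.hasPD_T α).mul ((hF.comp (hm _)).mul (hasPD_pd hφ α α))).add
    ((HasPD.const (eVec α).1).mul ((hF.comp (hm _)).mul hφ'))).add
    ((P.hasPD_T α).mul ((hF.comp (hm' _)).mul (hddF.mul hφ')))
  rw [pd_congr_of_eventuallyEq heq, hderiv.2]
  ring

lemma box_weighted (hγ : P.γ ≠ 0) (hT : 0 < P.T p) (hm : ∀ s, HasDerivAt m (m' s) s)
    (hm' : ∀ s, HasDerivAt m' (m'' s) s) (hφ : ContDiffAt ℝ 2 φ p) :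
    box (P.weighted m φ) p + 2 / P.T p * pd 0 (P.weighted m φ) p =
      m (P.F p) * (P.T p * box φ p + 2 * φ p / P.T p) + 2 * P.T p * m' (P.F p) * P.X φ p
      + P.T p * φ p * (m'' (P.F p) * P.n p + m' (P.F p) * P.boxF p) := by
  have hddF : ∀ i : Fin 3, HasPD i.succ (P.dF i.succ) p (1 / P.T p) := fun i =>
    (P.hasPD_A i i.succ hT).congr_deriv (by simp only [dA, Fin.cases_succ, if_true])
  have hr : rr p ^ 2 = p.2 0 ^ 2 + p.2 1 ^ 2 + p.2 2 ^ 2 := by rw [rr_sq, Fin.sum_univ_three]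
  simp only [box, dt, dxi]
  rw [P.pd_pd_weighted hγ hT hm hm' hφ 0 (P.hasPD_f 0 hT),
    (P.hasPD_weighted hγ hT hm (hφ.differentiableAt two_ne_zero) 0).2,
    Finset.sum_congr rfl fun i _ => P.pd_pd_weighted hγ hT hm hm' hφ i.succ (hddF i)]
  simp only [Fin.sum_univ_three, eVec_zero_fst, eVec_succ_fst, X, gradDeriv, dF, df,
    Fin.cases_zero, Fin.cases_succ, boxF, n, A, hr]
  field_simp
  ring

lemma X_weighted (hγ : P.γ ≠ 0) (hT : 0 < P.T p) (hm : ∀ s, HasDerivAt m (m' s) s)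
    (hφ : DifferentiableAt ℝ φ p) :
    P.X (P.weighted m φ) p = P.T p * m (P.F p) * P.X φ p
      + φ p * (P.T p * m' (P.F p) * P.n p - m (P.F p) * P.f p) := by
  have hr : rr p ^ 2 = p.2 0 ^ 2 + p.2 1 ^ 2 + p.2 2 ^ 2 := by rw [rr_sq, Fin.sum_univ_three]
  rw [X, gradDeriv, (P.hasPD_weighted hγ hT hm hφ 0).2,
    Finset.sum_congr rfl fun i _ => by rw [(P.hasPD_weighted hγ hT hm hφ i.succ).2]]
  simp only [X, gradDeriv, Fin.sum_univ_three, eVec_zero_fst, eVec_succ_fst, dF, Fin.cases_zero,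
    Fin.cases_succ, n, A, hr]
  ring

/-- The smooth cutoff, equal to `0` below the level `k₁` and to `1` above the level `k₂`. -/
def cutoff (s : ℝ) : ℝ := Real.smoothTransition ((s - P.k₁) / (P.k₂ - P.k₁))

/-- The Carleman weight `exp (l e^{μs} / μ)` as a function of the level `s`. -/
def G (l s : ℝ) : ℝ := exp (l * (exp (P.μ * s) / P.μ))

/-- The Carleman weight localized to the levels above `k₁`. -/
def cutoffWeight (l s : ℝ) : ℝ := P.G l s * P.cutoff s

/-- The derivative of `cutoffWeight`. -/
def cutoffWeightDeriv (l s : ℝ) : ℝ :=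
  P.G l s * (l * exp (P.μ * s) * P.cutoff s + deriv P.cutoff s)

/-- The second derivative of `cutoffWeight`. -/
def cutoffWeightDeriv₂ (l s : ℝ) : ℝ :=
  P.G l s * (l ^ 2 * exp (P.μ * s) ^ 2 * P.cutoff s + l * P.μ * exp (P.μ * s) * P.cutoff s
    + 2 * l * exp (P.μ * s) * deriv P.cutoff s + deriv (deriv P.cutoff) s)

/-- The localized and conjugated unknown. -/
def conjugated (l : ℝ) (φ : Spc → ℝ) : Spc → ℝ := P.weighted (P.cutoffWeight l) φ

/-- The inhomogeneity produced by the conjugation: the weighted wave operator together with the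
terms in which the cutoff is differentiated. -/
def source (l : ℝ) (φ : Spc → ℝ) (p : Spc) : ℝ :=
  P.G l (P.F p) * (P.cutoff (P.F p) * (P.T p * box φ p + 2 * φ p / P.T p)
    + 2 * P.T p * deriv P.cutoff (P.F p) * P.X φ p
    + P.T p * φ p * (deriv (deriv P.cutoff) (P.F p) * P.n p + deriv P.cutoff (P.F p) * P.boxF p))

lemma contDiff_cutoff : ContDiff ℝ 2 P.cutoff := by
  unfold cutoff
  exact Real.smoothTransition.contDiff.comp (by fun_prop)

lemma contDiff_deriv_cutoff : ContDiff ℝ 1 (deriv P.cutoff) := by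
  have h := P.contDiff_cutoff
  rw [← one_add_one_eq_two, contDiff_succ_iff_deriv] at h
  exact h.2.2

lemma hasDerivAt_cutoff (s : ℝ) : HasDerivAt P.cutoff (deriv P.cutoff s) s :=
  (P.contDiff_cutoff.differentiable two_ne_zero s).hasDerivAt

lemma hasDerivAt_deriv_cutoff (s : ℝ) :
    HasDerivAt (deriv P.cutoff) (deriv (deriv P.cutoff) s) s :=
  (P.contDiff_deriv_cutoff.differentiable one_ne_zero s).hasDerivAt

lemma hasDerivAt_exp_mul (s : ℝ) : HasDerivAt (fun s => exp (P.μ * s)) (exp (P.μ * s) * P.μ) s :=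
  (((hasDerivAt_id s).const_mul P.μ).exp).congr_deriv (by simp only [mul_one, id])

lemma hasDerivAt_G (hμ : P.μ ≠ 0) (l s : ℝ) :
    HasDerivAt (P.G l) (P.G l s * (l * exp (P.μ * s))) s := by
  refine (((P.hasDerivAt_exp_mul s).div_const P.μ).const_mul l).exp.congr_deriv ?_
  rw [G]
  field_simp

lemma hasDerivAt_cutoffWeight (hμ : P.μ ≠ 0) (l s : ℝ) :
    HasDerivAt (P.cutoffWeight l) (P.cutoffWeightDeriv l s) s := by
  refine ((P.hasDerivAt_G hμ l s).mul (P.hasDerivAt_cutoff s)).congr_deriv ?_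
  rw [cutoffWeightDeriv]
  ring

lemma hasDerivAt_cutoffWeightDeriv (hμ : P.μ ≠ 0) (l s : ℝ) :
    HasDerivAt (P.cutoffWeightDeriv l) (P.cutoffWeightDeriv₂ l s) s := by
  refine ((P.hasDerivAt_G hμ l s).mul ((((P.hasDerivAt_exp_mul s).const_mul l).mul
    (P.hasDerivAt_cutoff s)).add (P.hasDerivAt_deriv_cutoff s))).congr_deriv ?_
  simp only [Pi.mul_apply, Pi.add_apply, cutoffWeightDeriv₂]
  ring

lemma conjBox_conjugated (l : ℝ) (hγ : P.γ ≠ 0) (hμ : P.μ ≠ 0) (hT : 0 < P.T p)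
    (hφ : ContDiffAt ℝ 2 φ p) :
    P.conjBox l (P.conjugated l φ) p = P.source l φ p
      + l * P.e p * (P.boxF p + 2 * P.f p / P.T p + P.μ * P.n p) * P.conjugated l φ p := by
  rw [conjBox, conjugated,
    P.box_weighted hγ hT (P.hasDerivAt_cutoffWeight hμ l) (P.hasDerivAt_cutoffWeightDeriv hμ l) hφ,
    P.X_weighted hγ hT (P.hasDerivAt_cutoffWeight hμ l) (hφ.differentiableAt two_ne_zero)]
  simp only [source, weighted, cutoffWeight, cutoffWeightDeriv, cutoffWeightDeriv₂, e]
  field_simp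
  ring

end CarlemanParams

end Conjugation

section Regularity

lemma contDiffAt_rr_sq {p : Spc} : ContDiffAt ℝ 2 (fun p => rr p ^ 2) p := by
  simp only [rr_sq]
  fun_prop

namespace CarlemanParams

variable (P : CarlemanParams) {p : Spc}

lemma contDiffAt_T : ContDiffAt ℝ 2 P.T p := by
  unfold T
  fun_prop

lemma contDiffAt_inv_T (hT : 0 < P.T p) : ContDiffAt ℝ 2 (fun p => (P.T p)⁻¹) p :=
  P.contDiffAt_T.inv hT.ne'

lemma contDiffAt_a (hT : 0 < P.T p) : ContDiffAt ℝ 2 P.a p :=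
  ((contDiffAt_rr_sq.sub (P.contDiffAt_T.pow 2)).sub contDiffAt_const).mul
    ((contDiffAt_const.mul P.contDiffAt_T).inv (by positivity))

lemma contDiffAt_y (hT : 0 < P.T p) : ContDiffAt ℝ 2 P.y p :=
  contDiffAt_const.mul (P.contDiffAt_T.rpow_const_of_ne hT.ne')

lemma contDiffAt_F (hT : 0 < P.T p) : ContDiffAt ℝ 2 P.F p :=
  (P.contDiffAt_a hT).sub (contDiffAt_const.mul (P.contDiffAt_T.rpow_const_of_ne hT.ne'))

lemma contDiffAt_A (i : Fin 3) (hT : 0 < P.T p) : ContDiffAt ℝ 2 (P.A i) p :=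
  ContDiffAt.mul (by fun_prop) (P.contDiffAt_inv_T hT)

lemma contDiffAt_f (hT : 0 < P.T p) : ContDiffAt ℝ 2 P.f p :=
  (contDiffAt_const.sub ((P.contDiffAt_a hT).mul (P.contDiffAt_inv_T hT))).add (P.contDiffAt_y hT)

lemma contDiffAt_n (hT : 0 < P.T p) : ContDiffAt ℝ 2 P.n p :=
  (contDiffAt_rr_sq.mul ((P.contDiffAt_inv_T hT).pow 2)).sub ((P.contDiffAt_f hT).pow 2)

lemma contDiffAt_h (hT : 0 < P.T p) : ContDiffAt ℝ 2 P.h p :=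
  (((P.contDiffAt_a hT).sub contDiffAt_const).mul ((P.contDiffAt_inv_T hT).pow 2)).sub
    ((P.contDiffAt_y hT).mul (P.contDiffAt_inv_T hT))

lemma contDiffAt_e (hT : 0 < P.T p) : ContDiffAt ℝ 2 P.e p :=
  (contDiffAt_const.mul (P.contDiffAt_F hT)).exp

lemma contDiffAt_B (l : ℝ) (hT : 0 < P.T p) : ContDiffAt ℝ 2 (P.B l) p :=
  contDiffAt_const.mul (((P.contDiffAt_e hT).pow 2).mul (P.contDiffAt_n hT))

lemma contDiff_cutoffWeight (l : ℝ) : ContDiff ℝ 2 (P.cutoffWeight l) := by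
  have h := P.contDiff_cutoff
  unfold cutoffWeight G
  fun_prop

lemma contDiffAt_conjugated (l : ℝ) {φ : Spc → ℝ} (hT : 0 < P.T p) (hφ : ContDiffAt ℝ 2 φ p) :
    ContDiffAt ℝ 2 (P.conjugated l φ) p :=
  P.contDiffAt_T.mul
    (((P.contDiff_cutoffWeight l).contDiffAt.comp p (P.contDiffAt_F hT)).mul hφ)

lemma contDiffAt_current (l : ℝ) {w : Spc → ℝ} (hT : 0 < P.T p) (hw : ContDiffAt ℝ 2 w p)
    (α : Fin 4) : ContDiffAt ℝ 1 (P.current l w α) p := by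
  have hdw : ∀ α, ContDiffAt ℝ 1 (pd α w) p := contDiffAt_pd hw
  have hw' : ContDiffAt ℝ 1 w p := hw.of_le one_le_two
  have hf : ContDiffAt ℝ 1 P.f p := (P.contDiffAt_f hT).of_le one_le_two
  have hh : ContDiffAt ℝ 1 P.h p := (P.contDiffAt_h hT).of_le one_le_two
  have hB : ContDiffAt ℝ 1 (P.B l) p := (P.contDiffAt_B l hT).of_le one_le_two
  have hA : ∀ i, ContDiffAt ℝ 1 (P.A i) p := fun i => (P.contDiffAt_A i hT).of_le one_le_two
  have hX : ContDiffAt ℝ 1 (gradDeriv P.A P.f w) p :=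
    (ContDiffAt.sum fun i _ => (hA i).mul (hdw i.succ)).sub (hf.mul (hdw 0))
  have hL : ContDiffAt ℝ 1 (lagrangian w) p :=
    (ContDiffAt.sum fun i _ => (hdw i.succ).pow 2).sub ((hdw 0).pow 2)
  refine Fin.cases ?_ (fun i => ?_) α
  · exact ((((hdw 0).mul hX).sub (contDiffAt_const.mul (hf.mul hL))).sub
      (hh.mul (hw'.mul (hdw 0)))).add (contDiffAt_const.mul (hB.mul (hf.mul (hw'.pow 2))))
  · exact (((((hdw i.succ).mul hX).neg).add (contDiffAt_const.mul ((hA i).mul hL))).add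
      (hh.mul (hw'.mul (hdw i.succ)))).sub
        (contDiffAt_const.mul (hB.mul ((hA i).mul (hw'.pow 2))))

end CarlemanParams

end Regularity

section Geometry

open Asymptotics

namespace CarlemanParams

/-- The constraints under which the Carleman weight is adapted to the domain `DD R₁ R₂`: the
hyperboloid constant is fixed by `R₁`, `R₂` and the time shift `σ`, and the correction rate `y` is
small compared with `1 / T`. -/
structure Admissible (P : CarlemanParams) (R₁ R₂ : ℝ) : Prop where
  σ_pos : 0 < P.σ
  σ_le_one : P.σ ≤ 1
  d_eq : P.d = R₁ ^ 2 - P.σ ^ 2 - 2 * P.σ * R₂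
  neg_lt : -R₁ < R₂
  σ_lt : P.σ < R₁ - R₂
  γ_pos : 0 < P.γ
  γ_le_half : P.γ ≤ 1 / 2
  ε_pos : 0 < P.ε
  ε_le : P.ε ≤ P.σ ^ (1 + P.γ)
  ε_small : 2 * R₁ * (P.ε * P.σ ^ (-P.γ)) ≤
    min (2 * P.σ * (R₁ - P.σ - R₂)) (R₁ ^ 2 - (P.σ + R₂) ^ 2)

/-- The set in which the Carleman estimate takes place; it contains the part of `DD R₁ R₂` on which
`r - t ≤ R₁` and `F` is bounded below. -/
def region (P : CarlemanParams) (R₁ R₂ : ℝ) : Set Spc :=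
  {p | 0 ≤ p.1 ∧ P.a p ∈ Icc R₂ (R₁ - P.σ) ∧ |rr p - P.T p| ≤ R₁}

variable {P : CarlemanParams} {R₁ R₂ : ℝ} {p : Spc}

lemma σ_le_T (hp : p ∈ P.region R₁ R₂) : P.σ ≤ P.T p := le_add_of_nonneg_left hp.1

lemma gap_pos {σ : ℝ} (hσ : 0 < σ) (hR₂ : -R₁ < R₂) (hσR : σ < R₁ - R₂) :
    0 < min (2 * σ * (R₁ - σ - R₂)) (R₁ ^ 2 - (σ + R₂) ^ 2) := by
  have h_gap : 0 < R₁ - σ - R₂ := by linarith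
  refine lt_min (by positivity) ?_
  have : 0 < (R₁ - (σ + R₂)) * (R₁ + (σ + R₂)) := mul_pos (by linarith) (by linarith)
  linarith

namespace Admissible

variable (H : P.Admissible R₁ R₂)
include H

lemma R₁_pos : 0 < R₁ := by linarith [H.neg_lt, H.σ_lt, H.σ_pos]

lemma T_pos (hp : p ∈ P.region R₁ R₂) : 0 < P.T p := H.σ_pos.trans_le (σ_le_T hp)

lemma y_pos (hp : p ∈ P.region R₁ R₂) : 0 < P.y p :=
  mul_pos H.ε_pos (rpow_pos_of_pos (H.T_pos hp) _)

lemma T_rpow_le {s : ℝ} (hs : s ≤ 0) (hp : p ∈ P.region R₁ R₂) : P.T p ^ s ≤ P.σ ^ s :=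
  rpow_le_rpow_of_nonpos H.σ_pos (σ_le_T hp) hs

lemma y_le_one (hp : p ∈ P.region R₁ R₂) : P.y p ≤ 1 :=
  calc P.y p ≤ P.σ ^ (1 + P.γ) * P.σ ^ (-1 - P.γ) :=
        mul_le_mul H.ε_le (H.T_rpow_le (by linarith [H.γ_pos]) hp)
          (rpow_pos_of_pos (H.T_pos hp) _).le (rpow_pos_of_pos H.σ_pos _).le
    _ = 1 := by rw [← rpow_add H.σ_pos, add_add_sub_cancel, add_neg_cancel, rpow_zero]

lemma y_le_mul_inv_T (hp : p ∈ P.region R₁ R₂) :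
    P.y p ≤ P.ε * P.σ ^ (-P.γ) * (P.T p)⁻¹ := by
  have hT := H.T_pos hp
  rw [y, show -1 - P.γ = -P.γ + -1 by ring, rpow_add hT, rpow_neg_one, ← mul_assoc]
  exact mul_le_mul_of_nonneg_right
    (mul_le_mul_of_nonneg_left (H.T_rpow_le (neg_nonpos.2 H.γ_pos.le) hp) H.ε_pos.le)
    (inv_pos.2 hT).le

lemma abs_a_le (hp : p ∈ P.region R₁ R₂) : |P.a p| ≤ R₁ :=
  abs_le.2 ⟨H.neg_lt.le.trans hp.2.1.1, by linarith [hp.2.1.2, H.σ_pos]⟩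

lemma gap_le (hp : p ∈ P.region R₁ R₂) :
    min (2 * P.σ * (R₁ - P.σ - R₂)) (R₁ ^ 2 - (P.σ + R₂) ^ 2) ≤ P.d - P.a p ^ 2 := by
  obtain ⟨-, ⟨ha₁, ha₂⟩, -⟩ := hp
  have _ := H.σ_pos
  rw [H.d_eq]
  rcases le_total (R₁ - P.σ) (-R₂) with hR | hR
  · refine (min_le_right _ _).trans ?_
    nlinarith [mul_nonneg (sub_nonneg.2 ha₁) (by linarith : 0 ≤ -R₂ - P.a p)]
  · refine (min_le_left _ _).trans ?_
    nlinarith [mul_nonneg (sub_nonneg.2 ha₂) (by linarith : 0 ≤ R₁ - P.σ + P.a p)]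

lemma rr_mul_inv_T_sq (hp : p ∈ P.region R₁ R₂) :
    (rr p * (P.T p)⁻¹) ^ 2 = 1 + 2 * P.a p * (P.T p)⁻¹ + P.d * (P.T p)⁻¹ ^ 2 := by
  have hT := H.T_pos hp
  rw [mul_pow, P.rr_sq_eq hT]
  field_simp

lemma n_eq (hp : p ∈ P.region R₁ R₂) :
    P.n p = (P.d - P.a p ^ 2) * (P.T p)⁻¹ ^ 2 + 2 * (1 + P.a p * (P.T p)⁻¹) * P.y p
      - P.y p ^ 2 := by
  have hr := H.rr_mul_inv_T_sq hp
  rw [n, f]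
  linear_combination hr

lemma y_le_n (hp : p ∈ P.region R₁ R₂) : P.y p ≤ P.n p := by
  have hτ : 0 < (P.T p)⁻¹ := inv_pos.2 (H.T_pos hp)
  have hy := H.y_pos hp
  have hR := H.R₁_pos
  have h_small : 2 * R₁ * P.y p ≤ (P.d - P.a p ^ 2) * (P.T p)⁻¹ :=
    calc 2 * R₁ * P.y p ≤ 2 * R₁ * (P.ε * P.σ ^ (-P.γ) * (P.T p)⁻¹) := by
          gcongr
          exact H.y_le_mul_inv_T hp
      _ = 2 * R₁ * (P.ε * P.σ ^ (-P.γ)) * (P.T p)⁻¹ := by ring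
      _ ≤ _ := by
          gcongr
          exact H.ε_small.trans (H.gap_le hp)
  have h_quad := mul_le_mul_of_nonneg_right h_small hτ.le
  have h_a := mul_le_mul_of_nonneg_right (neg_le_of_abs_le (H.abs_a_le hp)) (mul_pos hτ hy).le
  have h_sq := mul_le_mul_of_nonneg_left (H.y_le_one hp) hy.le
  rw [H.n_eq hp]
  linarith

lemma T_rpow_isBigO {s t : ℝ} (hst : s ≤ t) :
    (fun p => P.T p ^ s) =O[𝓟 (P.region R₁ R₂)] fun p => P.T p ^ t := by
  refine IsBigO.of_bound (P.σ ^ (s - t)) (eventually_principal.2 fun p hp => ?_)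
  have hT := H.T_pos hp
  rw [norm_of_nonneg (rpow_nonneg hT.le _), norm_of_nonneg (rpow_nonneg hT.le _),
    ← sub_add_cancel s t, rpow_add hT, sub_add_cancel]
  exact mul_le_mul_of_nonneg_right (H.T_rpow_le (sub_nonpos.2 hst) hp) (rpow_nonneg hT.le _)

lemma T_rpow_isBigO_y_pow (k : ℕ) {s : ℝ} (hs : s ≤ (-1 - P.γ) * k) :
    (fun p => P.T p ^ s) =O[𝓟 (P.region R₁ R₂)] fun p => P.y p ^ k := by
  refine (H.T_rpow_isBigO hs).trans
    (IsBigO.of_bound (P.ε ^ k)⁻¹ (eventually_principal.2 fun p hp => ?_))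
  have hε := H.ε_pos
  rw [y, mul_pow, norm_mul, norm_of_nonneg (by positivity : 0 ≤ P.ε ^ k), rpow_mul (H.T_pos hp).le,
    rpow_natCast, inv_mul_cancel_left₀ (by positivity)]

lemma inv_T_pow_isBigO_y_pow {j k : ℕ} (hjk : (1 + P.γ) * k ≤ j) :
    (fun p => (P.T p)⁻¹ ^ j) =O[𝓟 (P.region R₁ R₂)] fun p => P.y p ^ k := by
  refine (H.T_rpow_isBigO_y_pow k (s := -j) (by linarith)).congr' ?_ .rfl
  filter_upwards [mem_principal_self (P.region R₁ R₂)] with p hp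
  rw [rpow_neg (H.T_pos hp).le, rpow_natCast, inv_pow]

lemma inv_T_sq_isBigO_y :
    (fun p => (P.T p)⁻¹ ^ 2) =O[𝓟 (P.region R₁ R₂)] P.y := by
  simpa only [pow_one] using
    H.inv_T_pow_isBigO_y_pow (j := 2) (k := 1) (by push_cast; linarith [H.γ_le_half])

lemma y_isBigO_inv_T : P.y =O[𝓟 (P.region R₁ R₂)] fun p => (P.T p)⁻¹ := by
  refine IsBigO.of_bound (P.ε * P.σ ^ (-P.γ)) (eventually_principal.2 fun p hp => ?_)
  rw [norm_of_nonneg (H.y_pos hp).le, norm_of_nonneg (inv_pos.2 (H.T_pos hp)).le]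
  exact H.y_le_mul_inv_T hp

lemma isBigO_one_of_continuous {g : ℝ × ℝ × ℝ → ℝ} (hg : Continuous g) :
    (fun p => g ((P.T p)⁻¹, P.a p, P.y p)) =O[𝓟 (P.region R₁ R₂)] fun _ => (1 : ℝ) := by
  obtain ⟨C, hC⟩ := ((isCompact_Icc (a := 0) (b := P.σ⁻¹)).prod
    ((isCompact_Icc (a := R₂) (b := R₁ - P.σ)).prod
      (isCompact_Icc (a := (0 : ℝ)) (b := 1)))).exists_bound_of_continuousOn hg.continuousOn
  refine IsBigO.of_bound C (eventually_principal.2 fun p hp => ?_)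
  rw [norm_one, mul_one]
  exact hC _ ⟨⟨(inv_pos.2 (H.T_pos hp)).le, inv_anti₀ H.σ_pos (σ_le_T hp)⟩, hp.2.1,
    (H.y_pos hp).le, H.y_le_one hp⟩

lemma continuous_mul_isBigO {g : ℝ × ℝ × ℝ → ℝ} (hg : Continuous g) {u v : Spc → ℝ}
    (hu : u =O[𝓟 (P.region R₁ R₂)] v) :
    (fun p => g ((P.T p)⁻¹, P.a p, P.y p) * u p) =O[𝓟 (P.region R₁ R₂)] v := by
  simpa only [one_mul] using (H.isBigO_one_of_continuous hg).mul hu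

lemma f_isBigO_one : P.f =O[𝓟 (P.region R₁ R₂)] fun _ => (1 : ℝ) :=
  H.isBigO_one_of_continuous (g := fun q => -1 - q.2.1 * q.1 + q.2.2) (by fun_prop)

lemma n_isBigO_y : P.n =O[𝓟 (P.region R₁ R₂)] P.y := by
  refine ((H.continuous_mul_isBigO (g := fun q => P.d - q.2.1 ^ 2) (by fun_prop)
    H.inv_T_sq_isBigO_y).add (H.continuous_mul_isBigO
      (g := fun q => 2 * (1 + q.2.1 * q.1) - q.2.2) (by fun_prop)
        (isBigO_refl P.y _))).congr' ?_ .rfl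
  filter_upwards [mem_principal_self (P.region R₁ R₂)] with p hp
  rw [H.n_eq hp]
  ring

lemma h_isBigO : P.h =O[𝓟 (P.region R₁ R₂)] fun p => (P.T p)⁻¹ ^ 2 :=
  (H.continuous_mul_isBigO (g := fun q => q.2.1 - P.c) (by fun_prop)
    (isBigO_refl (fun p => (P.T p)⁻¹ ^ 2) _)).sub
      ((H.y_isBigO_inv_T.mul (isBigO_refl _ _)).congr_right fun _ => (sq _).symm)

lemma hDefect_isBigO : P.hDefect =O[𝓟 (P.region R₁ R₂)] fun p => (P.T p)⁻¹ ^ 3 := by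
  refine ((H.continuous_mul_isBigO (g := fun q => 2 * (q.2.1 - P.c)) (by fun_prop)
    (isBigO_refl (fun p => (P.T p)⁻¹ ^ 3) _)).sub
      (((H.y_isBigO_inv_T.mul (isBigO_refl _ _)).const_mul_left (1 + P.γ)).congr_right
        fun p => (pow_succ' _ _).symm)).congr_left fun p => ?_
  rw [hDefect]
  ring

lemma boxF_isBigO : P.boxF =O[𝓟 (P.region R₁ R₂)] fun p => (P.T p)⁻¹ := by
  refine (H.continuous_mul_isBigO (g := fun q => 2 - 2 * q.2.1 * q.1 + (1 + P.γ) * q.2.2)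
    (by fun_prop) (isBigO_refl _ _)).congr_left fun p => ?_
  rw [boxF, fDot, yDot]
  ring

lemma boxF_add_isBigO_y :
    (fun p => P.boxF p + 2 * P.f p / P.T p) =O[𝓟 (P.region R₁ R₂)] P.y := by
  refine ((H.continuous_mul_isBigO (g := fun q => -4 * q.2.1) (by fun_prop)
    H.inv_T_sq_isBigO_y).add (H.continuous_mul_isBigO (g := fun q => (3 + P.γ) * q.1)
      (by fun_prop) (isBigO_refl P.y _))).congr_left fun p => ?_
  rw [boxF, fDot, yDot, f]
  ring

lemma rr_mul_inv_T_eq (hp : p ∈ P.region R₁ R₂) :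
    rr p * (P.T p)⁻¹ = 1 + (rr p - P.T p) * (P.T p)⁻¹ := by
  rw [sub_mul, mul_inv_cancel₀ (H.T_pos hp).ne', add_sub_cancel]

lemma rr_mul_inv_T_isBigO_one :
    (fun p => rr p * (P.T p)⁻¹) =O[𝓟 (P.region R₁ R₂)] fun _ => (1 : ℝ) := by
  refine IsBigO.of_pow two_ne_zero
    ((H.isBigO_one_of_continuous (g := fun q => 1 + 2 * q.2.1 * q.1 + P.d * q.1 ^ 2)
      (by fun_prop)).congr' ?_ (.of_forall fun _ => (one_pow 2).symm))
  filter_upwards [mem_principal_self (P.region R₁ R₂)] with p hp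
  exact (H.rr_mul_inv_T_sq hp).symm

/- `d (r/T)² = (d/T + a)² + d - a²`, and `d - a²` is bounded below on the region. -/
lemma one_isBigO_rr_mul_inv_T :
    (fun _ => (1 : ℝ)) =O[𝓟 (P.region R₁ R₂)] fun p => rr p * (P.T p)⁻¹ := by
  refine IsBigO.of_pow two_ne_zero
    (IsBigO.of_bound (P.d / min (2 * P.σ * (R₁ - P.σ - R₂)) (R₁ ^ 2 - (P.σ + R₂) ^ 2))
      (eventually_principal.2 fun p hp => ?_))
  have h_sq := H.rr_mul_inv_T_sq hp
  rw [Pi.pow_apply, Pi.pow_apply, one_pow, norm_one, norm_of_nonneg (sq_nonneg _),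
    div_mul_eq_mul_div, one_le_div (gap_pos H.σ_pos H.neg_lt H.σ_lt)]
  linarith [H.gap_le hp, sq_nonneg (P.d * (P.T p)⁻¹ + P.a p), congrArg (P.d * ·) h_sq]

lemma rr_mul_inv_T_add_f_isBigO_y :
    (fun p => rr p * (P.T p)⁻¹ + P.f p) =O[𝓟 (P.region R₁ R₂)] P.y := by
  have h_coeff : (fun p => (P.d - (rr p - P.T p) ^ 2) / 2) =O[𝓟 (P.region R₁ R₂)]
      fun _ => (1 : ℝ) := by
    refine IsBigO.of_bound ((|P.d| + R₁ ^ 2) / 2) (eventually_principal.2 fun p hp => ?_)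
    rw [norm_one, mul_one, norm_div, Real.norm_ofNat, Real.norm_eq_abs]
    gcongr
    refine (abs_sub _ _).trans ?_
    rw [abs_of_nonneg (sq_nonneg (rr p - P.T p))]
    gcongr 1
    exact sq_le_sq' (abs_le.1 hp.2.2).1 (abs_le.1 hp.2.2).2
  have h_sum := (h_coeff.mul H.inv_T_sq_isBigO_y).add
    ((isBigO_refl P.y (𝓟 (P.region R₁ R₂))).congr_right fun p => (one_mul _).symm)
  simp only [one_mul] at h_sum
  refine h_sum.congr' ?_ .rfl
  filter_upwards [mem_principal_self (P.region R₁ R₂)] with p hp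
  have h_sq := H.rr_mul_inv_T_sq hp
  have h_r := H.rr_mul_inv_T_eq hp
  rw [f]
  linear_combination (-1 / 2 : ℝ) * h_sq
    + (1 / 2 : ℝ) * (rr p * (P.T p)⁻¹ - 1 + (rr p - P.T p) * (P.T p)⁻¹) * h_r

lemma bracket_sub_isBigO_y_sq :
    (fun p => P.n p * P.boxF p + P.gradN p + 2 * P.n p * P.h p
      - 2 * (1 - P.γ) * P.y p * (P.T p)⁻¹) =O[𝓟 (P.region R₁ R₂)] fun p => P.y p ^ 2 := by
  have h_pow := H.inv_T_pow_isBigO_y_pow (j := 4) (k := 2)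
    (by push_cast; linarith [H.γ_le_half])
  have h_y_mul := (isBigO_refl P.y (𝓟 (P.region R₁ R₂))).mul H.inv_T_sq_isBigO_y
  have h_nh := (H.n_isBigO_y.mul (H.h_isBigO.trans H.inv_T_sq_isBigO_y)).const_mul_left 2
  simp only [← sq] at h_y_mul h_nh
  refine ((((H.continuous_mul_isBigO (g := fun q => -6 * q.2.1 * (P.d - q.2.1 ^ 2))
    (by fun_prop) h_pow).add (H.continuous_mul_isBigO (g := fun q => -4 * q.2.1 + 4 * P.d * q.1
      - 12 * q.2.1 ^ 2 * q.1 - 2 * (1 + P.γ) * (2 * q.2.1 + q.2.1 ^ 2 * q.1)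
      + (P.d - q.2.1 ^ 2) * q.1 * (1 + P.γ)) (by fun_prop) h_y_mul)).add
    (H.continuous_mul_isBigO (g := fun q => q.1 * (2 * (1 + 2 * (q.2.1 * q.1))
      + 6 * (1 + q.2.1 * q.1) * (1 + P.γ) - 2 + 2 * (q.2.1 * q.1) - 3 * (1 + P.γ) * q.2.2))
      (by fun_prop) (isBigO_refl _ _))).add h_nh).congr' ?_ .rfl
  filter_upwards [mem_principal_self (P.region R₁ R₂)] with p hp
  have h_sq := H.rr_mul_inv_T_sq hp
  rw [gradN, H.n_eq hp, boxF, fDot, yDot, f]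
  linear_combination (-2 * (P.T p)⁻¹ * (2 * (-1 - P.a p * (P.T p)⁻¹ + P.y p) + 1)) * h_sq

end Admissible

/-- The pointwise estimates, with a common constant `M`, on the coefficients of the Carleman
identity. -/
structure GeometryBounds (P : CarlemanParams) (M : ℝ) (p : Spc) : Prop where
  one_le_M : 1 ≤ M
  T_pos : 0 < P.T p
  inv_T_le : (P.T p)⁻¹ ≤ M
  y_pos : 0 < P.y p
  y_le_one : P.y p ≤ 1
  y_le : P.y p ≤ M * (P.T p)⁻¹
  inv_T_sq_le : (P.T p)⁻¹ ^ 2 ≤ M * P.y p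
  inv_T_pow_five_le : (P.T p)⁻¹ ^ 5 ≤ M * P.y p ^ 3
  abs_f_le : |P.f p| ≤ M
  rr_le : rr p * (P.T p)⁻¹ ≤ M
  one_le_rr : 1 ≤ M * (rr p * (P.T p)⁻¹)
  abs_rr_add_f_le : |rr p * (P.T p)⁻¹ + P.f p| ≤ M * P.y p
  y_le_n : P.y p ≤ P.n p
  n_le : P.n p ≤ M * P.y p
  abs_h_le : |P.h p| ≤ M * (P.T p)⁻¹ ^ 2
  abs_hDefect_le : |P.hDefect p| ≤ M * (P.T p)⁻¹ ^ 3
  abs_boxF_add_le : |P.boxF p + 2 * P.f p / P.T p| ≤ M * P.y p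
  abs_boxF_le : |P.boxF p| ≤ M * (P.T p)⁻¹
  bracket_ge : -(M * P.y p ^ 2) ≤ P.n p * P.boxF p + P.gradN p + 2 * P.n p * P.h p

lemma eventually_forall_abs_le {α : Type*} {s : Set α} {u v : α → ℝ} (h : u =O[𝓟 s] v)
    (hv : ∀ x ∈ s, 0 ≤ v x) : ∀ᶠ M in atTop, ∀ x ∈ s, |u x| ≤ M * v x := by
  filter_upwards [isBigO_iff_eventually.1 h] with M hM x hx
  simpa only [Real.norm_eq_abs, abs_of_nonneg (hv x hx)] using eventually_principal.1 hM x hx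

lemma Admissible.exists_geometryBounds (H : P.Admissible R₁ R₂) :
    ∃ M, ∀ p ∈ P.region R₁ R₂, P.GeometryBounds M p := by
  have hτ p (hp : p ∈ P.region R₁ R₂) : 0 ≤ (P.T p)⁻¹ := (inv_pos.2 (H.T_pos hp)).le
  have hy p (hp : p ∈ P.region R₁ R₂) : 0 ≤ P.y p := (H.y_pos hp).le
  have hr p (hp : p ∈ P.region R₁ R₂) : 0 ≤ rr p * (P.T p)⁻¹ :=
    mul_nonneg (norm_nonneg _) (hτ p hp)
  have h_pow := H.inv_T_pow_isBigO_y_pow (j := 5) (k := 3) (by push_cast; linarith [H.γ_le_half])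
  have h_one p (_ : p ∈ P.region R₁ R₂) : (0 : ℝ) ≤ 1 := zero_le_one
  obtain ⟨M, h₁, h₂, h₃, h₄, h₅, h₆, h₇, h₈, h₉, h₁₀, h₁₁, h₁₂, h₁₃, h₁₄, h₁₅⟩ :=
    ((eventually_ge_atTop (1 : ℝ)).and <|
      (eventually_forall_abs_le (H.isBigO_one_of_continuous (g := Prod.fst) continuous_fst)
        h_one).and <|
      (eventually_forall_abs_le H.y_isBigO_inv_T hτ).and <|
      (eventually_forall_abs_le H.inv_T_sq_isBigO_y hy).and <|
      (eventually_forall_abs_le h_pow fun p hp => pow_nonneg (hy p hp) 3).and <|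
      (eventually_forall_abs_le H.f_isBigO_one h_one).and <|
      (eventually_forall_abs_le H.rr_mul_inv_T_isBigO_one h_one).and <|
      (eventually_forall_abs_le H.one_isBigO_rr_mul_inv_T hr).and <|
      (eventually_forall_abs_le H.rr_mul_inv_T_add_f_isBigO_y hy).and <|
      (eventually_forall_abs_le H.n_isBigO_y hy).and <|
      (eventually_forall_abs_le H.h_isBigO fun p _ => sq_nonneg _).and <|
      (eventually_forall_abs_le H.hDefect_isBigO fun p hp => pow_nonneg (hτ p hp) 3).and <|
      (eventually_forall_abs_le H.boxF_add_isBigO_y hy).and <|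
      (eventually_forall_abs_le H.boxF_isBigO hτ).and <|
      (eventually_forall_abs_le H.bracket_sub_isBigO_y_sq fun p _ => sq_nonneg _)).exists
  refine ⟨M, fun p hp => ⟨h₁, H.T_pos hp, ?_, H.y_pos hp, H.y_le_one hp, (abs_le.1 (h₃ p hp)).2,
    (abs_le.1 (h₄ p hp)).2, (abs_le.1 (h₅ p hp)).2, ?_, ?_, (abs_le.1 (h₈ p hp)).2, h₉ p hp,
    H.y_le_n hp, (abs_le.1 (h₁₀ p hp)).2, h₁₁ p hp, h₁₂ p hp, h₁₃ p hp, h₁₄ p hp, ?_⟩⟩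
  · simpa only [mul_one] using (abs_le.1 (h₂ p hp)).2
  · simpa only [mul_one] using h₆ p hp
  · simpa only [mul_one] using (abs_le.1 (h₇ p hp)).2
  · have h_main : 0 ≤ 2 * (1 - P.γ) * P.y p * (P.T p)⁻¹ :=
      mul_nonneg (mul_nonneg (by linarith [H.γ_le_half]) (hy p hp)) (hτ p hp)
    linarith [(abs_le.1 (h₁₅ p hp)).1]

lemma h_update (P : CarlemanParams) (c μ : ℝ) (p : Spc) :
    { P with c := c, μ := μ }.h p = { P with c := 1 }.h p + (1 - c) * (P.T p)⁻¹ ^ 2 := by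
  change (P.a p - c) * (P.T p)⁻¹ ^ 2 - P.y p * (P.T p)⁻¹
    = (P.a p - 1) * (P.T p)⁻¹ ^ 2 - P.y p * (P.T p)⁻¹ + (1 - c) * (P.T p)⁻¹ ^ 2
  ring

lemma hDefect_update (P : CarlemanParams) (c μ : ℝ) (p : Spc) :
    { P with c := c, μ := μ }.hDefect p
      = { P with c := 1 }.hDefect p + 2 * (1 - c) * (P.T p)⁻¹ ^ 3 := by
  change 2 * (P.a p - c) / P.T p ^ 3 - (1 + P.γ) * P.y p / P.T p ^ 2
    = 2 * (P.a p - 1) / P.T p ^ 3 - (1 + P.γ) * P.y p / P.T p ^ 2 + 2 * (1 - c) * (P.T p)⁻¹ ^ 3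
  ring

/- The constant `c` has to be chosen after `M`; starting from `c = 1` costs a fixed increase of
`M`. -/
lemma GeometryBounds.update {M c : ℝ} (g : { P with c := 1 }.GeometryBounds M p)
    (hc : c ∈ Icc (0 : ℝ) 1) (μ : ℝ) :
    { P with c := c, μ := μ }.GeometryBounds (M + 2) p := by
  have hM : M ≤ M + 2 := by linarith
  have hτ : 0 ≤ (P.T p)⁻¹ := (inv_pos.2 g.T_pos).le
  have hy : 0 ≤ P.y p := g.y_pos.le
  have hn : 0 ≤ P.n p := hy.trans g.y_le_n
  have hc₁ : 0 ≤ 1 - c := sub_nonneg.2 hc.2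
  refine ⟨g.one_le_M.trans hM, g.T_pos, g.inv_T_le.trans hM, g.y_pos, g.y_le_one,
    g.y_le.trans (mul_le_mul_of_nonneg_right hM hτ),
    g.inv_T_sq_le.trans (mul_le_mul_of_nonneg_right hM hy),
    g.inv_T_pow_five_le.trans (mul_le_mul_of_nonneg_right hM (pow_nonneg hy 3)),
    g.abs_f_le.trans hM, g.rr_le.trans hM,
    g.one_le_rr.trans (mul_le_mul_of_nonneg_right hM (mul_nonneg (norm_nonneg _) hτ)),
    g.abs_rr_add_f_le.trans (mul_le_mul_of_nonneg_right hM hy), g.y_le_n,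
    g.n_le.trans (mul_le_mul_of_nonneg_right hM hy), ?_, ?_,
    g.abs_boxF_add_le.trans (mul_le_mul_of_nonneg_right hM hy),
    g.abs_boxF_le.trans (mul_le_mul_of_nonneg_right hM hτ), ?_⟩
  · have h_c : |(1 - c) * (P.T p)⁻¹ ^ 2| ≤ 2 * (P.T p)⁻¹ ^ 2 := by
      rw [abs_of_nonneg (by positivity)]
      gcongr
      linarith [hc.1]
    rw [h_update, add_mul]
    exact (abs_add_le _ _).trans (add_le_add g.abs_h_le h_c)
  · have h_c : |2 * (1 - c) * (P.T p)⁻¹ ^ 3| ≤ 2 * (P.T p)⁻¹ ^ 3 := by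
      rw [abs_of_nonneg (by positivity)]
      gcongr
      linarith [hc.1]
    rw [hDefect_update, add_mul]
    exact (abs_add_le _ _).trans (add_le_add g.abs_hDefect_le h_c)
  · have h_gain : 0 ≤ 2 * P.n p * ((1 - c) * (P.T p)⁻¹ ^ 2) := by positivity
    change _ ≤ P.n p * P.boxF p + P.gradN p + 2 * P.n p * { P with c := c, μ := μ }.h p
    rw [h_update]
    calc -((M + 2) * P.y p ^ 2) ≤ -(M * P.y p ^ 2) := by gcongr
      _ ≤ P.n p * P.boxF p + P.gradN p + 2 * P.n p * { P with c := 1 }.h p := g.bracket_ge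
      _ ≤ _ := by linarith

end CarlemanParams

end Geometry

section AngularDerivatives

/-- The `i`-th component of the angular part of the spatial gradient. -/
def ang (u : Spc → ℝ) (i : Fin 3) (p : Spc) : ℝ := pd i.succ u p - p.2 i / rr p * dr u p

/-- The squared length of the angular part of the spatial gradient. -/
def angularSq (u : Spc → ℝ) (p : Spc) : ℝ := ∑ i, ang u i p ^ 2

lemma angularSq_nonneg (u : Spc → ℝ) (p : Spc) : 0 ≤ angularSq u p :=
  Finset.sum_nonneg fun _ _ => sq_nonneg _

lemma abs_coord_div_rr_le_one (p : Spc) (i : Fin 3) : |p.2 i / rr p| ≤ 1 := by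
  have hr : 0 ≤ rr p := norm_nonneg _
  rw [abs_div, abs_of_nonneg hr]
  exact div_le_one_of_le₀ (PiLp.norm_apply_le p.2 i) hr

lemma sum_pd_sq (u : Spc → ℝ) {p : Spc} (hr : rr p ≠ 0) :
    ∑ i : Fin 3, pd i.succ u p ^ 2 = dr u p ^ 2 + angularSq u p := by
  have hω : ∑ i : Fin 3, (p.2 i / rr p) ^ 2 = 1 := by
    simp only [div_pow, ← Finset.sum_div, ← rr_sq]
    exact div_self (pow_ne_zero 2 hr)
  have hdr : ∑ i : Fin 3, p.2 i / rr p * pd i.succ u p = dr u p := rfl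
  calc ∑ i : Fin 3, pd i.succ u p ^ 2
      = ∑ i : Fin 3, (ang u i p ^ 2 + 2 * dr u p * (p.2 i / rr p * pd i.succ u p)
          - dr u p ^ 2 * (p.2 i / rr p) ^ 2) :=
        Finset.sum_congr rfl fun i _ => by rw [ang]; ring
    _ = dr u p ^ 2 + angularSq u p := by
        rw [Finset.sum_sub_distrib, Finset.sum_add_distrib, ← Finset.mul_sum, ← Finset.mul_sum,
          hω, hdr, angularSq]
        ring

lemma CarlemanParams.X_eq (P : CarlemanParams) (u : Spc → ℝ) {p : Spc} (hr : rr p ≠ 0) :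
    P.X u p = rr p * (P.T p)⁻¹ * dr u p - P.f p * pd 0 u p := by
  simp only [X, gradDeriv, A, dr, dxi, Fin.sum_univ_three]
  field_simp

end AngularDerivatives

section PointwiseEstimate

namespace CarlemanParams

variable {P : CarlemanParams} {M l : ℝ} {p : Spc}

lemma GeometryBounds.M_pos (g : P.GeometryBounds M p) : 0 < M := zero_lt_one.trans_le g.one_le_M

lemma GeometryBounds.inv_T_pos (g : P.GeometryBounds M p) : 0 < (P.T p)⁻¹ := inv_pos.2 g.T_pos

lemma GeometryBounds.rr_ne_zero (g : P.GeometryBounds M p) : rr p ≠ 0 := by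
  intro h
  have h_one := g.one_le_rr
  rw [h, zero_mul, mul_zero] at h_one
  exact absurd h_one (by norm_num)

lemma GeometryBounds.le_sq_mul_rr_sq_mul (g : P.GeometryBounds M p) {z : ℝ} (hz : 0 ≤ z) :
    z ≤ M ^ 2 * ((rr p * (P.T p)⁻¹) ^ 2 * z) := by
  rw [← mul_assoc, ← mul_pow]
  exact le_mul_of_one_le_left hz (one_le_pow₀ g.one_le_rr)

/- The factor `(r/T)²` turns the difference of squares into `X² + 2 f X ∂_t u - n (∂_t u)²`, in
which `n` is small. -/
lemma GeometryBounds.sq_dr_sub_sq_pd_zero_ge (g : P.GeometryBounds M p) (u : Spc → ℝ) :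
    -(M ^ 3 * (2 * (|P.X u p| * |pd 0 u p|) + P.y p * pd 0 u p ^ 2))
      ≤ dr u p ^ 2 - pd 0 u p ^ 2 := by
  have hM := g.M_pos
  have hy := g.y_pos
  set z := M * (2 * (|P.X u p| * |pd 0 u p|) + P.y p * pd 0 u p ^ 2) with hz
  have hz_nonneg : 0 ≤ z := by positivity
  have h_fX : |P.f p * P.X u p * pd 0 u p| ≤ M * (|P.X u p| * |pd 0 u p|) := by
    rw [abs_mul, abs_mul, mul_assoc]
    exact mul_le_mul_of_nonneg_right g.abs_f_le (by positivity)
  have h_n : P.n p * pd 0 u p ^ 2 ≤ M * P.y p * pd 0 u p ^ 2 :=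
    mul_le_mul_of_nonneg_right g.n_le (sq_nonneg _)
  have h_scaled : -z ≤ (rr p * (P.T p)⁻¹) ^ 2 * (dr u p ^ 2 - pd 0 u p ^ 2) := by
    have h_id : (rr p * (P.T p)⁻¹) ^ 2 * (dr u p ^ 2 - pd 0 u p ^ 2)
        = P.X u p ^ 2 + 2 * (P.f p * P.X u p * pd 0 u p) - P.n p * pd 0 u p ^ 2 := by
      rw [P.X_eq u g.rr_ne_zero, n]
      ring
    linarith [(abs_le.1 h_fX).1, sq_nonneg (P.X u p)]
  by_contra! h_lt
  have hr : (0 : ℝ) < (rr p * (P.T p)⁻¹) ^ 2 := by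
    have := g.rr_ne_zero
    have := g.inv_T_pos
    positivity
  have h_lt' := mul_lt_mul_of_pos_left h_lt hr
  have h_z := g.le_sq_mul_rr_sq_mul hz_nonneg
  rw [hz] at h_z h_scaled
  linarith

lemma GeometryBounds.c_term_ge (g : P.GeometryBounds M p) (hc : 0 < P.c)
    (hcM : P.c * (16 * M ^ 4) ≤ 1) (u : Spc → ℝ) :
    -(1 / 8 * (P.y p * (P.T p)⁻¹) * pd 0 u p ^ 2 + P.X u p ^ 2)
      ≤ P.c * (P.T p)⁻¹ ^ 2 * (dr u p ^ 2 - pd 0 u p ^ 2) := by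
  have hM := g.M_pos
  have hy := g.y_pos
  have hτ := g.inv_T_pos
  have hτM := g.inv_T_le
  have hτy := g.inv_T_sq_le
  have h_ge := mul_le_mul_of_nonneg_left (g.sq_dr_sub_sq_pd_zero_ge u)
    (by positivity : 0 ≤ P.c * (P.T p)⁻¹ ^ 2)
  rw [← sq_abs (P.X u p), ← sq_abs (pd 0 u p)] at *
  generalize |P.X u p| = X, |pd 0 u p| = q, P.y p = y, P.c = c, (P.T p)⁻¹ = τ at *
  have hcM' : c * M ^ 4 ≤ 1 / 16 := by linarith
  have h_sq : c * τ ^ 2 * (M ^ 3 * (y * q ^ 2)) ≤ 1 / 16 * (y * τ * q ^ 2) :=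
    calc c * τ ^ 2 * (M ^ 3 * (y * q ^ 2)) = c * M ^ 3 * τ * (y * τ * q ^ 2) := by ring
      _ ≤ c * M ^ 3 * M * (y * τ * q ^ 2) := by gcongr
      _ = c * M ^ 4 * (y * τ * q ^ 2) := by ring
      _ ≤ 1 / 16 * (y * τ * q ^ 2) := by gcongr
  have h_X : 16 * (c * M ^ 3) ^ 2 * τ ^ 3 * X ^ 2 ≤ X ^ 2 * y :=
    calc 16 * (c * M ^ 3) ^ 2 * τ ^ 3 * X ^ 2
        = 16 * (c * M ^ 3) ^ 2 * (τ ^ 2 * τ) * X ^ 2 := by ring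
      _ ≤ 16 * (c * M ^ 3) ^ 2 * (M * y * M) * X ^ 2 := by gcongr
      _ = 16 * (c * M ^ 4) ^ 2 * (X ^ 2 * y) := by ring
      _ ≤ 16 * (1 / 16) ^ 2 * (X ^ 2 * y) := by gcongr
      _ ≤ X ^ 2 * y := by linarith [mul_nonneg (sq_nonneg X) hy.le]
  have h_cross : c * τ ^ 2 * (M ^ 3 * (2 * (X * q))) ≤ 1 / 16 * (y * τ) * q ^ 2 + X ^ 2 := by
    refine le_of_mul_le_mul_right (a := y) ?_ hy
    linarith [mul_nonneg hτ.le (sq_nonneg (y * q - 16 * c * M ^ 3 * τ * X))]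
  linarith

lemma GeometryBounds.abs_h_le_y (g : P.GeometryBounds M p) : |P.h p| ≤ M ^ 2 * P.y p :=
  calc |P.h p| ≤ M * (P.T p)⁻¹ ^ 2 := g.abs_h_le
    _ ≤ M * (M * P.y p) := mul_le_mul_of_nonneg_left g.inv_T_sq_le g.M_pos.le
    _ = M ^ 2 * P.y p := by ring

lemma GeometryBounds.h_sq_mul_le (g : P.GeometryBounds M p) (w : ℝ) :
    P.h p ^ 2 * w ^ 2 ≤ M ^ 4 * (P.y p ^ 2 * w ^ 2) := by
  calc P.h p ^ 2 * w ^ 2 ≤ (M ^ 2 * P.y p) ^ 2 * w ^ 2 :=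
        mul_le_mul_of_nonneg_right (sq_le_sq.2 (g.abs_h_le_y.trans (le_abs_self _))) (sq_nonneg w)
    _ = M ^ 4 * (P.y p ^ 2 * w ^ 2) := by ring

lemma GeometryBounds.inv_T_pow_three_mul_le (g : P.GeometryBounds M p) (κ q w : ℝ) :
    (P.T p)⁻¹ ^ 3 * (|w| * |q|) * κ
      ≤ 1 / 32 * (P.y p * (P.T p)⁻¹) * q ^ 2 + 8 * κ ^ 2 * M * (P.y p ^ 2 * w ^ 2) := by
  have hy := g.y_pos
  have h_five := mul_le_mul_of_nonneg_left g.inv_T_pow_five_le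
    (by positivity : 0 ≤ 8 * κ ^ 2 * w ^ 2)
  have h_young := mul_nonneg g.inv_T_pos.le
    (sq_nonneg (P.y p * |q| - 16 * κ * (P.T p)⁻¹ ^ 2 * |w|))
  refine le_of_mul_le_mul_right (a := P.y p) ?_ hy
  rw [← sq_abs w] at h_five ⊢
  rw [← sq_abs q]
  linarith

lemma GeometryBounds.cross_terms_le (g : P.GeometryBounds M p) (X q w : ℝ) :
    w * (X * (P.T p)⁻¹ ^ 2 + P.hDefect p * q) - 2 * (P.T p)⁻¹ * q * P.h p * w
      ≤ X ^ 2 + 1 / 16 * (P.y p * (P.T p)⁻¹) * q ^ 2 + 41 * M ^ 4 * (P.y p ^ 2 * w ^ 2) := by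
  have hτ := g.inv_T_pos
  have hyw : 0 ≤ P.y p ^ 2 * w ^ 2 := by positivity
  have h_X : w * X * (P.T p)⁻¹ ^ 2 ≤ X ^ 2 + M ^ 2 * (P.y p ^ 2 * w ^ 2) := by
    have h_sq : ((P.T p)⁻¹ ^ 2) ^ 2 * w ^ 2 ≤ (M * P.y p) ^ 2 * w ^ 2 :=
      mul_le_mul_of_nonneg_right (pow_le_pow_left₀ (sq_nonneg _) g.inv_T_sq_le 2) (sq_nonneg w)
    linarith [sq_nonneg (X - w * (P.T p)⁻¹ ^ 2 / 2), sq_nonneg ((P.T p)⁻¹ ^ 2 * w)]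
  have h_defect : w * (P.hDefect p * q) ≤ (P.T p)⁻¹ ^ 3 * (|w| * |q|) * M := by
    refine (le_abs_self _).trans ?_
    rw [abs_mul, abs_mul]
    calc |w| * (|P.hDefect p| * |q|) ≤ |w| * (M * (P.T p)⁻¹ ^ 3 * |q|) := by
          gcongr; exact g.abs_hDefect_le
      _ = (P.T p)⁻¹ ^ 3 * (|w| * |q|) * M := by ring
  have h_h : -(2 * (P.T p)⁻¹ * q * P.h p * w) ≤ (P.T p)⁻¹ ^ 3 * (|w| * |q|) * (2 * M) := by
    refine (neg_le_abs _).trans ?_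
    rw [abs_mul, abs_mul, abs_mul, abs_mul, abs_two, abs_of_pos hτ]
    calc 2 * (P.T p)⁻¹ * |q| * |P.h p| * |w| ≤ 2 * (P.T p)⁻¹ * |q| * (M * (P.T p)⁻¹ ^ 2) * |w| := by
          gcongr; exact g.abs_h_le
      _ = (P.T p)⁻¹ ^ 3 * (|w| * |q|) * (2 * M) := by ring
  have h_two : M ^ 2 * (P.y p ^ 2 * w ^ 2) ≤ M ^ 4 * (P.y p ^ 2 * w ^ 2) :=
    mul_le_mul_of_nonneg_right (pow_le_pow_right₀ g.one_le_M (by norm_num)) hyw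
  have h_three : M ^ 3 * (P.y p ^ 2 * w ^ 2) ≤ M ^ 4 * (P.y p ^ 2 * w ^ 2) :=
    mul_le_mul_of_nonneg_right (pow_le_pow_right₀ g.one_le_M (by norm_num)) hyw
  linarith [g.inv_T_pow_three_mul_le M q w, g.inv_T_pow_three_mul_le (2 * M) q w]

lemma GeometryBounds.y_sq_le_potential (g : P.GeometryBounds M p) (hμ : M ≤ P.μ) :
    P.y p ^ 2 ≤ P.n p * P.boxF p + P.gradN p + 2 * P.μ * P.n p ^ 2 + 2 * P.n p * P.h p := by
  have hM := g.M_pos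
  have h_n : P.y p ^ 2 ≤ P.n p ^ 2 := pow_le_pow_left₀ g.y_pos.le g.y_le_n 2
  have h_μ : M * P.y p ^ 2 ≤ P.μ * P.n p ^ 2 :=
    mul_le_mul hμ h_n (sq_nonneg _) (hM.le.trans hμ)
  have h_M : P.y p ^ 2 ≤ M * P.y p ^ 2 := le_mul_of_one_le_left (sq_nonneg _) g.one_le_M
  linarith [g.bracket_ge]

lemma GeometryBounds.bulk_ge (g : P.GeometryBounds M p) (hγ : P.γ ≤ 1 / 2) (hc : 0 < P.c)
    (hcM : P.c * (16 * M ^ 4) ≤ 1) (hμ : M ≤ P.μ) (hl : 0 ≤ l * P.e p) (w : Spc → ℝ) :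
    (3 / 2 * (l * P.e p) - 2) * P.X w p ^ 2 + 1 / 16 * (P.y p * (P.T p)⁻¹) * pd 0 w p ^ 2
      + P.c * (P.T p)⁻¹ ^ 2 * angularSq w p
      + (1 / 2 * (l * P.e p) ^ 2 - 2 * (l * P.e p) * M ^ 4 - 41 * M ^ 4) * (P.y p ^ 2 * w p ^ 2)
      ≤ P.bulk l w p := by
  have h_c := g.c_term_ge hc hcM w
  have h_cross := g.cross_terms_le (P.X w p) (pd 0 w p) (w p)
  have h_grad : 1 / 4 * (P.y p * (P.T p)⁻¹) * pd 0 w p ^ 2 ≤ 1 / 2 * (1 - P.γ) * (P.y p * (P.T p)⁻¹)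
      * (dr w p ^ 2 + angularSq w p + pd 0 w p ^ 2) := by
    have hyτ : 0 ≤ P.y p * (P.T p)⁻¹ := mul_nonneg g.y_pos.le g.inv_T_pos.le
    exact mul_le_mul (mul_le_mul_of_nonneg_right (by linarith) hyτ)
      (by linarith [sq_nonneg (dr w p), angularSq_nonneg w p]) (sq_nonneg _)
      (mul_nonneg (by linarith) hyτ)
  have h_hwX : 2 * (l * P.e p) * (P.h p * w p * P.X w p) ≤
      1 / 2 * (l * P.e p) * P.X w p ^ 2 + 2 * (l * P.e p) * M ^ 4 * (P.y p ^ 2 * w p ^ 2) := by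
    have h_young : P.h p * w p * P.X w p ≤ 1 / 4 * P.X w p ^ 2 + M ^ 4 * (P.y p ^ 2 * w p ^ 2) := by
      linarith [sq_nonneg (P.X w p / 2 - P.h p * w p), g.h_sq_mul_le (w p)]
    linarith [mul_le_mul_of_nonneg_left h_young (by linarith : 0 ≤ 2 * (l * P.e p))]
  have h_pot := mul_le_mul_of_nonneg_left (g.y_sq_le_potential hμ)
    (by positivity : 0 ≤ 1 / 2 * (l * P.e p) ^ 2 * w p ^ 2)
  rw [bulk, sum_pd_sq w g.rr_ne_zero]
  simp only [div_eq_mul_inv, ← inv_pow] at *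
  linarith

lemma GeometryBounds.conjBox_conjugated_sq_le (g : P.GeometryBounds M p) (hγ : P.γ ≠ 0)
    (hμ : 0 < P.μ) {φ : Spc → ℝ} (hφ : ContDiffAt ℝ 2 φ p) :
    P.conjBox l (P.conjugated l φ) p ^ 2 ≤ 2 * P.source l φ p ^ 2
      + 2 * (l * P.e p) ^ 2 * ((M * (1 + P.μ)) ^ 2 * (P.y p ^ 2 * P.conjugated l φ p ^ 2)) := by
  have h_coeff : |P.boxF p + 2 * P.f p / P.T p + P.μ * P.n p| ≤ M * (1 + P.μ) * P.y p := by
    have h_n : 0 ≤ P.μ * P.n p := mul_nonneg hμ.le (g.y_pos.le.trans g.y_le_n)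
    refine (abs_add_le _ _).trans ?_
    rw [abs_of_nonneg h_n]
    linarith [g.abs_boxF_add_le, mul_le_mul_of_nonneg_left g.n_le hμ.le]
  have h_sq := mul_le_mul_of_nonneg_left (sq_le_sq.2 (h_coeff.trans (le_abs_self _)))
    (by positivity : 0 ≤ (l * P.e p) ^ 2 * P.conjugated l φ p ^ 2)
  rw [P.conjBox_conjugated l hγ hμ.ne' g.T_pos hφ]
  linarith [sq_nonneg (P.source l φ p
    - l * P.e p * (P.boxF p + 2 * P.f p / P.T p + P.μ * P.n p) * P.conjugated l φ p)]

lemma mul_le_sq_div_add_mul_sq (x z : ℝ) {k : ℝ} (hk : 0 < k) :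
    x * z ≤ x ^ 2 / k + k / 4 * z ^ 2 := by
  have h_id : x ^ 2 / k + k / 4 * z ^ 2 - x * z = (x - k / 2 * z) ^ 2 / k := by
    field_simp
    ring
  linarith [div_nonneg (sq_nonneg (x - k / 2 * z)) hk.le]

lemma GeometryBounds.conjBox_mul_multiplier_le (g : P.GeometryBounds M p) (hγ : P.γ ≠ 0)
    (hμ : 0 < P.μ) (hl : 0 < l * P.e p) {φ : Spc → ℝ} (hφ : ContDiffAt ℝ 2 φ p) :
    P.conjBox l (P.conjugated l φ) p * P.multiplier (P.conjugated l φ) p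
      ≤ 2 * P.source l φ p ^ 2 / (l * P.e p) + 1 / 2 * (l * P.e p) * P.X (P.conjugated l φ) p ^ 2
        + l * P.e p * (2 * (M * (1 + P.μ)) ^ 2 + 1 / 2 * M ^ 4)
          * (P.y p ^ 2 * P.conjugated l φ p ^ 2) := by
  have h_box := div_le_div_of_nonneg_right (g.conjBox_conjugated_sq_le (l := l) hγ hμ hφ) hl.le
  set w := P.conjugated l φ
  have h_mult : P.multiplier w p ^ 2 ≤ 2 * P.X w p ^ 2 + 2 * M ^ 4 * (P.y p ^ 2 * w p ^ 2) := by
    rw [multiplier]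
    linarith [sq_nonneg (P.X w p + P.h p * w p), g.h_sq_mul_le (w p)]
  calc P.conjBox l w p * P.multiplier w p
      ≤ P.conjBox l w p ^ 2 / (l * P.e p) + l * P.e p / 4 * P.multiplier w p ^ 2 :=
        mul_le_sq_div_add_mul_sq _ _ hl
    _ ≤ (2 * P.source l φ p ^ 2
          + 2 * (l * P.e p) ^ 2 * ((M * (1 + P.μ)) ^ 2 * (P.y p ^ 2 * w p ^ 2))) / (l * P.e p)
        + l * P.e p / 4 * (2 * P.X w p ^ 2 + 2 * M ^ 4 * (P.y p ^ 2 * w p ^ 2)) := by gcongr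
    _ = _ := by
        field_simp
        ring

lemma absorption_constant_le {M μ k : ℝ} (hM : 1 ≤ M) (hμ : 0 ≤ μ)
    (hk : 200 * M ^ 4 * (1 + μ) ^ 2 ≤ k) :
    41 * M ^ 4 + 2 * k * M ^ 4 + k * (2 * (M * (1 + μ)) ^ 2 + 1 / 2 * M ^ 4) ≤ 1 / 4 * k ^ 2 := by
  have hμ' : 1 ≤ (1 + μ) ^ 2 := one_le_pow₀ (by linarith)
  have hM₄ : 1 ≤ M ^ 4 := one_le_pow₀ hM
  have hk₁ : 1 ≤ k := by linarith [one_le_mul_of_one_le_of_one_le hM₄ hμ']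
  have h_sq : k * (200 * M ^ 4 * (1 + μ) ^ 2) ≤ k * k := by gcongr
  have h₁ : k * M ^ 4 * 1 ≤ k * M ^ 4 * (1 + μ) ^ 2 := by gcongr
  have h₂ : k * M ^ 2 * (1 + μ) ^ 2 ≤ k * M ^ 4 * (1 + μ) ^ 2 := by
    gcongr
    norm_num
  have h₃ : 1 * M ^ 4 ≤ k * M ^ 4 := by gcongr
  linarith

lemma GeometryBounds.conjBox_mul_multiplier_sub_bulk_le (g : P.GeometryBounds M p) (hγ : P.γ ≠ 0)
    (hγ' : P.γ ≤ 1 / 2) (hc : 0 < P.c) (hcM : P.c * (16 * M ^ 4) ≤ 1) (hμ : M ≤ P.μ)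
    (hl : 200 * M ^ 4 * (1 + P.μ) ^ 2 ≤ l * P.e p) {φ : Spc → ℝ} (hφ : ContDiffAt ℝ 2 φ p) :
    P.conjBox l (P.conjugated l φ) p * P.multiplier (P.conjugated l φ) p
        - P.bulk l (P.conjugated l φ) p
      ≤ -(1 / 2 * (l * P.e p) * P.X (P.conjugated l φ) p ^ 2
          + 1 / 16 * (P.y p * (P.T p)⁻¹) * pd 0 (P.conjugated l φ) p ^ 2
          + P.c * (P.T p)⁻¹ ^ 2 * angularSq (P.conjugated l φ) p
          + 1 / 4 * (l * P.e p) ^ 2 * P.y p ^ 2 * P.conjugated l φ p ^ 2)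
        + 2 * P.source l φ p ^ 2 / (l * P.e p) := by
  have hμ₀ : 0 < P.μ := g.M_pos.trans_le hμ
  have hl_ge : 200 ≤ l * P.e p := by
    have := one_le_mul_of_one_le_of_one_le (one_le_pow₀ (n := 4) g.one_le_M)
      (one_le_pow₀ (n := 2) (by linarith : 1 ≤ 1 + P.μ))
    linarith
  have h_bulk := g.bulk_ge hγ' hc hcM hμ (by linarith : 0 ≤ l * P.e p) (P.conjugated l φ)
  have h_mult := g.conjBox_mul_multiplier_le (l := l) hγ hμ₀ (by linarith) hφ
  have h_const := mul_le_mul_of_nonneg_right (absorption_constant_le g.one_le_M hμ₀.le hl)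
    (by positivity : 0 ≤ P.y p ^ 2 * P.conjugated l φ p ^ 2)
  have h_X := mul_nonneg (by linarith : 0 ≤ 1 / 2 * (l * P.e p) - 2)
    (sq_nonneg (P.X (P.conjugated l φ) p))
  linarith

end CarlemanParams

end PointwiseEstimate

section LowerOrderTerms

lemma abs_sum_coord_div_rr_mul_le (p : Spc) {v : Fin 3 → ℝ} {k : ℝ} (hv : ∀ i, |v i| ≤ k) :
    |∑ i : Fin 3, p.2 i / rr p * v i| ≤ 3 * k := by
  have h_term (i : Fin 3) : |p.2 i / rr p * v i| ≤ k := by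
    rw [abs_mul]
    exact (mul_le_of_le_one_left (abs_nonneg _) (abs_coord_div_rr_le_one p i)).trans (hv i)
  calc |∑ i : Fin 3, p.2 i / rr p * v i| ≤ ∑ i : Fin 3, |p.2 i / rr p * v i| :=
        Finset.abs_sum_le_sum_abs _ _
    _ ≤ ∑ _i : Fin 3, k := Finset.sum_le_sum fun i _ => h_term i
    _ = 3 * k := by simp only [Finset.sum_const, Finset.card_univ, Fintype.card_fin, nsmul_eq_mul,
        Nat.cast_ofNat]

lemma sum_mul_hatom (V : Fin 4 → ℝ) (p : Spc) :
    ∑ α, V α * hatom p α = -V 0 + ∑ i : Fin 3, p.2 i / rr p * V i.succ := by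
  rw [Fin.sum_univ_succ]
  simp only [hatom, Fin.cases_zero, Fin.cases_succ, mul_neg_one]
  exact congrArg _ (Finset.sum_congr rfl fun i _ => mul_comm _ _)

lemma sum_mul_pd (V : Fin 4 → ℝ) (u : Spc → ℝ) (p : Spc) :
    ∑ α, V α * pd α u p = (∑ i : Fin 3, p.2 i / rr p * V i.succ) * (pd 0 u p + dr u p)
      - (∑ α, V α * hatom p α) * pd 0 u p + ∑ i : Fin 3, V i.succ * ang u i p := by
  have h_ang : ∑ i : Fin 3, V i.succ * pd i.succ u p
      = (∑ i : Fin 3, p.2 i / rr p * V i.succ) * dr u p + ∑ i : Fin 3, V i.succ * ang u i p := by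
    rw [Finset.sum_mul, ← Finset.sum_add_distrib]
    exact Finset.sum_congr rfl fun i _ => by rw [ang]; ring
  rw [sum_mul_hatom, Fin.sum_univ_succ, h_ang]
  ring

namespace CarlemanParams

variable {P : CarlemanParams} {M l : ℝ} {p : Spc}

lemma sum_mul_dF (V : Fin 4 → ℝ) :
    ∑ α, V α * P.dF α p
      = (∑ i : Fin 3, p.2 i / rr p * V i.succ) * (rr p * (P.T p)⁻¹ + P.f p)
        - (∑ α, V α * hatom p α) * P.f p := by
  have h_A (i : Fin 3) : V i.succ * P.A i p = p.2 i / rr p * V i.succ * (rr p * (P.T p)⁻¹) := by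
    by_cases hr : rr p = 0
    · have hp : p.2 = 0 := norm_eq_zero.1 hr
      rw [A, hp]
      simp only [PiLp.zero_apply, zero_mul, mul_zero, zero_div]
    · rw [A]
      field_simp
  rw [sum_mul_hatom, Fin.sum_univ_succ]
  simp only [dF, Fin.cases_zero, Fin.cases_succ, h_A, ← Finset.sum_mul]
  ring

lemma GeometryBounds.sq_pd_zero_add_dr_le (g : P.GeometryBounds M p) (u : Spc → ℝ) :
    (pd 0 u p + dr u p) ^ 2
      ≤ M ^ 2 * (2 * P.X u p ^ 2 + 2 * (M ^ 2 * P.y p ^ 2 * pd 0 u p ^ 2)) := by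
  have h_id : rr p * (P.T p)⁻¹ * (pd 0 u p + dr u p)
      = P.X u p + (rr p * (P.T p)⁻¹ + P.f p) * pd 0 u p := by
    rw [P.X_eq u g.rr_ne_zero]
    ring
  have h_sq : (rr p * (P.T p)⁻¹ + P.f p) ^ 2 * pd 0 u p ^ 2 ≤ (M * P.y p) ^ 2 * pd 0 u p ^ 2 :=
    mul_le_mul_of_nonneg_right (sq_le_sq.2 (g.abs_rr_add_f_le.trans (le_abs_self _))) (sq_nonneg _)
  refine (g.le_sq_mul_rr_sq_mul (sq_nonneg _)).trans (mul_le_mul_of_nonneg_left ?_ (sq_nonneg M))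
  rw [← mul_pow, h_id]
  linarith [sq_nonneg (P.X u p - (rr p * (P.T p)⁻¹ + P.f p) * pd 0 u p)]

variable {K W : ℝ} {V : Fin 4 → ℝ}

lemma GeometryBounds.nonneg_of_abs_le (g : P.GeometryBounds M p) {z : ℝ}
    (hz : |z| ≤ K * (P.T p)⁻¹) : 0 ≤ K :=
  nonneg_of_mul_nonneg_left ((abs_nonneg z).trans hz) g.inv_T_pos

lemma GeometryBounds.sq_radial_term_le (g : P.GeometryBounds M p)
    (hV : ∀ α, |V α| ≤ K * (P.T p)⁻¹) (u : Spc → ℝ) :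
    ((∑ i : Fin 3, p.2 i / rr p * V i.succ) * (pd 0 u p + dr u p)) ^ 2
      ≤ 18 * K ^ 2 * M ^ 6 * (P.X u p ^ 2 + P.y p * (P.T p)⁻¹ * pd 0 u p ^ 2) := by
  have hM := g.M_pos
  have hτ := g.inv_T_pos
  have hτM := g.inv_T_le
  have hy := g.y_pos
  have hy₁ := g.y_le_one
  have h_V : (∑ i : Fin 3, p.2 i / rr p * V i.succ) ^ 2 ≤ (3 * (K * (P.T p)⁻¹)) ^ 2 :=
    sq_le_sq.2 ((abs_sum_coord_div_rr_mul_le p fun i => hV i.succ).trans (le_abs_self _))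
  have h_dr := g.sq_pd_zero_add_dr_le u
  have hM₄ : M ^ 4 ≤ M ^ 6 := pow_le_pow_right₀ g.one_le_M (by norm_num)
  have hM₅ : M ^ 5 ≤ M ^ 6 := pow_le_pow_right₀ g.one_le_M (by norm_num)
  generalize (P.T p)⁻¹ = τ, P.y p = y, pd 0 u p = q, P.X u p = X at *
  rw [mul_pow]
  calc _ ≤ (3 * (K * τ)) ^ 2 * (M ^ 2 * (2 * X ^ 2 + 2 * (M ^ 2 * y ^ 2 * q ^ 2))) := by gcongr
    _ = 18 * K ^ 2 * (M ^ 2 * τ ^ 2 * X ^ 2 + M ^ 4 * (τ * y) * (y * τ * q ^ 2)) := by ring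
    _ ≤ 18 * K ^ 2 * (M ^ 2 * M ^ 2 * X ^ 2 + M ^ 4 * (M * 1) * (y * τ * q ^ 2)) := by gcongr
    _ = 18 * K ^ 2 * (M ^ 4 * X ^ 2 + M ^ 5 * (y * τ * q ^ 2)) := by ring
    _ ≤ 18 * K ^ 2 * (M ^ 6 * X ^ 2 + M ^ 6 * (y * τ * q ^ 2)) := by gcongr
    _ = 18 * K ^ 2 * M ^ 6 * (X ^ 2 + y * τ * q ^ 2) := by ring

lemma sq_angular_term_le {k : ℝ} (hV : ∀ α, |V α| ≤ k) (u : Spc → ℝ) (p : Spc) :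
    (∑ i : Fin 3, V i.succ * ang u i p) ^ 2 ≤ 3 * k ^ 2 * angularSq u p := by
  have hV_sq : ∑ i : Fin 3, V i.succ ^ 2 ≤ ∑ _i : Fin 3, k ^ 2 :=
    Finset.sum_le_sum fun i _ => sq_le_sq.2 ((hV i.succ).trans (le_abs_self k))
  rw [Finset.sum_const, Finset.card_univ, Fintype.card_fin, nsmul_eq_mul, Nat.cast_ofNat] at hV_sq
  exact (Finset.sum_mul_sq_le_sq_mul_sq _ _ _).trans
    (mul_le_mul_of_nonneg_right hV_sq (angularSq_nonneg u p))

lemma GeometryBounds.sq_sum_mul_pd_le (g : P.GeometryBounds M p)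
    (hV : ∀ α, |V α| ≤ K * (P.T p)⁻¹) (hVω : |∑ α, V α * hatom p α| ≤ K * P.y p) (u : Spc → ℝ) :
    (∑ α, V α * pd α u p) ^ 2 ≤ 57 * K ^ 2 * M ^ 6 * (P.X u p ^ 2
      + P.y p * (P.T p)⁻¹ * pd 0 u p ^ 2 + (P.T p)⁻¹ ^ 2 * angularSq u p) := by
  have hy := g.y_pos
  have h_radial := g.sq_radial_term_le hV u
  have h_angular := sq_angular_term_le hV u p
  have h_null : ((∑ α, V α * hatom p α) * pd 0 u p) ^ 2
      ≤ K ^ 2 * (M * (P.y p * (P.T p)⁻¹ * pd 0 u p ^ 2)) :=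
    calc ((∑ α, V α * hatom p α) * pd 0 u p) ^ 2 ≤ (K * P.y p) ^ 2 * pd 0 u p ^ 2 := by
          rw [mul_pow]
          exact mul_le_mul_of_nonneg_right (sq_le_sq.2 (hVω.trans (le_abs_self _))) (sq_nonneg _)
      _ = K ^ 2 * (P.y p * (P.y p * pd 0 u p ^ 2)) := by ring
      _ ≤ K ^ 2 * (M * (P.T p)⁻¹ * (P.y p * pd 0 u p ^ 2)) := by gcongr; exact g.y_le
      _ = _ := by ring
  have h_split (a b c : ℝ) : (a - b + c) ^ 2 ≤ 3 * (a ^ 2 + b ^ 2 + c ^ 2) := by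
    linarith [sq_nonneg (a + b), sq_nonneg (a - c), sq_nonneg (b + c)]
  have hM₁ := mul_le_mul_of_nonneg_right (le_self_pow₀ g.one_le_M (by norm_num : 6 ≠ 0))
    (by have := g.inv_T_pos; positivity : 0 ≤ K ^ 2 * (P.y p * (P.T p)⁻¹ * pd 0 u p ^ 2))
  have hM₀ := mul_le_mul_of_nonneg_right (one_le_pow₀ g.one_le_M (n := 6))
    (mul_nonneg (by positivity : 0 ≤ K ^ 2 * (P.T p)⁻¹ ^ 2) (angularSq_nonneg u p))
  have hX : 0 ≤ K ^ 2 * M ^ 6 * P.X u p ^ 2 := by positivity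
  have hs : 0 ≤ K ^ 2 * (P.T p)⁻¹ ^ 2 * angularSq u p :=
    mul_nonneg (by positivity) (angularSq_nonneg u p)
  rw [sum_mul_pd]
  refine (h_split _ _ _).trans ?_
  linarith

lemma GeometryBounds.abs_sum_mul_dF_le (g : P.GeometryBounds M p)
    (hV : ∀ α, |V α| ≤ K * (P.T p)⁻¹) (hVω : |∑ α, V α * hatom p α| ≤ K * P.y p) :
    |∑ α, V α * P.dF α p| ≤ 4 * K * M ^ 2 * P.y p := by
  have hK := g.nonneg_of_abs_le (hV 0)
  have hM := g.M_pos
  have hy := g.y_pos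
  have h_radial : |(∑ i : Fin 3, p.2 i / rr p * V i.succ) * (rr p * (P.T p)⁻¹ + P.f p)|
      ≤ 3 * (K * M) * (M * P.y p) := by
    rw [abs_mul]
    refine mul_le_mul ((abs_sum_coord_div_rr_mul_le p fun i => hV i.succ).trans ?_)
      g.abs_rr_add_f_le (abs_nonneg _) (by positivity)
    gcongr
    exact g.inv_T_le
  have h_null : |(∑ α, V α * hatom p α) * P.f p| ≤ K * P.y p * M ^ 2 := by
    rw [abs_mul]
    exact mul_le_mul hVω (g.abs_f_le.trans (le_self_pow₀ g.one_le_M two_ne_zero)) (abs_nonneg _)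
      (by positivity)
  rw [sum_mul_dF]
  linarith [abs_sub ((∑ i : Fin 3, p.2 i / rr p * V i.succ) * (rr p * (P.T p)⁻¹ + P.f p))
    ((∑ α, V α * hatom p α) * P.f p)]

lemma GeometryBounds.abs_zeroth_order_le (g : P.GeometryBounds M p) (hl : 1 ≤ l)
    (hV : ∀ α, |V α| ≤ K * (P.T p)⁻¹) (hVω : |∑ α, V α * hatom p α| ≤ K * P.y p)
    (hW : |W| ≤ K * P.y p) :
    |l * ∑ α, V α * P.dF α p + V 0 * (P.T p)⁻¹ - W| ≤ 6 * K * M ^ 2 * (l * P.y p) := by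
  have hK := g.nonneg_of_abs_le (hV 0)
  have hM := g.M_pos
  have hM₁ := g.one_le_M
  have hτ := g.inv_T_pos
  have hy := g.y_pos
  have hl₀ : 0 < l := zero_lt_one.trans_le hl
  have h_dF : |l * ∑ α, V α * P.dF α p| ≤ 4 * (K * M ^ 2 * (l * P.y p)) := by
    rw [abs_mul, abs_of_pos hl₀]
    linarith [mul_le_mul_of_nonneg_left (g.abs_sum_mul_dF_le hV hVω) hl₀.le]
  have h_time : |V 0 * (P.T p)⁻¹| ≤ K * M ^ 2 * (l * P.y p) := by
    rw [abs_mul, abs_of_pos hτ]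
    calc |V 0| * (P.T p)⁻¹ ≤ K * (P.T p)⁻¹ * (P.T p)⁻¹ := by gcongr; exact hV 0
      _ = K * (P.T p)⁻¹ ^ 2 := by ring
      _ ≤ K * (M * P.y p) := by gcongr; exact g.inv_T_sq_le
      _ = K * M * (1 * P.y p) := by ring
      _ ≤ K * M ^ 2 * (l * P.y p) := by gcongr; exact le_self_pow₀ hM₁ two_ne_zero
  have h_W : |W| ≤ K * M ^ 2 * (l * P.y p) :=
    calc |W| ≤ K * 1 * (1 * P.y p) := by linarith
      _ ≤ K * M ^ 2 * (l * P.y p) := by gcongr; exact one_le_pow₀ hM₁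
  linarith [abs_sub (l * ∑ α, V α * P.dF α p + V 0 * (P.T p)⁻¹) W,
    abs_add_le (l * ∑ α, V α * P.dF α p) (V 0 * (P.T p)⁻¹)]

end CarlemanParams

end LowerOrderTerms

section Absorption

namespace CarlemanParams

variable {P : CarlemanParams}

section Cutoff

variable {s : ℝ}

lemma cutoff_eq_one (hk : P.k₁ < P.k₂) (hs : P.k₂ ≤ s) : P.cutoff s = 1 :=
  Real.smoothTransition.one_of_one_le
    ((one_le_div (sub_pos.2 hk)).2 (sub_le_sub_right hs P.k₁))

lemma cutoff_eq_zero (hk : P.k₁ < P.k₂) (hs : s ≤ P.k₁) : P.cutoff s = 0 :=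
  Real.smoothTransition.zero_of_nonpos
    (div_nonpos_of_nonpos_of_nonneg (sub_nonpos.2 hs) (sub_pos.2 hk).le)

lemma deriv_cutoff_eq_zero (hk : P.k₁ < P.k₂) (hs : P.k₂ < s) : deriv P.cutoff s = 0 := by
  have h_one : P.cutoff =ᶠ[𝓝 s] fun _ => (1 : ℝ) := by
    filter_upwards [lt_mem_nhds hs] with t ht using cutoff_eq_one hk ht.le
  rw [h_one.deriv_eq, deriv_const]

lemma deriv_deriv_cutoff_eq_zero (hk : P.k₁ < P.k₂) (hs : P.k₂ < s) :
    deriv (deriv P.cutoff) s = 0 := by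
  have h_zero : deriv P.cutoff =ᶠ[𝓝 s] fun _ => (0 : ℝ) := by
    filter_upwards [lt_mem_nhds hs] with t ht using deriv_cutoff_eq_zero hk ht
  rw [h_zero.deriv_eq, deriv_const]

end Cutoff

variable {M l : ℝ} {p : Spc}

lemma conjugated_eq {φ : Spc → ℝ} (hk : P.k₁ < P.k₂) (hF : P.k₂ ≤ P.F p) :
    P.conjugated l φ p = P.T p * P.G l (P.F p) * φ p := by
  rw [conjugated, weighted, cutoffWeight, cutoff_eq_one hk hF, mul_one, mul_assoc]

lemma mul_pd_eq_pd_conjugated_sub {φ : Spc → ℝ} (hγ : P.γ ≠ 0) (hμ : P.μ ≠ 0) (hT : 0 < P.T p)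
    (hk : P.k₁ < P.k₂) (hF : P.k₂ < P.F p) (hφ : DifferentiableAt ℝ φ p) (α : Fin 4) :
    P.T p * P.G l (P.F p) * pd α φ p = pd α (P.conjugated l φ) p
      - (l * P.e p * P.dF α p + (eVec α).1 * (P.T p)⁻¹) * P.conjugated l φ p := by
  have h_pd := (P.hasPD_weighted hγ hT (P.hasDerivAt_cutoffWeight hμ l) hφ α).2
  rw [conjugated_eq hk hF.le, conjugated, h_pd, cutoffWeight, cutoffWeightDeriv,
    cutoff_eq_one hk hF.le, deriv_cutoff_eq_zero hk hF, e]
  field_simp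
  ring

lemma mul_first_order_eq {φ : Spc → ℝ} (hγ : P.γ ≠ 0) (hμ : P.μ ≠ 0) (hT : 0 < P.T p)
    (hk : P.k₁ < P.k₂) (hF : P.k₂ < P.F p) (hφ : DifferentiableAt ℝ φ p) (V : Fin 4 → ℝ) (W : ℝ) :
    P.T p * P.G l (P.F p) * (∑ α, V α * pd α φ p + W * φ p)
      = ∑ α, V α * pd α (P.conjugated l φ) p
        - (l * P.e p * ∑ α, V α * P.dF α p + V 0 * (P.T p)⁻¹ - W) * P.conjugated l φ p := by
  have h_term (α : Fin 4) : P.T p * P.G l (P.F p) * (V α * pd α φ p)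
      = V α * pd α (P.conjugated l φ) p - l * P.e p * P.conjugated l φ p * (V α * P.dF α p)
        - (P.T p)⁻¹ * P.conjugated l φ p * (V α * (eVec α).1) := by
    rw [mul_left_comm, mul_pd_eq_pd_conjugated_sub hγ hμ hT hk hF hφ]
    ring
  have h_eVec : ∑ α, V α * (eVec α).1 = V 0 := by
    simp only [Fin.sum_univ_succ (n := 3), eVec_zero_fst, eVec_succ_fst, mul_one, mul_zero,
      Finset.sum_const_zero, add_zero]
  rw [mul_add, Finset.mul_sum, Finset.sum_congr rfl fun α _ => h_term α,
    Finset.sum_sub_distrib, Finset.sum_sub_distrib, ← Finset.mul_sum, ← Finset.mul_sum, h_eVec,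
    mul_left_comm, ← conjugated_eq hk hF.le]
  ring

/-- The quadratic form that the Carleman estimate controls from below. -/
def coercive (P : CarlemanParams) (l : ℝ) (u : Spc → ℝ) (p : Spc) : ℝ :=
  P.X u p ^ 2 + P.y p * (P.T p)⁻¹ * pd 0 u p ^ 2 + (P.T p)⁻¹ ^ 2 * angularSq u p
    + (l * P.e p) ^ 2 * P.y p ^ 2 * u p ^ 2

namespace GeometryBounds

lemma gradient_terms_nonneg (g : P.GeometryBounds M p) (u : Spc → ℝ) :
    0 ≤ P.X u p ^ 2 + P.y p * (P.T p)⁻¹ * pd 0 u p ^ 2 + (P.T p)⁻¹ ^ 2 * angularSq u p := by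
  have := g.y_pos
  have := g.inv_T_pos
  have := angularSq_nonneg u p
  positivity

lemma sq_first_order_le (g : P.GeometryBounds M p) (hγ : P.γ ≠ 0) (hμ : P.μ ≠ 0)
    (hk : P.k₁ < P.k₂) (hF : P.k₂ < P.F p) (hl : 1 ≤ l * P.e p) {φ : Spc → ℝ}
    (hφ : DifferentiableAt ℝ φ p) {V : Fin 4 → ℝ} {W K : ℝ} (hV : ∀ α, |V α| ≤ K * (P.T p)⁻¹)
    (hVω : |∑ α, V α * hatom p α| ≤ K * P.y p) (hW : |W| ≤ K * P.y p) :
    (P.T p * P.G l (P.F p) * (∑ α, V α * pd α φ p + W * φ p)) ^ 2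
      ≤ 120 * K ^ 2 * M ^ 6 * P.coercive l (P.conjugated l φ) p := by
  have h_grad := g.sq_sum_mul_pd_le hV hVω (P.conjugated l φ)
  have h_zeroth := sq_le_sq.2 ((g.abs_zeroth_order_le hl hV hVω hW).trans (le_abs_self _))
  have hM : M ^ 4 ≤ M ^ 6 := pow_le_pow_right₀ g.one_le_M (by norm_num)
  have h_pos := g.gradient_terms_nonneg (P.conjugated l φ)
  rw [mul_first_order_eq hγ hμ g.T_pos hk hF hφ, coercive]
  generalize P.conjugated l φ p = w, ∑ α, V α * pd α (P.conjugated l φ) p = D,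
    l * P.e p * ∑ α, V α * P.dF α p + V 0 * (P.T p)⁻¹ - W = B,
    P.X (P.conjugated l φ) p ^ 2 + P.y p * (P.T p)⁻¹ * pd 0 (P.conjugated l φ) p ^ 2
      + (P.T p)⁻¹ ^ 2 * angularSq (P.conjugated l φ) p = Q at *
  calc (D - B * w) ^ 2 ≤ 2 * D ^ 2 + 2 * (B ^ 2 * w ^ 2) := by linarith [sq_nonneg (D + B * w)]
    _ ≤ 2 * (57 * K ^ 2 * M ^ 6 * Q)
        + 2 * ((6 * K * M ^ 2 * (l * P.e p * P.y p)) ^ 2 * w ^ 2) := by gcongr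
    _ = 114 * (K ^ 2 * M ^ 6 * Q)
        + 72 * (K ^ 2 * M ^ 4 * ((l * P.e p) ^ 2 * P.y p ^ 2 * w ^ 2)) := by ring
    _ ≤ 120 * (K ^ 2 * M ^ 6 * Q)
        + 120 * (K ^ 2 * M ^ 6 * ((l * P.e p) ^ 2 * P.y p ^ 2 * w ^ 2)) := by
      gcongr <;> norm_num
    _ = _ := by ring

lemma sq_inv_T_sq_mul_le (g : P.GeometryBounds M p) (hl : 1 ≤ l * P.e p) (u : Spc → ℝ) :
    ((P.T p)⁻¹ ^ 2 * u p) ^ 2 ≤ M ^ 2 * P.coercive l u p := by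
  have hτ : ((P.T p)⁻¹ ^ 2) ^ 2 ≤ (M * P.y p) ^ 2 := by
    have := g.inv_T_sq_le
    gcongr
  calc ((P.T p)⁻¹ ^ 2 * u p) ^ 2 ≤ (M * P.y p) ^ 2 * u p ^ 2 := by
        rw [mul_pow]
        gcongr
    _ = M ^ 2 * (1 ^ 2 * P.y p ^ 2 * u p ^ 2) := by ring
    _ ≤ M ^ 2 * ((l * P.e p) ^ 2 * P.y p ^ 2 * u p ^ 2) := by gcongr
    _ ≤ M ^ 2 * P.coercive l u p :=
      mul_le_mul_of_nonneg_left (le_add_of_nonneg_left (g.gradient_terms_nonneg u)) (sq_nonneg M)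

end GeometryBounds

variable {N : ℕ} {φ : Fin N → Spc → ℝ} {V : Fin N → Fin N → Fin 4 → Spc → ℝ}
  {W : Fin N → Fin N → Spc → ℝ} {I : Fin N}

lemma source_eq_of_boxT_eq_zero (hT : 0 < P.T p) (hk : P.k₁ < P.k₂) (hF : P.k₂ < P.F p)
    (h_eq : boxT V W φ I p = 0) :
    P.source l (φ I) p = -(∑ J, P.T p * P.G l (P.F p) *
        (∑ α, V I J α p * pd α (φ J) p + W I J p * φ J p))
      + 2 * ((P.T p)⁻¹ ^ 2 * P.conjugated l (φ I) p) := by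
  have h_box : box (φ I) p
      = -(∑ J, ∑ α, V I J α p * pd α (φ J) p + ∑ J, W I J p * φ J p) := by
    rw [boxT] at h_eq
    linarith
  rw [← Finset.mul_sum, Finset.sum_add_distrib, source, conjugated_eq hk hF.le,
    cutoff_eq_one hk hF.le, deriv_cutoff_eq_zero hk hF, deriv_deriv_cutoff_eq_zero hk hF, h_box]
  field_simp
  ring

namespace GeometryBounds

lemma sum_source_sq_le (g : P.GeometryBounds M p) (hγ : P.γ ≠ 0) (hμ : P.μ ≠ 0)
    (hk : P.k₁ < P.k₂) (hF : P.k₂ < P.F p) (hl : 1 ≤ l * P.e p)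
    (hφ : ∀ I, DifferentiableAt ℝ (φ I) p) (h_eq : ∀ I, boxT V W φ I p = 0) {K : ℝ}
    (hV : ∀ I J α, |V I J α p| ≤ K * (P.T p)⁻¹)
    (hVω : ∀ I J, |∑ α, V I J α p * hatom p α| ≤ K * P.y p)
    (hW : ∀ I J, |W I J p| ≤ K * P.y p) :
    ∑ I, P.source l (φ I) p ^ 2
      ≤ (240 * N ^ 2 * K ^ 2 * M ^ 6 + 8 * M ^ 2) * ∑ I, P.coercive l (P.conjugated l (φ I)) p := by
  have h_source (I : Fin N) : P.source l (φ I) p ^ 2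
      ≤ 2 * (N * ∑ J, 120 * K ^ 2 * M ^ 6 * P.coercive l (P.conjugated l (φ J)) p)
        + 8 * (M ^ 2 * P.coercive l (P.conjugated l (φ I)) p) := by
    have h_sum := (sq_sum_le_card_mul_sum_sq (s := Finset.univ) (f := fun J =>
      P.T p * P.G l (P.F p) * (∑ α, V I J α p * pd α (φ J) p + W I J p * φ J p))).trans
        (mul_le_mul_of_nonneg_left (Finset.sum_le_sum fun J _ =>
          g.sq_first_order_le hγ hμ hk hF hl (hφ J) (hV I J) (hVω I J) (hW I J))
          (Nat.cast_nonneg _))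
    rw [Finset.card_univ, Fintype.card_fin] at h_sum
    rw [source_eq_of_boxT_eq_zero g.T_pos hk hF (h_eq I)]
    generalize ∑ J, P.T p * P.G l (P.F p) *
      (∑ α, V I J α p * pd α (φ J) p + W I J p * φ J p) = S at h_sum ⊢
    linarith [sq_nonneg (S + 2 * ((P.T p)⁻¹ ^ 2 * P.conjugated l (φ I) p)),
      g.sq_inv_T_sq_mul_le hl (P.conjugated l (φ I))]
  refine (Finset.sum_le_sum fun I _ => h_source I).trans_eq ?_
  rw [Finset.sum_add_distrib, Finset.sum_const, Finset.card_univ, Fintype.card_fin, nsmul_eq_mul,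
    ← Finset.mul_sum, ← Finset.mul_sum, ← Finset.mul_sum]
  ring

lemma mul_coercive_le (g : P.GeometryBounds M p) {C : ℝ} (hl : 1 ≤ l * P.e p)
    (hC : 32 * C ≤ l * P.e p) (hCc : 2 * C ≤ P.c * (l * P.e p)) (u : Spc → ℝ) :
    2 * C / (l * P.e p) * P.coercive l u p + 1 / 8 * (l * P.e p) ^ 2 * P.y p ^ 2 * u p ^ 2
      ≤ 1 / 2 * (l * P.e p) * P.X u p ^ 2 + 1 / 16 * (P.y p * (P.T p)⁻¹) * pd 0 u p ^ 2
        + P.c * (P.T p)⁻¹ ^ 2 * angularSq u p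
        + 1 / 4 * (l * P.e p) ^ 2 * P.y p ^ 2 * u p ^ 2 := by
  have hy := g.y_pos
  have hτ := g.inv_T_pos
  have hs := angularSq_nonneg u p
  have hl₀ : 0 < l * P.e p := zero_lt_one.trans_le hl
  have hk₁₆ : 2 * C / (l * P.e p) ≤ 1 / 16 := by
    rw [div_le_iff₀ hl₀]
    linarith
  have hkc : 2 * C / (l * P.e p) ≤ P.c := (div_le_iff₀ hl₀).2 hCc
  have hkl : 2 * C / (l * P.e p) ≤ 1 / 2 * (l * P.e p) := by linarith
  have hk₈ : 2 * C / (l * P.e p) ≤ 1 / 8 := by linarith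
  rw [coercive]
  linarith [mul_le_mul_of_nonneg_right hkl (sq_nonneg (P.X u p)),
    mul_le_mul_of_nonneg_right hk₁₆ (by positivity : 0 ≤ P.y p * (P.T p)⁻¹ * pd 0 u p ^ 2),
    mul_le_mul_of_nonneg_right hkc (by positivity : 0 ≤ (P.T p)⁻¹ ^ 2 * angularSq u p),
    mul_le_mul_of_nonneg_right hk₈ (by positivity : 0 ≤ (l * P.e p) ^ 2 * P.y p ^ 2 * u p ^ 2)]

lemma sum_conjBox_mul_multiplier_sub_bulk_le (g : P.GeometryBounds M p) (hγ : P.γ ≠ 0)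
    (hγ' : P.γ ≤ 1 / 2) (hc : 0 < P.c) (hcM : P.c * (16 * M ^ 4) ≤ 1) (hμ : M ≤ P.μ)
    (hl : 200 * M ^ 4 * (1 + P.μ) ^ 2 ≤ l * P.e p) (hφ : ∀ I, ContDiffAt ℝ 2 (φ I) p) {C : ℝ}
    (h_source : ∑ I, P.source l (φ I) p ^ 2
      ≤ C * ∑ I, P.coercive l (P.conjugated l (φ I)) p)
    (hl₁ : 1 ≤ l * P.e p) (hC : 32 * C ≤ l * P.e p) (hCc : 2 * C ≤ P.c * (l * P.e p)) :
    ∑ I, (P.conjBox l (P.conjugated l (φ I)) p * P.multiplier (P.conjugated l (φ I)) p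
        - P.bulk l (P.conjugated l (φ I)) p)
      ≤ -(1 / 8 * (l * P.e p) ^ 2 * P.y p ^ 2 * ∑ I, P.conjugated l (φ I) p ^ 2) := by
  have h_point := Finset.sum_le_sum fun I (_ : I ∈ Finset.univ) =>
    g.conjBox_mul_multiplier_sub_bulk_le hγ hγ' hc hcM hμ hl (hφ I)
  have h_absorb := Finset.sum_le_sum fun I (_ : I ∈ Finset.univ) =>
    g.mul_coercive_le hl₁ hC hCc (P.conjugated l (φ I))
  have h_source' : ∑ I, 2 * P.source l (φ I) p ^ 2 / (l * P.e p)
      ≤ 2 * C / (l * P.e p) * ∑ I, P.coercive l (P.conjugated l (φ I)) p := by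
    rw [← Finset.sum_div, ← Finset.mul_sum, div_mul_eq_mul_div, mul_assoc]
    gcongr
  rw [Finset.sum_add_distrib, Finset.sum_neg_distrib] at h_point
  rw [Finset.sum_add_distrib, ← Finset.mul_sum, ← Finset.mul_sum] at h_absorb
  linarith

end GeometryBounds

end CarlemanParams

end Absorption

section DecayEstimates

namespace CarlemanParams

lemma G_pos (P : CarlemanParams) (l s : ℝ) : 0 < P.G l s := exp_pos _

lemma current_zero_eq (P : CarlemanParams) (l : ℝ) (u : Spc → ℝ) {p : Spc} (hr : rr p ≠ 0) :
    P.current l u 0 p = 1 / 2 * (rr p * (P.T p)⁻¹) * ((dr u p + pd 0 u p) ^ 2 + angularSq u p)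
      - 1 / 2 * (rr p * (P.T p)⁻¹ + P.f p) * (∑ i : Fin 3, pd i.succ u p ^ 2 + pd 0 u p ^ 2)
      - P.h p * (u p * pd 0 u p) + 1 / 2 * (P.B l p * (P.f p * u p ^ 2)) := by
  change pd 0 u p * P.X u p - 1 / 2 * (P.f p * lagrangian u p) - P.h p * (u p * pd 0 u p)
    + 1 / 2 * (P.B l p * (P.f p * u p ^ 2)) = _
  rw [lagrangian, sum_pd_sq u hr, P.X_eq u hr]
  ring

variable {P : CarlemanParams} {M S : ℝ} {p : Spc}

lemma abs_cutoff_le_one (s : ℝ) : |P.cutoff s| ≤ 1 := by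
  rw [cutoff, abs_of_nonneg (Real.smoothTransition.nonneg _)]
  exact Real.smoothTransition.le_one _

lemma G_le_G {l s s' : ℝ} (hl : 0 ≤ l) (hμ : 0 < P.μ) (h : s ≤ s') : P.G l s ≤ P.G l s' := by
  unfold G
  gcongr

namespace GeometryBounds

variable (g : P.GeometryBounds M p)
include g

lemma T_mul_y_le : P.T p * P.y p ≤ M := by
  have hT := g.T_pos
  calc P.T p * P.y p ≤ P.T p * (M * (P.T p)⁻¹) := mul_le_mul_of_nonneg_left g.y_le hT.le
    _ = M := by field_simp

lemma one_le_mul_T : 1 ≤ M * P.T p := (inv_le_iff_one_le_mul₀ g.T_pos).1 g.inv_T_le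

lemma n_nonneg : 0 ≤ P.n p := g.y_pos.le.trans g.y_le_n

lemma abs_dF_le (α : Fin 4) : |P.dF α p| ≤ M := by
  refine Fin.cases g.abs_f_le (fun i => ?_) α
  change |p.2 i * (P.T p)⁻¹| ≤ M
  rw [abs_mul, abs_of_pos g.inv_T_pos]
  exact (mul_le_mul_of_nonneg_right (PiLp.norm_apply_le p.2 i) g.inv_T_pos.le).trans g.rr_le

section Unknown

variable {φ : Spc → ℝ}

lemma T_mul_abs_X_le (hd : ∀ α, |pd α φ p| ≤ S) (hL : |dt φ p + dr φ p| ≤ (P.T p)⁻¹ * S) :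
    P.T p * |P.X φ p| ≤ (M + 3 * M ^ 2) * S := by
  have hM := g.M_pos
  have hT := g.T_pos
  have hy := g.y_pos
  have hS : 0 ≤ S := (abs_nonneg _).trans (hd 0)
  have h_eq : P.X φ p
      = -P.f p * (dt φ p + dr φ p) + (rr p * (P.T p)⁻¹ + P.f p) * dr φ p := by
    rw [P.X_eq φ g.rr_ne_zero, dt]
    ring
  have h_dr : |dr φ p| ≤ 3 * S := abs_sum_coord_div_rr_mul_le p fun i => hd i.succ
  have h_X : |P.X φ p| ≤ M * ((P.T p)⁻¹ * S) + M * P.y p * (3 * S) := by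
    rw [h_eq]
    refine (abs_add_le _ _).trans ?_
    rw [abs_mul, abs_mul, abs_neg]
    exact add_le_add (mul_le_mul g.abs_f_le hL (abs_nonneg _) hM.le)
      (mul_le_mul g.abs_rr_add_f_le h_dr (abs_nonneg _) (by positivity))
  calc P.T p * |P.X φ p| ≤ P.T p * (M * ((P.T p)⁻¹ * S) + M * P.y p * (3 * S)) := by gcongr
    _ = M * S + 3 * M * (P.T p * P.y p) * S := by field_simp
    _ ≤ M * S + 3 * M * M * S := by
        have := g.T_mul_y_le
        gcongr
    _ = (M + 3 * M ^ 2) * S := by ring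

lemma abs_conjugated_le {l C : ℝ} (hφ : |φ p| ≤ S) (hm : |P.cutoffWeight l (P.F p)| ≤ C) :
    |P.conjugated l φ p| ≤ C * (P.T p * S) := by
  have hT := g.T_pos
  have hC : 0 ≤ C := (abs_nonneg _).trans hm
  rw [conjugated, weighted, abs_mul, abs_mul, abs_of_pos hT]
  calc P.T p * (|P.cutoffWeight l (P.F p)| * |φ p|) ≤ P.T p * (C * S) := by gcongr
    _ = C * (P.T p * S) := by ring

lemma abs_pd_conjugated_le {l C : ℝ} (hγ : P.γ ≠ 0) (hμ : P.μ ≠ 0) (h_diff : DifferentiableAt ℝ φ p)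
    (hφ : |φ p| ≤ S) (hd : ∀ α, |pd α φ p| ≤ S) (hm : |P.cutoffWeight l (P.F p)| ≤ C)
    (hm' : |P.cutoffWeightDeriv l (P.F p)| ≤ C) (α : Fin 4) :
    |pd α (P.conjugated l φ) p| ≤ C * (1 + 2 * M) * (P.T p * S) := by
  have hT := g.T_pos
  have hM := g.M_pos
  have : 0 ≤ S := (abs_nonneg _).trans hφ
  have hC : 0 ≤ C := (abs_nonneg _).trans hm
  have h_dF := g.abs_dF_le α
  have h_one : |(eVec α).1| ≤ M * P.T p := by
    refine le_trans ?_ g.one_le_mul_T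
    refine Fin.cases ?_ (fun i => ?_) α
    · rw [eVec_zero_fst, abs_one]
    · rw [eVec_succ_fst, abs_zero]
      exact zero_le_one
  rw [conjugated, (P.hasPD_weighted hγ hT (P.hasDerivAt_cutoffWeight hμ l) h_diff α).2]
  refine (abs_add_three _ _ _).trans ?_
  simp only [abs_mul, abs_of_pos hT]
  have := hd α
  calc _ ≤ P.T p * (C * S) + M * P.T p * (C * S) + P.T p * (C * (M * S)) := by gcongr
    _ = C * (1 + 2 * M) * (P.T p * S) := by ring

end Unknown

section Source

variable {N : ℕ} {K E l : ℝ} {φ : Fin N → Spc → ℝ} {V : Fin N → Fin N → Fin 4 → Spc → ℝ}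
  {W : Fin N → Fin N → Spc → ℝ} {I : Fin N}

lemma T_mul_abs_box_le (h_eq : boxT V W φ I p = 0) (hK : 0 ≤ K)
    (hV : ∀ J α, |V I J α p| ≤ K * (P.T p)⁻¹) (hW : ∀ J, |W I J p| ≤ K * P.y p)
    (hφ : ∀ J, |φ J p| ≤ S) (hd : ∀ J α, |pd α (φ J) p| ≤ S) :
    P.T p * |box (φ I) p| ≤ N * K * (4 + M) * S := by
  have hT := g.T_pos
  have hy := g.y_pos
  have hS : 0 ≤ S := (abs_nonneg _).trans (hφ I)
  have h_box : box (φ I) p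
      = -∑ J, (∑ α, V I J α p * pd α (φ J) p + W I J p * φ J p) := by
    rw [boxT] at h_eq
    rw [Finset.sum_add_distrib]
    linarith
  have h_first (J : Fin N) : |∑ α, V I J α p * pd α (φ J) p| ≤ 4 * (K * (P.T p)⁻¹ * S) := by
    refine (Finset.abs_sum_le_sum_abs _ _).trans ((Finset.sum_le_card_nsmul _ _
      (K * (P.T p)⁻¹ * S) fun α _ => ?_).trans_eq ?_)
    · rw [abs_mul]
      exact mul_le_mul (hV J α) (hd J α) (abs_nonneg _) (by positivity)
    · rw [Finset.card_univ, Fintype.card_fin, nsmul_eq_mul, Nat.cast_ofNat]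
  have h_zeroth (J : Fin N) : |W I J p * φ J p| ≤ K * P.y p * S := by
    rw [abs_mul]
    exact mul_le_mul (hW J) (hφ J) (abs_nonneg _) (by positivity)
  have h_sum : |box (φ I) p| ≤ N * (4 * (K * (P.T p)⁻¹ * S) + K * P.y p * S) := by
    rw [h_box, abs_neg]
    refine (Finset.abs_sum_le_sum_abs _ _).trans ((Finset.sum_le_card_nsmul _ _ _ fun J _ =>
      (abs_add_le _ _).trans (add_le_add (h_first J) (h_zeroth J))).trans_eq ?_)
    rw [Finset.card_univ, Fintype.card_fin, nsmul_eq_mul]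
  calc P.T p * |box (φ I) p| ≤ P.T p * (N * (4 * (K * (P.T p)⁻¹ * S) + K * P.y p * S)) := by gcongr
    _ = N * (4 * K * S + K * (P.T p * P.y p) * S) := by field_simp
    _ ≤ N * (4 * K * S + K * M * S) := by
        have := g.T_mul_y_le
        gcongr
    _ = N * K * (4 + M) * S := by ring

lemma abs_T_mul_box_add_le (h_eq : boxT V W φ I p = 0) (hK : 0 ≤ K)
    (hV : ∀ J α, |V I J α p| ≤ K * (P.T p)⁻¹) (hW : ∀ J, |W I J p| ≤ K * P.y p)
    (hφ : ∀ J, |φ J p| ≤ S) (hd : ∀ J α, |pd α (φ J) p| ≤ S) :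
    |P.T p * box (φ I) p + 2 * φ I p / P.T p| ≤ (N * K * (4 + M) + 2 * M) * S := by
  have hT := g.T_pos
  have h_box := g.T_mul_abs_box_le h_eq hK hV hW hφ hd
  have h_div : 2 * |φ I p| * (P.T p)⁻¹ ≤ 2 * S * M :=
    mul_le_mul (mul_le_mul_of_nonneg_left (hφ I) zero_le_two) g.inv_T_le g.inv_T_pos.le
      (mul_nonneg zero_le_two ((abs_nonneg _).trans (hφ I)))
  refine (abs_add_le _ _).trans ?_
  rw [abs_mul, abs_of_pos hT, abs_div, abs_mul, abs_two, abs_of_pos hT, div_eq_mul_inv]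
  linarith

lemma abs_T_mul_cutoff_terms_le {u : Spc → ℝ} (hu : |u p| ≤ S) (hE : |deriv P.cutoff (P.F p)| ≤ E)
    (hE' : |deriv (deriv P.cutoff) (P.F p)| ≤ E) :
    |P.T p * u p * (deriv (deriv P.cutoff) (P.F p) * P.n p + deriv P.cutoff (P.F p) * P.boxF p)|
      ≤ E * (M ^ 2 + M) * S := by
  have hT := g.T_pos
  have hM := g.M_pos
  have hS : 0 ≤ S := (abs_nonneg _).trans hu
  have hE₀ : 0 ≤ E := (abs_nonneg _).trans hE
  have h_bracket : |deriv (deriv P.cutoff) (P.F p) * P.n p + deriv P.cutoff (P.F p) * P.boxF p|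
      ≤ E * (M * P.y p) + E * (M * (P.T p)⁻¹) := by
    refine (abs_add_le _ _).trans ?_
    rw [abs_mul, abs_mul, abs_of_nonneg g.n_nonneg]
    exact add_le_add (mul_le_mul hE' g.n_le g.n_nonneg hE₀)
      (mul_le_mul hE g.abs_boxF_le (abs_nonneg _) hE₀)
  rw [abs_mul, abs_mul, abs_of_pos hT]
  calc _ ≤ P.T p * S * (E * (M * P.y p) + E * (M * (P.T p)⁻¹)) := by gcongr
    _ = E * M * S * (P.T p * P.y p) + E * M * S := by field_simp
    _ ≤ E * M * S * M + E * M * S := by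
        have := g.T_mul_y_le
        gcongr
    _ = E * (M ^ 2 + M) * S := by ring

lemma abs_source_le (h_eq : boxT V W φ I p = 0) (hK : 0 ≤ K)
    (hV : ∀ J α, |V I J α p| ≤ K * (P.T p)⁻¹) (hW : ∀ J, |W I J p| ≤ K * P.y p)
    (hφ : ∀ J, |φ J p| ≤ S) (hd : ∀ J α, |pd α (φ J) p| ≤ S)
    (hL : |dt (φ I) p + dr (φ I) p| ≤ (P.T p)⁻¹ * S) (hl : 0 ≤ l) (hμ : 0 < P.μ)
    (hF : P.F p ≤ P.k₂) (hE : |deriv P.cutoff (P.F p)| ≤ E)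
    (hE' : |deriv (deriv P.cutoff) (P.F p)| ≤ E) :
    |P.source l (φ I) p| ≤ P.G l P.k₂ * ((N * K * (4 + M) + 2 * M
      + 2 * E * (M + 3 * M ^ 2) + E * (M ^ 2 + M)) * S) := by
  have hT := g.T_pos
  have hE₀ : 0 ≤ E := (abs_nonneg _).trans hE
  have h_main : |P.cutoff (P.F p) * (P.T p * box (φ I) p + 2 * φ I p / P.T p)|
      ≤ (N * K * (4 + M) + 2 * M) * S := by
    rw [abs_mul]
    exact (mul_le_of_le_one_left (abs_nonneg _) (abs_cutoff_le_one _)).trans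
      (g.abs_T_mul_box_add_le h_eq hK hV hW hφ hd)
  have h_X : |2 * P.T p * deriv P.cutoff (P.F p) * P.X (φ I) p|
      ≤ 2 * E * ((M + 3 * M ^ 2) * S) := by
    rw [abs_mul, abs_mul, abs_mul, abs_two, abs_of_pos hT]
    calc 2 * P.T p * |deriv P.cutoff (P.F p)| * |P.X (φ I) p|
        = 2 * |deriv P.cutoff (P.F p)| * (P.T p * |P.X (φ I) p|) := by ring
      _ ≤ 2 * E * ((M + 3 * M ^ 2) * S) :=
          mul_le_mul (mul_le_mul_of_nonneg_left hE zero_le_two) (g.T_mul_abs_X_le (hd I) hL)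
            (mul_nonneg hT.le (abs_nonneg _)) (mul_nonneg zero_le_two hE₀)
  have h_cutoff := g.abs_T_mul_cutoff_terms_le (hφ I) hE hE'
  rw [source, abs_mul, abs_of_pos (P.G_pos _ _)]
  refine mul_le_mul (G_le_G hl hμ hF) ?_ (abs_nonneg _) (P.G_pos _ _).le
  refine (abs_add_three _ _ _).trans ?_
  linarith

end Source

section TimeFlux

variable {U E l : ℝ} {u : Spc → ℝ}

lemma abs_B_mul_f_le (he : P.e p ≤ E) : |P.B l p * P.f p| ≤ l ^ 2 * E ^ 2 * M ^ 2 * P.y p := by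
  have he₀ : 0 ≤ P.e p := (exp_pos _).le
  have hM := g.M_pos
  have hy := g.y_pos
  have h_en : P.e p ^ 2 * P.n p ≤ E ^ 2 * (M * P.y p) :=
    mul_le_mul (pow_le_pow_left₀ he₀ he 2) g.n_le g.n_nonneg (sq_nonneg _)
  have h_en₀ : 0 ≤ P.e p ^ 2 * P.n p := mul_nonneg (sq_nonneg _) g.n_nonneg
  rw [B, abs_mul, abs_of_nonneg (by positivity)]
  calc l ^ 2 * (P.e p ^ 2 * P.n p) * |P.f p| ≤ l ^ 2 * (E ^ 2 * (M * P.y p)) * M := by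
        gcongr
        exact g.abs_f_le
    _ = l ^ 2 * E ^ 2 * M ^ 2 * P.y p := by ring

lemma current_zero_ge (hu : |u p| ≤ U) (hd : ∀ α, |pd α u p| ≤ U) (he : P.e p ≤ E) :
    -((2 * M + M ^ 2 + 1 / 2 * l ^ 2 * E ^ 2 * M ^ 2) * P.y p * U ^ 2) ≤ P.current l u 0 p := by
  have hM := g.M_pos
  have hy := g.y_pos
  have hU : 0 ≤ U := (abs_nonneg _).trans hu
  have h_sq (α : Fin 4) : pd α u p ^ 2 ≤ U ^ 2 := sq_le_sq' (neg_le_of_abs_le (hd α))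
    (le_of_abs_le (hd α))
  have h_grad : ∑ i : Fin 3, pd i.succ u p ^ 2 + pd 0 u p ^ 2 ≤ 4 * U ^ 2 := by
    rw [Fin.sum_univ_three]
    linarith [h_sq 0, h_sq (Fin.succ 0), h_sq (Fin.succ 1), h_sq (Fin.succ 2)]
  have h_bad : (rr p * (P.T p)⁻¹ + P.f p) * (∑ i : Fin 3, pd i.succ u p ^ 2 + pd 0 u p ^ 2)
      ≤ M * P.y p * (4 * U ^ 2) :=
    mul_le_mul (le_of_abs_le g.abs_rr_add_f_le) h_grad
      (add_nonneg (Finset.sum_nonneg fun _ _ => sq_nonneg _) (sq_nonneg _)) (by positivity)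
  have h_cross : |P.h p * (u p * pd 0 u p)| ≤ M ^ 2 * P.y p * (U * U) := by
    rw [abs_mul, abs_mul]
    exact mul_le_mul g.abs_h_le_y (mul_le_mul hu (hd 0) (abs_nonneg _) hU)
      (by positivity) (by positivity)
  have h_zeroth : |P.B l p * P.f p * u p ^ 2| ≤ l ^ 2 * E ^ 2 * M ^ 2 * P.y p * U ^ 2 := by
    rw [abs_mul, abs_of_nonneg (sq_nonneg (u p))]
    exact mul_le_mul (g.abs_B_mul_f_le he) (sq_le_sq' (neg_le_of_abs_le hu) (le_of_abs_le hu))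
      (sq_nonneg _) (by positivity)
  have h_good : 0 ≤ 1 / 2 * (rr p * (P.T p)⁻¹) * ((dr u p + pd 0 u p) ^ 2 + angularSq u p) := by
    have hr : 0 ≤ rr p := norm_nonneg _
    have := g.inv_T_pos
    have := angularSq_nonneg u p
    positivity
  rw [P.current_zero_eq l u g.rr_ne_zero]
  linarith [le_of_abs_le h_cross, neg_le_of_abs_le h_zeroth]

end TimeFlux

end GeometryBounds

end CarlemanParams

end DecayEstimates

section Domain

lemma mem_DD_iff {R₁ R₂ : ℝ} {p : Spc} :
    p ∈ DD R₁ R₂ ↔ 0 < p.1 ∧ 0 < rr p ^ 2 - p.1 ^ 2 - 2 * p.1 * R₂ - R₁ ^ 2 := by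
  refine and_congr_right fun _ => ?_
  rw [← sub_pos]
  ring_nf

lemma continuous_rr : Continuous rr := continuous_snd.norm

lemma isOpen_DD (R₁ R₂ : ℝ) : IsOpen (DD R₁ R₂) := by
  have hr := continuous_rr
  exact (isOpen_lt continuous_const continuous_fst).inter
    (isOpen_lt (g := fun p : Spc => (rr p - p.1 - R₂) * (rr p + p.1 + R₂)) continuous_const
      (by fun_prop))

namespace CarlemanParams

/-- The time before which no point of the domain has both `F ≥ k₁` and `r - t ≤ R₁`. -/
def minTime (P : CarlemanParams) (R₁ R₂ : ℝ) : ℝ := P.σ * (P.k₁ - R₂) / (R₁ - P.σ - R₂)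

/-- The closed set in which the localized unknown is supported. -/
def supportSet (P : CarlemanParams) (R₁ R₂ : ℝ) : Set Spc :=
  {p | P.minTime R₁ R₂ ≤ p.1 ∧ P.k₁ ≤ P.F p ∧ rr p - p.1 ≤ R₁}

variable {P : CarlemanParams} {R₁ R₂ : ℝ} {p : Spc}

lemma hyperboloid_eq (hd : P.d = R₁ ^ 2 - P.σ ^ 2 - 2 * P.σ * R₂) (hT : 0 < P.T p) :
    rr p ^ 2 - p.1 ^ 2 - 2 * p.1 * R₂ - R₁ ^ 2 = 2 * P.T p * (P.a p - R₂) + 2 * P.σ * p.1 := by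
  rw [P.rr_sq_eq hT, hd, T]
  ring

namespace Admissible

variable (H : P.Admissible R₁ R₂)
include H

lemma T_pos_of_time_pos (ht : 0 < p.1) : 0 < P.T p := add_pos ht H.σ_pos

lemma F_le_a (hT : 0 < P.T p) : P.F p ≤ P.a p :=
  sub_le_self _ (mul_pos (div_pos H.ε_pos H.γ_pos) (rpow_pos_of_pos hT _)).le

lemma mem_DD (hk : R₂ < P.k₁) (ht : 0 < p.1) (hF : P.k₁ ≤ P.F p) : p ∈ DD R₁ R₂ := by
  have hT := H.T_pos_of_time_pos ht
  have ha : 0 < P.a p - R₂ := sub_pos.2 (hk.trans_le (hF.trans (H.F_le_a hT)))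
  have hσ := H.σ_pos
  refine mem_DD_iff.2 ⟨ht, ?_⟩
  rw [hyperboloid_eq H.d_eq hT]
  positivity

lemma σ_mul_gap_le (ht : 0 < p.1) (hr : rr p - p.1 ≤ R₁) :
    P.σ * (R₁ - P.σ - R₂) ≤ P.T p * (R₁ - P.σ - P.a p) := by
  have hT := H.T_pos_of_time_pos ht
  have h_sq : rr p ^ 2 ≤ (P.T p - P.σ + R₁) ^ 2 := by
    refine pow_le_pow_left₀ (norm_nonneg _) ?_ 2
    change rr p ≤ p.1 + P.σ - P.σ + R₁
    linarith
  rw [P.rr_sq_eq hT, H.d_eq] at h_sq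
  linarith

lemma a_le (ht : 0 < p.1) (hr : rr p - p.1 ≤ R₁) : P.a p ≤ R₁ - P.σ := by
  have h_gap : 0 < P.σ * (R₁ - P.σ - R₂) := mul_pos H.σ_pos (by linarith [H.σ_lt])
  exact (sub_pos.1 (pos_of_mul_pos_right (h_gap.trans_le (H.σ_mul_gap_le ht hr))
    (H.T_pos_of_time_pos ht).le)).le

lemma minTime_le (hk : R₂ < P.k₁) (ht : 0 < p.1) (hr : rr p - p.1 ≤ R₁) (hF : P.k₁ ≤ P.F p) :
    P.minTime R₁ R₂ ≤ p.1 := by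
  have hT := H.T_pos_of_time_pos ht
  have h_gap := H.σ_mul_gap_le ht hr
  have h_mono : P.T p * (R₁ - P.σ - P.a p) ≤ P.T p * (R₁ - P.σ - P.k₁) :=
    mul_le_mul_of_nonneg_left (by linarith [H.F_le_a hT]) hT.le
  have h_pos : 0 < p.1 * (P.k₁ - R₂) := mul_pos ht (sub_pos.2 hk)
  rw [minTime, div_le_iff₀ (by linarith [H.σ_lt])]
  rw [T] at h_gap h_mono
  linarith

lemma minTime_pos (hk : R₂ < P.k₁) : 0 < P.minTime R₁ R₂ :=
  div_pos (mul_pos H.σ_pos (sub_pos.2 hk)) (by linarith [H.σ_lt])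

lemma F_lt_or_lt_of_notMem (hk : R₂ < P.k₁) (ht : 0 < p.1) (hp : p ∉ P.supportSet R₁ R₂) :
    P.F p < P.k₁ ∨ R₁ < rr p - p.1 := by
  by_contra! hc
  exact hp ⟨H.minTime_le hk ht hc.2 hc.1, hc⟩

lemma T_add_le_rr (hT : 0 < P.T p) (ha : R₂ ≤ P.a p) : P.T p + R₂ ≤ rr p := by
  by_contra! h_lt
  have h_sq : rr p ^ 2 < (P.T p + R₂) ^ 2 := pow_lt_pow_left₀ h_lt (norm_nonneg _) two_ne_zero
  have h_a : 0 ≤ P.T p * (P.a p - R₂) := mul_nonneg hT.le (sub_nonneg.2 ha)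
  have h_R : 0 < (R₁ - (P.σ + R₂)) * (R₁ + (P.σ + R₂)) :=
    mul_pos (by linarith [H.σ_lt]) (by linarith [H.neg_lt, H.σ_pos])
  rw [P.rr_sq_eq hT, H.d_eq] at h_sq
  linarith

lemma time_pos (hk : R₂ < P.k₁) (hp : p ∈ P.supportSet R₁ R₂) : 0 < p.1 :=
  (H.minTime_pos hk).trans_le hp.1

lemma supportSet_subset_region (hk : R₂ < P.k₁) : P.supportSet R₁ R₂ ⊆ P.region R₁ R₂ := by
  intro p hp
  have ht := H.time_pos hk hp
  have hT := H.T_pos_of_time_pos ht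
  have ha : R₂ ≤ P.a p := hk.le.trans (hp.2.1.trans (H.F_le_a hT))
  refine ⟨ht.le, ⟨ha, H.a_le ht hp.2.2⟩, abs_le.2 ⟨?_, ?_⟩⟩
  · linarith [H.T_add_le_rr hT ha, H.neg_lt]
  · rw [T]
    linarith [hp.2.2, H.σ_pos]

lemma supportSet_subset_DD (hk : R₂ < P.k₁) : P.supportSet R₁ R₂ ⊆ DD R₁ R₂ :=
  fun _ hp => H.mem_DD hk (H.time_pos hk hp) hp.2.1

lemma isClosed_supportSet (hk : R₂ < P.k₁) : IsClosed (P.supportSet R₁ R₂) := by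
  have h_time : IsClosed {p : Spc | P.minTime R₁ R₂ ≤ p.1} :=
    isClosed_le continuous_const continuous_fst
  have h_cont : ContinuousOn P.F {p : Spc | P.minTime R₁ R₂ ≤ p.1} := fun p hp =>
    (P.contDiffAt_F (H.T_pos_of_time_pos
      ((H.minTime_pos hk).trans_le hp))).continuousAt.continuousWithinAt
  have h_cone : IsClosed {p : Spc | rr p - p.1 ≤ R₁} :=
    isClosed_le (continuous_rr.sub continuous_fst) continuous_const
  have h_eq : P.supportSet R₁ R₂ = {p : Spc | P.minTime R₁ R₂ ≤ p.1} ∩ P.F ⁻¹' Ici P.k₁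
      ∩ {p : Spc | rr p - p.1 ≤ R₁} := by
    rw [inter_assoc]
    rfl
  rw [h_eq]
  exact (h_cont.preimage_isClosed_of_isClosed h_time isClosed_Ici).inter h_cone

lemma isCompact_supportSet_inter (hk : R₂ < P.k₁) (R : ℝ) :
    IsCompact (P.supportSet R₁ R₂ ∩ {p | p.1 ≤ R}) := by
  refine ((isCompact_Icc (a := 0) (b := R)).prod (isCompact_closedBall
    (0 : EuclideanSpace ℝ (Fin 3)) (R + R₁))).of_isClosed_subset ((H.isClosed_supportSet hk).inter
      (isClosed_le continuous_fst continuous_const)) ?_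
  rintro p ⟨hp, hR : p.1 ≤ R⟩
  have h_cone : ‖p.2‖ - p.1 ≤ R₁ := hp.2.2
  exact ⟨⟨(H.time_pos hk hp).le, hR⟩, mem_closedBall_zero_iff.2 (by linarith)⟩

end Admissible

end CarlemanParams

end Domain

section Integrability

/-- The neighbourhood of half-width `b` of the light cone `t = r`. -/
def coneTube (b : ℝ) : Set Spc := {p | |p.1 - rr p| ≤ b}

lemma indicator_coneTube_mk (b s t : ℝ) (x : EuclideanSpace ℝ (Fin 3)) :
    (coneTube b).indicator (fun p => (1 + rr p) ^ (-s)) (t, x)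
      = (Icc (‖x‖ - b) (‖x‖ + b)).indicator (fun _ => (1 + ‖x‖) ^ (-s)) t := by
  have h_mem : (t, x) ∈ coneTube b ↔ t ∈ Icc (‖x‖ - b) (‖x‖ + b) := by
    change |t - ‖x‖| ≤ b ↔ ‖x‖ - b ≤ t ∧ t ≤ ‖x‖ + b
    rw [abs_sub_le_iff, sub_le_iff_le_add', sub_le_comm]
    exact and_comm
  classical
  simp only [indicator_apply, h_mem]
  rfl

lemma integrable_indicator_coneTube {b s : ℝ} (hs : 3 < s) :
    Integrable ((coneTube b).indicator fun p => (1 + rr p) ^ (-s)) := by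
  have hr := continuous_rr
  have hr₀ (x : EuclideanSpace ℝ (Fin 3)) : 0 < 1 + ‖x‖ := by positivity
  have h_meas : MeasurableSet (coneTube b) :=
    (isClosed_le (continuous_fst.sub hr).abs continuous_const).measurableSet
  have h_cont : Continuous fun p : Spc => (1 + rr p) ^ (-s) :=
    (continuous_const.add hr).rpow_const fun p => Or.inl (hr₀ p.2).ne'
  have h_aesm := (h_cont.stronglyMeasurable.indicator h_meas).aestronglyMeasurable (μ := volume)
  rw [Measure.volume_eq_prod] at h_aesm ⊢
  refine (integrable_prod_iff' h_aesm).2 ⟨ae_of_all _ fun x => ?_, ?_⟩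
  · simp only [indicator_coneTube_mk]
    exact (integrable_indicator_iff measurableSet_Icc).2
      (integrableOn_const measure_Icc_lt_top.ne enorm_ne_top)
  · have h_int (x : EuclideanSpace ℝ (Fin 3)) :
        ∫ t : ℝ, ‖(coneTube b).indicator (fun p => (1 + rr p) ^ (-s)) (t, x)‖
          = volume.real (Icc (-b) b) * (1 + ‖x‖) ^ (-s) := by
      simp only [indicator_coneTube_mk, norm_indicator_eq_indicator_norm,
        norm_of_nonneg (rpow_pos_of_pos (hr₀ x) _).le]
      rw [integral_indicator measurableSet_Icc, setIntegral_const, smul_eq_mul, measureReal_def,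
        measureReal_def, Real.volume_Icc, Real.volume_Icc]
      ring_nf
    simp only [h_int]
    exact (integrable_one_add_norm (by rwa [finrank_euclideanSpace_fin])).const_mul _

lemma CarlemanParams.Admissible.integrable_indicator_T_rpow {P : CarlemanParams} {R₁ R₂ s : ℝ}
    (H : P.Admissible R₁ R₂) (hk : R₂ < P.k₁) (hs : 3 < s) :
    Integrable ((P.supportSet R₁ R₂).indicator fun p => P.T p ^ (-s)) := by
  have hσ := H.σ_pos
  have hR := H.R₁_pos
  have hr (p : Spc) : 0 < 1 + rr p := add_pos_of_pos_of_nonneg one_pos (norm_nonneg _)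
  have h_meas : Measurable P.T := measurable_fst.add_const _
  refine ((integrable_indicator_coneTube (b := R₁ + P.σ) hs).const_mul
    ((1 + (1 + R₁) / P.σ) ^ s)).mono' ((h_meas.pow_const _).indicator
      (H.isClosed_supportSet hk).measurableSet).aestronglyMeasurable (ae_of_all _ fun p => ?_)
  by_cases hp : p ∈ P.supportSet R₁ R₂
  · have h_region := H.supportSet_subset_region hk hp
    have hT := H.T_pos h_region
    obtain ⟨h_ge, h_le⟩ := abs_le.1 h_region.2.2
    have h_tube : p ∈ coneTube (R₁ + P.σ) := by
      change |p.1 - rr p| ≤ R₁ + P.σ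
      rw [T] at h_ge h_le
      exact abs_le.2 ⟨by linarith, by linarith⟩
    have h_lin : 1 + rr p ≤ (1 + (1 + R₁) / P.σ) * P.T p := by
      have h_σ : (1 + R₁) / P.σ * P.σ ≤ (1 + R₁) / P.σ * P.T p :=
        mul_le_mul_of_nonneg_left (σ_le_T h_region) (by positivity)
      rw [div_mul_cancel₀ _ hσ.ne'] at h_σ
      linarith
    rw [indicator_of_mem hp, indicator_of_mem h_tube, norm_of_nonneg (rpow_pos_of_pos hT _).le,
      rpow_neg hT.le, rpow_neg (hr p).le, ← div_eq_mul_inv, inv_eq_one_div,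
      div_le_div_iff₀ (rpow_pos_of_pos hT _) (rpow_pos_of_pos (hr p) _), one_mul,
      ← mul_rpow (by positivity) hT.le]
    exact rpow_le_rpow (hr p).le h_lin (by linarith)
  · rw [indicator_of_notMem hp, norm_zero]
    exact mul_nonneg (by positivity) (indicator_nonneg (fun q _ => (rpow_pos_of_pos (hr q) _).le) _)

end Integrability

section TimeCutoff

/-- The temporal cutoff `χ_R`, equal to `1` for `t ≤ R` and to `0` for `t ≥ 2R`. -/
def timeCutoff (R t : ℝ) : ℝ := smoothTransition (2 - t / R)

lemma contDiff_timeCutoff (R : ℝ) : ContDiff ℝ 1 (timeCutoff R) :=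
  smoothTransition.contDiff.comp (by fun_prop)

lemma timeCutoff_nonneg (R t : ℝ) : 0 ≤ timeCutoff R t := smoothTransition.nonneg _

lemma timeCutoff_le_one (R t : ℝ) : timeCutoff R t ≤ 1 := smoothTransition.le_one _

lemma timeCutoff_eq_one {R t : ℝ} (hR : 0 < R) (h : t ≤ R) : timeCutoff R t = 1 :=
  smoothTransition.one_of_one_le (by linarith [(div_le_one hR).2 h])

lemma timeCutoff_eq_zero {R t : ℝ} (hR : 0 < R) (h : 2 * R ≤ t) : timeCutoff R t = 0 :=
  smoothTransition.zero_of_nonpos (by linarith [(le_div_iff₀ hR).2 h])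

lemma deriv_timeCutoff (R t : ℝ) :
    deriv (timeCutoff R) t = -(deriv smoothTransition (2 - t / R) / R) := by
  have h_inner : HasDerivAt (fun t : ℝ => 2 - t / R) (-(1 / R)) t :=
    ((hasDerivAt_id t).div_const R).const_sub 2
  have h_outer : Differentiable ℝ smoothTransition :=
    (smoothTransition.contDiff (n := 1)).differentiable one_ne_zero
  refine ((h_outer _).hasDerivAt.comp t h_inner).deriv.trans ?_
  ring

lemma deriv_timeCutoff_nonpos {R : ℝ} (hR : 0 < R) (t : ℝ) : deriv (timeCutoff R) t ≤ 0 := by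
  rw [deriv_timeCutoff, neg_nonpos]
  exact div_nonneg smoothTransition.monotone.deriv_nonneg hR.le

lemma deriv_timeCutoff_eq_zero {R t : ℝ} (hR : 0 < R) (h : 2 * R < t) :
    deriv (timeCutoff R) t = 0 := by
  have h_zero : timeCutoff R =ᶠ[𝓝 t] fun _ => 0 := by
    filter_upwards [lt_mem_nhds h] with s hs using timeCutoff_eq_zero hR hs.le
  rw [h_zero.deriv_eq, deriv_const]

lemma exists_neg_deriv_timeCutoff_le :
    ∃ C, 0 ≤ C ∧ ∀ R t : ℝ, 0 < R → 0 ≤ t → -deriv (timeCutoff R) t ≤ C / R := by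
  have h_cont : Continuous (deriv smoothTransition) :=
    (smoothTransition.contDiff (n := 1)).continuous_deriv le_rfl
  obtain ⟨C, hC⟩ := (isCompact_Icc (a := (0 : ℝ)) (b := 2)).exists_bound_of_continuousOn
    h_cont.continuousOn
  have hC₀ : 0 ≤ C := (norm_nonneg _).trans (hC 0 (by simp))
  refine ⟨C, hC₀, fun R t hR ht => ?_⟩
  rcases lt_or_ge (2 * R) t with h | h
  · rw [deriv_timeCutoff_eq_zero hR h, neg_zero]
    positivity
  · have h_mem : 2 - t / R ∈ Icc (0 : ℝ) 2 :=
      ⟨by linarith [(div_le_iff₀ hR).2 h], by linarith [div_nonneg ht hR.le]⟩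
    rw [deriv_timeCutoff, neg_neg]
    gcongr
    exact (le_abs_self _).trans (hC _ h_mem)

end TimeCutoff

section LimitingArgument

lemma mul_measureReal_le_of_integral_eq_zero {X ι : Type*} [MeasurableSpace X] {ν : Measure X}
    {L : Filter ι} [L.NeBot] {B : Set X} (hB : MeasurableSet B) (hBν : ν B ≠ ⊤) {κ A : ℝ}
    {g : ι → X → ℝ} {W : X → ℝ} {δ : ι → ℝ} (hδ : Tendsto δ L (𝓝 0)) (hW : Integrable W ν)
    (hg : ∀ᶠ i in L, Integrable (g i) ν ∧ ∫ x, g i x ∂ν = 0)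
    (h_le : ∀ᶠ i in L, ∀ᵐ x ∂ν, g i x ≤ -(B.indicator (fun _ => κ) x) + (A + δ i) * W x) :
    κ * ν.real B ≤ A * ∫ x, W x ∂ν := by
  have h_lim : Tendsto (fun i => (A + δ i) * ∫ x, W x ∂ν) L (𝓝 (A * ∫ x, W x ∂ν)) := by
    simpa only [add_zero] using (hδ.const_add A).mul_const (∫ x, W x ∂ν)
  refine ge_of_tendsto h_lim ?_
  filter_upwards [hg, h_le] with i hi hi_le
  have h_ind : Integrable (fun x => -(B.indicator (fun _ => κ) x)) ν :=
    ((integrable_indicator_iff hB).2 (integrableOn_const hBν)).neg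
  have h_mono := integral_mono_ae hi.1 (h_ind.add (hW.const_mul (A + δ i))) hi_le
  rw [hi.2, integral_add' h_ind (hW.const_mul _), integral_neg, integral_indicator_const κ hB,
    integral_const_mul, smul_eq_mul] at h_mono
  linarith

lemma tendsto_div_mul_rpow_atTop {γ : ℝ} (C : ℝ) (hγ : 0 < γ) (hγ' : γ ≤ 1) :
    Tendsto (fun R : ℝ => C / R * (2 * R + 1) ^ (1 - γ)) atTop (𝓝 0) := by
  have h_dom : Tendsto (fun R : ℝ => |C| * 3 ^ (1 - γ) * R ^ (-γ)) atTop (𝓝 0) := by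
    simpa only [mul_zero] using (tendsto_rpow_neg_atTop hγ).const_mul (|C| * 3 ^ (1 - γ))
  refine squeeze_zero_norm' ?_ h_dom
  filter_upwards [eventually_ge_atTop 1] with R hR
  have hR₀ : 0 < R := by linarith
  have h_base : (2 * R + 1) ^ (1 - γ) ≤ (3 * R) ^ (1 - γ) :=
    rpow_le_rpow (by linarith) (by linarith) (by linarith)
  rw [norm_mul, norm_div, norm_eq_abs, norm_of_nonneg hR₀.le,
    norm_of_nonneg (rpow_nonneg (by linarith : 0 ≤ 2 * R + 1) _)]
  calc |C| / R * (2 * R + 1) ^ (1 - γ)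
      ≤ |C| / R * (3 * R) ^ (1 - γ) := by gcongr
    _ = |C| / R * (3 ^ (1 - γ) * (R * R ^ (-γ))) := by
        rw [mul_rpow (by norm_num) hR₀.le, sub_eq_add_neg, rpow_add hR₀, rpow_one]
    _ = |C| * 3 ^ (1 - γ) * R ^ (-γ) := by field_simp

end LimitingArgument

section Solution

lemma exists_abs_le_of_mem_Icc {u v : ℝ → ℝ} (hu : Continuous u) (hv : Continuous v) (a b : ℝ) :
    ∃ E, ∀ x ∈ Icc a b, |u x| ≤ E ∧ |v x| ≤ E := by
  obtain ⟨U, hU⟩ := isCompact_Icc.exists_bound_of_continuousOn hu.continuousOn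
  obtain ⟨V, hV⟩ := isCompact_Icc.exists_bound_of_continuousOn hv.continuousOn
  exact ⟨max U V, fun x hx =>
    ⟨(hU x hx).trans (le_max_left _ _), (hV x hx).trans (le_max_right _ _)⟩⟩

namespace CarlemanParams

/-- Admissible parameters for which the geometric bounds hold on the support of the localized
unknown with constant `M`, and whose `c` and `μ` are adjusted to `M`. -/
structure Calibrated (P : CarlemanParams) (R₁ R₂ M : ℝ) : Prop extends P.Admissible R₁ R₂ where
  lt_k₁ : R₂ < P.k₁
  k₁_lt_k₂ : P.k₁ < P.k₂
  c_pos : 0 < P.c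
  c_mul_le : P.c * (16 * M ^ 4) ≤ 1
  one_le_M : 1 ≤ M
  le_μ : M ≤ P.μ
  geometryBounds : ∀ p ∈ P.supportSet R₁ R₂, P.GeometryBounds M p

/-- A solution of `□̃φ = 0` on `DD R₁ R₂` vanishing for `r - t ≥ R₁`, whose coefficients satisfy the
null condition and which decays like `T ^ (-s/2)`, all measured in terms of the parameters `P`. -/
structure DecayingSolution (P : CarlemanParams) (R₁ R₂ K C s : ℝ) {N : ℕ}
    (V : Fin N → Fin N → Fin 4 → Spc → ℝ) (W : Fin N → Fin N → Spc → ℝ)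
    (φ : Fin N → Spc → ℝ) : Prop where
  contDiffAt : ∀ I, ∀ p ∈ DD R₁ R₂, ContDiffAt ℝ 2 (φ I) p
  boxT_eq_zero : ∀ I, ∀ p ∈ DD R₁ R₂, boxT V W φ I p = 0
  eq_zero : ∀ I, ∀ p ∈ DD R₁ R₂, R₁ ≤ rr p - p.1 → φ I p = 0
  K_nonneg : 0 ≤ K
  abs_V_le : ∀ p ∈ DD R₁ R₂, ∀ I J α, |V I J α p| ≤ K * (P.T p)⁻¹
  abs_sum_V_mul_hatom_le : ∀ p ∈ DD R₁ R₂, ∀ I J, |∑ α, V I J α p * hatom p α| ≤ K * P.y p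
  abs_W_le : ∀ p ∈ DD R₁ R₂, ∀ I J, |W I J p| ≤ K * P.y p
  abs_le : ∀ p ∈ DD R₁ R₂, ∀ J, |φ J p| ≤ C * P.T p ^ (-(s / 2))
  abs_pd_le : ∀ p ∈ DD R₁ R₂, ∀ J α, |pd α (φ J) p| ≤ C * P.T p ^ (-(s / 2))
  abs_dt_add_dr_le : ∀ p ∈ DD R₁ R₂, ∀ J,
    |dt (φ J) p + dr (φ J) p| ≤ (P.T p)⁻¹ * (C * P.T p ^ (-(s / 2)))

/-- The sum over the components of the divergences of the currents. -/
def carlemanDensity (P : CarlemanParams) (l : ℝ) {N : ℕ} (φ : Fin N → Spc → ℝ) (p : Spc) : ℝ :=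
  ∑ I, (P.conjBox l (P.conjugated l (φ I)) p * P.multiplier (P.conjugated l (φ I)) p
    - P.bulk l (P.conjugated l (φ I)) p)

/-- The density, free of the parameter `l`, that the Carleman estimate controls. -/
def massDensity (P : CarlemanParams) {N : ℕ} (φ : Fin N → Spc → ℝ) (p : Spc) : ℝ :=
  P.e p ^ 2 * P.y p ^ 2 * P.T p ^ 2 * ∑ I, φ I p ^ 2

/-- The constant `C` in `∑ source² ≤ C ∑ coercive` for `N` components and coefficient bound `K`. -/
def sourceConst (N : ℕ) (K M : ℝ) : ℝ := 240 * N ^ 2 * K ^ 2 * M ^ 6 + 8 * M ^ 2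

/-- The size of `l e` above which all error terms are absorbed. -/
def threshold (P : CarlemanParams) (N : ℕ) (K M : ℝ) : ℝ :=
  200 * M ^ 4 * (1 + P.μ) ^ 2 + 32 * sourceConst N K M + 2 * sourceConst N K M / P.c

variable {P : CarlemanParams} {R₁ R₂ M K C s l : ℝ} {N : ℕ} {p : Spc}
  {V : Fin N → Fin N → Fin 4 → Spc → ℝ} {W : Fin N → Fin N → Spc → ℝ} {φ : Fin N → Spc → ℝ}

lemma sq_mul_rpow_neg_half (hT : 0 ≤ P.T p) (C s : ℝ) :
    (C * P.T p ^ (-(s / 2))) ^ 2 = C ^ 2 * P.T p ^ (-s) := by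
  rw [mul_pow, ← rpow_mul_natCast hT]
  congr 2
  push_cast
  ring

lemma massDensity_nonneg (P : CarlemanParams) (φ : Fin N → Spc → ℝ) (p : Spc) :
    0 ≤ P.massDensity φ p :=
  mul_nonneg (by positivity) (Finset.sum_nonneg fun _ _ => sq_nonneg _)

lemma sourceConst_nonneg (N : ℕ) (K M : ℝ) : 0 ≤ sourceConst N K M := by
  rw [sourceConst]
  positivity

namespace Calibrated

variable (H : P.Calibrated R₁ R₂ M)
include H

lemma μ_pos : 0 < P.μ := (zero_lt_one.trans_le H.one_le_M).trans_le H.le_μ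

lemma bounds_of_threshold_le {x : ℝ} (hx : P.threshold N K M ≤ x) :
    1 ≤ x ∧ 200 * M ^ 4 * (1 + P.μ) ^ 2 ≤ x ∧ 32 * sourceConst N K M ≤ x
      ∧ 2 * sourceConst N K M ≤ P.c * x := by
  have hC := sourceConst_nonneg N K M
  have h_div : 0 ≤ 2 * sourceConst N K M / P.c := div_nonneg (by linarith) H.c_pos.le
  have h_one : 1 ≤ M ^ 4 * (1 + P.μ) ^ 2 :=
    one_le_mul_of_one_le_of_one_le (one_le_pow₀ H.one_le_M)
      (one_le_pow₀ (by linarith [H.μ_pos]))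
  rw [threshold] at hx
  refine ⟨by linarith, by linarith, by linarith, ?_⟩
  rw [← div_le_iff₀' H.c_pos]
  linarith

variable (S : P.DecayingSolution R₁ R₂ K C s V W φ)
include S

lemma carlemanDensity_le_of_lt (hp : p ∈ P.supportSet R₁ R₂) (hl₀ : 0 ≤ l)
    (hl : P.threshold N K M ≤ l * P.e p) (hF : P.k₂ < P.F p) :
    P.carlemanDensity l φ p ≤ -(1 / 8 * l ^ 2 * P.G l P.k₂ ^ 2 * P.massDensity φ p) := by
  have hD := H.supportSet_subset_DD H.lt_k₁ hp
  have g := H.geometryBounds p hp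
  obtain ⟨hl_one, hl_bulk, hl_source, hl_c⟩ := H.bounds_of_threshold_le hl
  have h_source := g.sum_source_sq_le H.γ_pos.ne' H.μ_pos.ne' H.k₁_lt_k₂ hF hl_one
    (fun I => (S.contDiffAt I p hD).differentiableAt two_ne_zero)
    (fun I => S.boxT_eq_zero I p hD) (S.abs_V_le p hD) (S.abs_sum_V_mul_hatom_le p hD)
    (S.abs_W_le p hD)
  have h_carleman := g.sum_conjBox_mul_multiplier_sub_bulk_le H.γ_pos.ne' H.γ_le_half H.c_pos
    H.c_mul_le H.le_μ hl_bulk (fun I => S.contDiffAt I p hD) h_source hl_one hl_source hl_c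
  refine h_carleman.trans (neg_le_neg ?_)
  have h_conj : ∑ I, P.conjugated l (φ I) p ^ 2
      = (P.T p * P.G l (P.F p)) ^ 2 * ∑ I, φ I p ^ 2 := by
    simp only [conjugated_eq H.k₁_lt_k₂ hF.le, mul_pow, Finset.mul_sum]
  have h_weight : P.G l P.k₂ ^ 2 ≤ P.G l (P.F p) ^ 2 :=
    pow_le_pow_left₀ (P.G_pos l _).le (G_le_G hl₀ H.μ_pos hF.le) 2
  calc 1 / 8 * l ^ 2 * P.G l P.k₂ ^ 2 * P.massDensity φ p
      ≤ 1 / 8 * l ^ 2 * P.G l (P.F p) ^ 2 * P.massDensity φ p := by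
        have := P.massDensity_nonneg φ p
        gcongr
    _ = 1 / 8 * (l * P.e p) ^ 2 * P.y p ^ 2 * ∑ I, P.conjugated l (φ I) p ^ 2 := by
        rw [h_conj, massDensity]
        ring

lemma conjBox_mul_multiplier_sub_bulk_le_of_le {E : ℝ} (hp : p ∈ P.supportSet R₁ R₂) (hl₀ : 0 ≤ l)
    (hl : P.threshold N K M ≤ l * P.e p) (hF : P.F p ≤ P.k₂) (hE : |deriv P.cutoff (P.F p)| ≤ E)
    (hE' : |deriv (deriv P.cutoff) (P.F p)| ≤ E) (I : Fin N) :
    P.conjBox l (P.conjugated l (φ I)) p * P.multiplier (P.conjugated l (φ I)) p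
        - P.bulk l (P.conjugated l (φ I)) p
      ≤ P.G l P.k₂ ^ 2 * (2 * (N * K * (4 + M) + 2 * M + 2 * E * (M + 3 * M ^ 2)
        + E * (M ^ 2 + M)) ^ 2 * C ^ 2 * P.T p ^ (-s)) := by
  have hD := H.supportSet_subset_DD H.lt_k₁ hp
  have g := H.geometryBounds p hp
  obtain ⟨hl_one, hl_bulk, -, -⟩ := H.bounds_of_threshold_le hl
  have h_carleman := g.conjBox_mul_multiplier_sub_bulk_le H.γ_pos.ne' H.γ_le_half H.c_pos
    H.c_mul_le H.le_μ hl_bulk (S.contDiffAt I p hD)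
  have h_abs := g.abs_source_le (S.boxT_eq_zero I p hD) S.K_nonneg (S.abs_V_le p hD I)
    (S.abs_W_le p hD I) (S.abs_le p hD) (S.abs_pd_le p hD) (S.abs_dt_add_dr_le p hD I) hl₀
    H.μ_pos hF hE hE'
  have h_source := sq_le_sq' (neg_le_of_abs_le h_abs) (le_of_abs_le h_abs)
  rw [mul_pow, mul_pow, sq_mul_rpow_neg_half g.T_pos.le] at h_source
  have h_div : 2 * P.source l (φ I) p ^ 2 / (l * P.e p) ≤ 2 * P.source l (φ I) p ^ 2 :=
    div_le_self (by positivity) hl_one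
  have h_coercive : 0 ≤ 1 / 2 * (l * P.e p) * P.X (P.conjugated l (φ I)) p ^ 2
      + 1 / 16 * (P.y p * (P.T p)⁻¹) * pd 0 (P.conjugated l (φ I)) p ^ 2
      + P.c * (P.T p)⁻¹ ^ 2 * angularSq (P.conjugated l (φ I)) p
      + 1 / 4 * (l * P.e p) ^ 2 * P.y p ^ 2 * P.conjugated l (φ I) p ^ 2 := by
    have := angularSq_nonneg (P.conjugated l (φ I)) p
    have := g.y_pos
    have := g.inv_T_pos
    have := H.c_pos
    positivity
  linarith

lemma exists_carlemanDensity_le :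
    ∃ A, 0 ≤ A ∧ ∀ l p, 0 ≤ l → p ∈ P.supportSet R₁ R₂ → P.threshold N K M ≤ l * P.e p →
      P.carlemanDensity l φ p ≤ P.G l P.k₂ ^ 2 * A * P.T p ^ (-s) := by
  obtain ⟨E, hE⟩ := exists_abs_le_of_mem_Icc (P.contDiff_cutoff.continuous_deriv one_le_two)
    (P.contDiff_deriv_cutoff.continuous_deriv le_rfl) P.k₁ P.k₂
  refine ⟨N * (2 * (N * K * (4 + M) + 2 * M + 2 * E * (M + 3 * M ^ 2) + E * (M ^ 2 + M)) ^ 2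
    * C ^ 2), by positivity, fun l p hl₀ hp hl => ?_⟩
  have hT := (H.geometryBounds p hp).T_pos
  rcases lt_or_ge P.k₂ (P.F p) with hF | hF
  · have := P.massDensity_nonneg φ p
    exact (H.carlemanDensity_le_of_lt S hp hl₀ hl hF).trans
      ((neg_nonpos.2 (by positivity)).trans (by positivity))
  · obtain ⟨hE, hE'⟩ := hE (P.F p) ⟨hp.2.1, hF⟩
    refine (Finset.sum_le_sum fun I _ =>
      H.conjBox_mul_multiplier_sub_bulk_le_of_le S hp hl₀ hl hF hE hE' I).trans_eq ?_
    rw [Finset.sum_const, Finset.card_univ, Fintype.card_fin, nsmul_eq_mul]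
    ring

end Calibrated

end CarlemanParams

end Solution

section Divergence

namespace CarlemanParams

/-- The sum over the components of the currents. -/
def totalCurrent (P : CarlemanParams) (l : ℝ) {N : ℕ} (φ : Fin N → Spc → ℝ) (α : Fin 4)
    (p : Spc) : ℝ :=
  ∑ I, P.current l (P.conjugated l (φ I)) α p

/-- The divergence of the total current truncated in time. -/
def truncatedDivergence (P : CarlemanParams) (l R : ℝ) {N : ℕ} (φ : Fin N → Spc → ℝ)
    (p : Spc) : ℝ :=
  ∑ α, pd α (fun p => timeCutoff R p.1 * P.totalCurrent l φ α p) p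

variable {P : CarlemanParams} {R₁ R₂ M K C s l : ℝ} {N : ℕ} {p : Spc}
  {V : Fin N → Fin N → Fin 4 → Spc → ℝ} {W : Fin N → Fin N → Spc → ℝ} {φ : Fin N → Spc → ℝ}

lemma current_eq_zero {w : Spc → ℝ} (l : ℝ) (h : w =ᶠ[𝓝 p] fun _ => 0) (α : Fin 4) :
    P.current l w α p = 0 := by
  have h_pd (β : Fin 4) : pd β w p = 0 := pd_eq_zero_of_eventuallyEq_const h β
  rw [current, energyCurrent]
  refine Fin.cases ?_ (fun i => ?_) α <;>
    simp [h.eq_of_nhds, h_pd, lagrangian, gradDeriv]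

lemma contDiffAt_totalCurrent (l : ℝ) (hT : 0 < P.T p) (hφ : ∀ I, ContDiffAt ℝ 2 (φ I) p)
    (α : Fin 4) : ContDiffAt ℝ 1 (P.totalCurrent l φ α) p :=
  ContDiffAt.sum fun I _ => P.contDiffAt_current l hT (P.contDiffAt_conjugated l hT (hφ I)) α

lemma divergence_totalCurrent (hγ : P.γ ≠ 0) (hT : 0 < P.T p)
    (hφ : ∀ I, ContDiffAt ℝ 2 (φ I) p) :
    ∑ α, pd α (P.totalCurrent l φ α) p = P.carlemanDensity l φ p := by
  have h_conj (I : Fin N) := P.contDiffAt_conjugated l hT (hφ I)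
  have h_pd (α : Fin 4) : pd α (P.totalCurrent l φ α) p
      = ∑ I, pd α (P.current l (P.conjugated l (φ I)) α) p :=
    (HasPD.sum fun I => HasPD.of_differentiableAt
      ((P.contDiffAt_current l hT (h_conj I) α).differentiableAt one_ne_zero) α).2
  simp only [h_pd, carlemanDensity]
  rw [Finset.sum_comm]
  exact Finset.sum_congr rfl fun I _ => P.divergence_current hγ hT (h_conj I)

lemma truncatedDivergence_eq (R : ℝ) (hγ : P.γ ≠ 0) (hT : 0 < P.T p)
    (hφ : ∀ I, ContDiffAt ℝ 2 (φ I) p) :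
    P.truncatedDivergence l R φ p = timeCutoff R p.1 * P.carlemanDensity l φ p
      + deriv (timeCutoff R) p.1 * P.totalCurrent l φ 0 p := by
  have h_cutoff (α : Fin 4) : HasPD α (fun p : Spc => timeCutoff R p.1) p
      (deriv (timeCutoff R) p.1 * (eVec α).1) :=
    (hasPD_fst α p).comp
      (((contDiff_timeCutoff R).differentiable one_ne_zero p.1).hasDerivAt)
  have h_current (α : Fin 4) := HasPD.of_differentiableAt
    ((contDiffAt_totalCurrent l hT hφ α).differentiableAt one_ne_zero) α
  rw [← divergence_totalCurrent hγ hT hφ, truncatedDivergence,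
    Finset.sum_congr rfl fun α _ => ((h_cutoff α).mul (h_current α)).2, Finset.sum_add_distrib,
    ← Finset.mul_sum, Fin.sum_univ_succ]
  simp only [eVec_zero_fst, eVec_succ_fst, mul_zero, zero_mul, Finset.sum_const_zero]
  ring

namespace Admissible

variable (H : P.Admissible R₁ R₂) (hk₁ : R₂ < P.k₁) (hk₂ : P.k₁ < P.k₂)
include H hk₁ hk₂

lemma conjugated_eventuallyEq_zero {φ : Spc → ℝ} (l : ℝ)
    (hφ : ∀ p ∈ DD R₁ R₂, R₁ ≤ rr p - p.1 → φ p = 0) (hD : p ∈ DD R₁ R₂)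
    (hp : p ∉ P.supportSet R₁ R₂) : P.conjugated l φ =ᶠ[𝓝 p] fun _ => 0 := by
  rcases H.F_lt_or_lt_of_notMem hk₁ hD.1 hp with h | h
  · have h_cont := (P.contDiffAt_F (H.T_pos_of_time_pos hD.1)).continuousAt
    filter_upwards [h_cont.eventually (gt_mem_nhds h)] with q hq
    rw [conjugated, weighted, cutoffWeight, cutoff_eq_zero hk₂ hq.le, mul_zero, zero_mul, mul_zero]
  · have h_cont : Continuous fun q : Spc => rr q - q.1 := continuous_rr.sub continuous_fst
    filter_upwards [h_cont.continuousAt.eventually (lt_mem_nhds h),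
      (isOpen_DD R₁ R₂).mem_nhds hD] with q hq hqD
    rw [conjugated, weighted, hφ q hqD hq.le, mul_zero, mul_zero]

variable (hφ : ∀ I, ∀ p ∈ DD R₁ R₂, R₁ ≤ rr p - p.1 → φ I p = 0)
include hφ

lemma totalCurrent_eq_zero (l : ℝ) (hD : p ∈ DD R₁ R₂) (hp : p ∉ P.supportSet R₁ R₂)
    (α : Fin 4) : P.totalCurrent l φ α p = 0 :=
  Finset.sum_eq_zero fun I _ =>
    current_eq_zero l (H.conjugated_eventuallyEq_zero hk₁ hk₂ l (hφ I) hD hp) α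

lemma truncatedDivergence_eq_zero (l R : ℝ) (hD : p ∈ DD R₁ R₂) (hp : p ∉ P.supportSet R₁ R₂) :
    P.truncatedDivergence l R φ p = 0 := by
  refine Finset.sum_eq_zero fun α _ => pd_eq_zero_of_eventuallyEq_const (k := 0) ?_ α
  filter_upwards [(isOpen_DD R₁ R₂).mem_nhds hD,
    (H.isClosed_supportSet hk₁).isOpen_compl.mem_nhds hp] with q hqD hq
  rw [H.totalCurrent_eq_zero hk₁ hk₂ hφ l hqD hq α, mul_zero]

lemma setIntegral_truncatedDivergence_eq_zero (l : ℝ) {R : ℝ} (hR : 0 < R)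
    (hφ₂ : ∀ I, ∀ p ∈ DD R₁ R₂, ContDiffAt ℝ 2 (φ I) p) :
    IntegrableOn (P.truncatedDivergence l R φ) (DD R₁ R₂)
      ∧ ∫ p in DD R₁ R₂, P.truncatedDivergence l R φ p = 0 := by
  refine setIntegral_divergence_eq_zero (isOpen_DD R₁ R₂)
    (H.isCompact_supportSet_inter hk₁ (2 * R))
    (inter_subset_left.trans (H.supportSet_subset_DD hk₁)) (fun α p hD => ?_)
    fun α p hD hp => ?_
  · exact (((contDiff_timeCutoff R).comp contDiff_fst).contDiffAt.mul
      (contDiffAt_totalCurrent l (H.T_pos_of_time_pos hD.1)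
        (fun I => hφ₂ I p hD) α)).contDiffWithinAt
  · by_cases hS : p ∈ P.supportSet R₁ R₂
    · have h_time : 2 * R ≤ p.1 := le_of_not_ge fun h => hp ⟨hS, h⟩
      simp only [timeCutoff_eq_zero hR h_time, zero_mul]
    · simp only [H.totalCurrent_eq_zero hk₁ hk₂ hφ l hD hS α, mul_zero]

end Admissible

end CarlemanParams

end Divergence

section Conclusion

namespace CarlemanParams

variable {P : CarlemanParams} {R₁ R₂ M K C s l : ℝ} {N : ℕ} {p : Spc}
  {V : Fin N → Fin N → Fin 4 → Spc → ℝ} {W : Fin N → Fin N → Spc → ℝ} {φ : Fin N → Spc → ℝ}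

lemma y_mul_T_sq (hT : 0 < P.T p) : P.y p * P.T p ^ 2 = P.ε * P.T p ^ (1 - P.γ) := by
  rw [y, mul_assoc, ← rpow_add_natCast hT.ne']
  congr 2
  push_cast
  ring

lemma exp_mul_k₁_le_e (hμ : 0 ≤ P.μ) (hp : p ∈ P.supportSet R₁ R₂) :
    exp (P.μ * P.k₁) ≤ P.e p :=
  exp_le_exp.2 (mul_le_mul_of_nonneg_left hp.2.1 hμ)

lemma Admissible.deriv_timeCutoff_mul_le {A Cχ R J : ℝ}
    (H : P.Admissible R₁ R₂) (hA : 0 ≤ A) (hCχ : 0 ≤ Cχ) (hR : 0 < R)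
    (hχ : -deriv (timeCutoff R) p.1 ≤ Cχ / R) (ht : 0 < p.1)
    (hJ : -(A * P.T p ^ (1 - P.γ) * P.T p ^ (-s)) ≤ J) :
    deriv (timeCutoff R) p.1 * J
      ≤ Cχ * A / R * (2 * R + 1) ^ (1 - P.γ) * P.T p ^ (-s) := by
  have hT := H.T_pos_of_time_pos ht
  rcases lt_or_ge (2 * R) p.1 with h | h
  · rw [deriv_timeCutoff_eq_zero hR h, zero_mul]
    positivity
  · have hT_le : P.T p ≤ 2 * R + 1 := add_le_add h H.σ_le_one
    have h_exp : 0 ≤ 1 - P.γ := by linarith [H.γ_le_half]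
    calc deriv (timeCutoff R) p.1 * J
        = -deriv (timeCutoff R) p.1 * -J := (neg_mul_neg _ _).symm
      _ ≤ -deriv (timeCutoff R) p.1 * (A * P.T p ^ (1 - P.γ) * P.T p ^ (-s)) :=
          mul_le_mul_of_nonneg_left (neg_le.1 hJ)
            (neg_nonneg.2 (deriv_timeCutoff_nonpos hR _))
      _ ≤ Cχ / R * (A * (2 * R + 1) ^ (1 - P.γ) * P.T p ^ (-s)) := by gcongr
      _ = Cχ * A / R * (2 * R + 1) ^ (1 - P.γ) * P.T p ^ (-s) := by ring

namespace Calibrated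

variable (H : P.Calibrated R₁ R₂ M) (S : P.DecayingSolution R₁ R₂ K C s V W φ)
include H S

lemma current_zero_conjugated_ge {A : ℝ} (hp : p ∈ P.supportSet R₁ R₂)
    (hA : |P.cutoffWeight l (P.F p)| ≤ A) (hA' : |P.cutoffWeightDeriv l (P.F p)| ≤ A)
    (hF : P.F p ≤ R₁) (I : Fin N) :
    -((2 * M + M ^ 2 + 1 / 2 * l ^ 2 * exp (P.μ * R₁) ^ 2 * M ^ 2) * P.ε * (A * (1 + 2 * M)) ^ 2
        * C ^ 2 * P.T p ^ (1 - P.γ) * P.T p ^ (-s))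
      ≤ P.current l (P.conjugated l (φ I)) 0 p := by
  have hD := H.supportSet_subset_DD H.lt_k₁ hp
  have g := H.geometryBounds p hp
  have h_pd := g.abs_pd_conjugated_le H.γ_pos.ne' H.μ_pos.ne'
    ((S.contDiffAt I p hD).differentiableAt two_ne_zero) (S.abs_le p hD I) (S.abs_pd_le p hD I)
    hA hA'
  have h_abs : |P.conjugated l (φ I) p|
      ≤ A * (1 + 2 * M) * (P.T p * (C * P.T p ^ (-(s / 2)))) := by
    have hA₀ : 0 ≤ A := (abs_nonneg _).trans hA
    have h_nonneg : 0 ≤ P.T p * (C * P.T p ^ (-(s / 2))) :=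
      mul_nonneg g.T_pos.le ((abs_nonneg _).trans (S.abs_le p hD I))
    exact (g.abs_conjugated_le (S.abs_le p hD I) hA).trans (mul_le_mul_of_nonneg_right
      (le_mul_of_one_le_right hA₀ (by linarith [g.M_pos])) h_nonneg)
  have he : P.e p ≤ exp (P.μ * R₁) := exp_le_exp.2 (mul_le_mul_of_nonneg_left hF H.μ_pos.le)
  refine le_of_eq_of_le ?_ (g.current_zero_ge h_abs h_pd he)
  generalize 2 * M + M ^ 2 + 1 / 2 * l ^ 2 * exp (P.μ * R₁) ^ 2 * M ^ 2 = Q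
  linear_combination Q * (A * (1 + 2 * M)) ^ 2
    * ((C * P.T p ^ (-(s / 2))) ^ 2 * y_mul_T_sq g.T_pos
      + P.ε * P.T p ^ (1 - P.γ) * sq_mul_rpow_neg_half g.T_pos.le C s)

lemma exists_totalCurrent_zero_ge (l : ℝ) :
    ∃ A, 0 ≤ A ∧ ∀ p ∈ P.supportSet R₁ R₂,
      -(A * P.T p ^ (1 - P.γ) * P.T p ^ (-s)) ≤ P.totalCurrent l φ 0 p := by
  have h_deriv : Differentiable ℝ (P.cutoffWeightDeriv l) := fun x =>
    (P.hasDerivAt_cutoffWeightDeriv H.μ_pos.ne' l x).differentiableAt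
  obtain ⟨A, hA⟩ := exists_abs_le_of_mem_Icc (P.contDiff_cutoffWeight l).continuous
    h_deriv.continuous P.k₁ R₁
  have hM := H.one_le_M
  have hε := H.ε_pos
  refine ⟨N * ((2 * M + M ^ 2 + 1 / 2 * l ^ 2 * exp (P.μ * R₁) ^ 2 * M ^ 2) * P.ε
    * (A * (1 + 2 * M)) ^ 2 * C ^ 2), by positivity, fun p hp => ?_⟩
  have ht := H.time_pos H.lt_k₁ hp
  have hF : P.F p ≤ R₁ :=
    (H.F_le_a (H.T_pos_of_time_pos ht)).trans (by linarith [H.a_le ht hp.2.2, H.σ_pos])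
  obtain ⟨hA, hA'⟩ := hA (P.F p) ⟨hp.2.1, hF⟩
  refine le_of_eq_of_le ?_ (Finset.sum_le_sum fun I _ =>
    H.current_zero_conjugated_ge S hp hA hA' hF I)
  rw [Finset.sum_const, Finset.card_univ, Fintype.card_fin, nsmul_eq_mul]
  ring

lemma timeCutoff_mul_carlemanDensity_le {A R b : ℝ} {B : Set Spc} (hl₀ : 0 ≤ l) (hA : 0 ≤ A)
    (hp : p ∈ P.supportSet R₁ R₂) (hl : P.threshold N K M ≤ l * P.e p)
    (h_density : P.carlemanDensity l φ p ≤ P.G l P.k₂ ^ 2 * A * P.T p ^ (-s))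
    (hB : p ∈ B → P.k₂ < P.F p ∧ b ≤ P.massDensity φ p ∧ timeCutoff R p.1 = 1) :
    timeCutoff R p.1 * P.carlemanDensity l φ p
      ≤ -(B.indicator (fun _ => 1 / 8 * l ^ 2 * P.G l P.k₂ ^ 2 * b) p)
        + P.G l P.k₂ ^ 2 * A * P.T p ^ (-s) := by
  have hT := (H.geometryBounds p hp).T_pos
  have h_nonneg : 0 ≤ P.G l P.k₂ ^ 2 * A * P.T p ^ (-s) := by positivity
  by_cases hpB : p ∈ B
  · obtain ⟨hF, hb, hχ⟩ := hB hpB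
    have h_mass : 1 / 8 * l ^ 2 * P.G l P.k₂ ^ 2 * b
        ≤ 1 / 8 * l ^ 2 * P.G l P.k₂ ^ 2 * P.massDensity φ p := by gcongr
    rw [indicator_of_mem hpB, hχ, one_mul]
    linarith [H.carlemanDensity_le_of_lt S hp hl₀ hl hF]
  · rw [indicator_of_notMem hpB, neg_zero, zero_add]
    exact (mul_le_mul_of_nonneg_left h_density (timeCutoff_nonneg R p.1)).trans
      (mul_le_of_le_one_left h_nonneg (timeCutoff_le_one R p.1))

lemma truncatedDivergence_le {A Cχ J R b : ℝ} {B : Set Spc} (hl₀ : 0 ≤ l) (hA : 0 ≤ A)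
    (hCχ : 0 ≤ Cχ) (hJ : 0 ≤ J) (hR : 0 < R)
    (h_thr : ∀ p ∈ P.supportSet R₁ R₂, P.threshold N K M ≤ l * P.e p)
    (h_density : ∀ p ∈ P.supportSet R₁ R₂,
      P.carlemanDensity l φ p ≤ P.G l P.k₂ ^ 2 * A * P.T p ^ (-s))
    (h_flux : ∀ p ∈ P.supportSet R₁ R₂,
      -(J * P.T p ^ (1 - P.γ) * P.T p ^ (-s)) ≤ P.totalCurrent l φ 0 p)
    (hχ : ∀ t, 0 ≤ t → -deriv (timeCutoff R) t ≤ Cχ / R)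
    (hB : ∀ p ∈ B, p ∈ P.supportSet R₁ R₂ ∧ P.k₂ < P.F p ∧ b ≤ P.massDensity φ p)
    (hBR : ∀ p ∈ B, p.1 ≤ R) (hD : p ∈ DD R₁ R₂) :
    P.truncatedDivergence l R φ p
      ≤ -(B.indicator (fun _ => 1 / 8 * l ^ 2 * P.G l P.k₂ ^ 2 * b) p)
        + (P.G l P.k₂ ^ 2 * A + Cχ * J / R * (2 * R + 1) ^ (1 - P.γ))
          * (P.supportSet R₁ R₂).indicator (fun p => P.T p ^ (-s)) p := by
  by_cases hp : p ∈ P.supportSet R₁ R₂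
  · rw [truncatedDivergence_eq R H.γ_pos.ne' (H.T_pos_of_time_pos hD.1)
      (fun I => S.contDiffAt I p hD), indicator_of_mem hp]
    linarith [H.timeCutoff_mul_carlemanDensity_le (R := R) S hl₀ hA hp (h_thr p hp)
        (h_density p hp) fun hpB =>
          ⟨(hB p hpB).2.1, (hB p hpB).2.2, timeCutoff_eq_one hR (hBR p hpB)⟩,
      H.deriv_timeCutoff_mul_le hJ hCχ hR (hχ p.1 hD.1.le) hD.1 (h_flux p hp)]
  · rw [H.truncatedDivergence_eq_zero H.lt_k₁ H.k₁_lt_k₂ S.eq_zero l R hD hp,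
      indicator_of_notMem hp, indicator_of_notMem fun hpB => hp (hB p hpB).1, neg_zero, mul_zero,
      add_zero]

lemma exists_sq_mul_measureReal_le {b R₀ : ℝ} {B : Set Spc} (hs : 3 < s) (hB_meas : MeasurableSet B)
    (hB_fin : volume B ≠ ⊤) (hBR : ∀ p ∈ B, p.1 ≤ R₀)
    (hB : ∀ p ∈ B, p ∈ P.supportSet R₁ R₂ ∧ P.k₂ < P.F p ∧ b ≤ P.massDensity φ p) :
    ∃ A l₀, ∀ l, l₀ ≤ l → l ^ 2 * (b * volume.real B) ≤ A := by
  obtain ⟨Cχ, hCχ, hχ⟩ := exists_neg_deriv_timeCutoff_le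
  obtain ⟨A, hA, h_density⟩ := H.exists_carlemanDensity_le S
  refine ⟨8 * (A * ∫ p in DD R₁ R₂, (P.supportSet R₁ R₂).indicator (fun p => P.T p ^ (-s)) p),
    max 0 (P.threshold N K M / exp (P.μ * P.k₁)), fun l hl => ?_⟩
  have hl₀ : 0 ≤ l := (le_max_left _ _).trans hl
  have h_thr : ∀ p ∈ P.supportSet R₁ R₂, P.threshold N K M ≤ l * P.e p := fun p hp =>
    ((div_le_iff₀ (exp_pos _)).1 ((le_max_right _ _).trans hl)).trans
      (mul_le_mul_of_nonneg_left (exp_mul_k₁_le_e H.μ_pos.le hp) hl₀)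
  obtain ⟨J, hJ, h_flux⟩ := H.exists_totalCurrent_zero_ge S l
  have h_large : ∀ᶠ R in atTop, 0 < R ∧ R₀ ≤ R :=
    (eventually_gt_atTop 0).and (eventually_ge_atTop R₀)
  have h_limit := mul_measureReal_le_of_integral_eq_zero (ν := volume.restrict (DD R₁ R₂))
    hB_meas (ne_top_of_le_ne_top hB_fin (Measure.restrict_apply_le _ _))
    (tendsto_div_mul_rpow_atTop (Cχ * J) H.γ_pos (by linarith [H.γ_le_half]))
    (H.integrable_indicator_T_rpow H.lt_k₁ hs).integrableOn
    (h_large.mono fun R hR => H.setIntegral_truncatedDivergence_eq_zero H.lt_k₁ H.k₁_lt_k₂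
      S.eq_zero l hR.1 S.contDiffAt)
    (h_large.mono fun R hR => ae_restrict_of_forall_mem (isOpen_DD R₁ R₂).measurableSet
      fun p hD => H.truncatedDivergence_le S hl₀ hA hCχ hJ hR.1 h_thr
        (fun p hp => h_density l p hl₀ hp (h_thr p hp)) h_flux (fun t => hχ R t hR.1) hB
        (fun p hp => (hBR p hp).trans hR.2) hD)
  rw [measureReal_restrict_apply hB_meas, inter_eq_left.2 fun p hp =>
    H.supportSet_subset_DD H.lt_k₁ (hB p hp).1] at h_limit
  have hG : 0 < P.G l P.k₂ ^ 2 := pow_pos (P.G_pos _ _) 2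
  refine le_of_mul_le_mul_left ?_ hG
  linarith

end Calibrated

end CarlemanParams

end Conclusion

section Vanishing

namespace CarlemanParams

variable {P : CarlemanParams} {R₁ R₂ M K C s : ℝ} {N : ℕ} {p : Spc}
  {V : Fin N → Fin N → Fin 4 → Spc → ℝ} {W : Fin N → Fin N → Spc → ℝ} {φ : Fin N → Spc → ℝ}

lemma massDensity_pos (hT : 0 < P.T p) (hε : 0 < P.ε) {I : Fin N} (hφ : φ I p ≠ 0) :
    0 < P.massDensity φ p := by
  have he : 0 < P.e p := exp_pos _
  have hy : 0 < P.y p := mul_pos hε (rpow_pos_of_pos hT _)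
  have h_sum : 0 < ∑ I, φ I p ^ 2 :=
    Finset.sum_pos' (fun I _ => sq_nonneg _) ⟨I, Finset.mem_univ I, by positivity⟩
  rw [massDensity]
  positivity

lemma continuousAt_massDensity (hT : 0 < P.T p) (hφ : ∀ I, ContinuousAt (φ I) p) :
    ContinuousAt (P.massDensity φ) p :=
  ((((P.contDiffAt_e hT).continuousAt.pow 2).mul ((P.contDiffAt_y hT).continuousAt.pow 2)).mul
    (P.contDiffAt_T.continuousAt.pow 2)).mul (tendsto_finsetSum _ fun I _ => (hφ I).pow 2)

namespace Calibrated

variable (H : P.Calibrated R₁ R₂ M) (S : P.DecayingSolution R₁ R₂ K C s V W φ)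
include H S

lemma eventually_le_massDensity (hp : p ∈ DD R₁ R₂) (hF : P.k₂ < P.F p) {I : Fin N}
    (hφ : φ I p ≠ 0) :
    ∀ᶠ q in 𝓝 p, q ∈ P.supportSet R₁ R₂ ∧ P.k₂ < P.F q
      ∧ P.massDensity φ p / 2 ≤ P.massDensity φ q := by
  have hT := H.T_pos_of_time_pos hp.1
  have h_cone : rr p - p.1 < R₁ := lt_of_not_ge fun h => hφ (S.eq_zero I p hp h)
  have h_mass := continuousAt_massDensity hT fun I => (S.contDiffAt I p hp).continuousAt
  filter_upwards [(isOpen_DD R₁ R₂).mem_nhds hp,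
    (P.contDiffAt_F hT).continuousAt.eventually (lt_mem_nhds hF),
    (continuous_rr.sub continuous_fst).continuousAt.eventually (gt_mem_nhds h_cone),
    h_mass.eventually (lt_mem_nhds (half_lt_self (massDensity_pos hT H.ε_pos hφ)))]
    with q hqD hqF hqr hqm
  have hk : P.k₁ ≤ P.F q := H.k₁_lt_k₂.le.trans hqF.le
  exact ⟨⟨H.minTime_le H.lt_k₁ hqD.1 hqr.le hk, hk, hqr.le⟩, hqF, hqm.le⟩

lemma eq_zero_of_k₂_lt (hs : 3 < s) (hp : p ∈ DD R₁ R₂) (hF : P.k₂ < P.F p) (I : Fin N) :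
    φ I p = 0 := by
  by_contra hφ
  have : (volume : Measure Spc).IsAddHaarMeasure := by
    rw [Measure.volume_eq_prod]
    infer_instance
  obtain ⟨ρ, hρ, h_ball⟩ := Metric.nhds_basis_closedBall.eventually_iff.1
    (H.eventually_le_massDensity S hp hF hφ)
  have h_fin : volume (Metric.closedBall p ρ) ≠ ⊤ := measure_closedBall_lt_top.ne
  have h_time : ∀ q ∈ Metric.closedBall p ρ, q.1 ≤ p.1 + ρ := fun q hq => by
    have h_dist : dist q.1 p.1 ≤ ρ := (le_max_left _ _).trans hq
    linarith [le_abs_self (q.1 - p.1), Real.dist_eq q.1 p.1]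
  have h_pos : 0 < P.massDensity φ p / 2 * volume.real (Metric.closedBall p ρ) :=
    mul_pos (half_pos (massDensity_pos (H.T_pos_of_time_pos hp.1) H.ε_pos hφ))
      (ENNReal.toReal_pos (Metric.measure_closedBall_pos _ _ hρ).ne' h_fin)
  obtain ⟨A, l₀, h_le⟩ := H.exists_sq_mul_measureReal_le S hs measurableSet_closedBall h_fin
    h_time fun q hq => h_ball hq
  obtain ⟨l, hl₀, hl⟩ := ((eventually_ge_atTop l₀).and
    (((tendsto_pow_atTop two_ne_zero).atTop_mul_const h_pos).eventually_gt_atTop A)).exists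
  exact (h_le l hl₀).not_gt hl

end Calibrated

end CarlemanParams

end Vanishing

section Parameters

lemma eventually_mul_lt (a : ℝ) {b : ℝ} (hb : 0 < b) : ∀ᶠ x in 𝓝[>] (0 : ℝ), x * a < b :=
  nhdsWithin_le_nhds
    (((continuous_mul_const a).tendsto' 0 0 (zero_mul a)).eventually_lt_const hb)

namespace CarlemanParams

variable {R₁ R₂ : ℝ} {p : Spc}

lemma exists_lt_a (hR₂ : |R₂| < R₁) (hp : p ∈ DD R₁ R₂) (γ : ℝ) :
    ∃ P : CarlemanParams, P.γ = γ ∧ 0 < P.σ ∧ P.σ ≤ 1 ∧ P.d = R₁ ^ 2 - P.σ ^ 2 - 2 * P.σ * R₂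
      ∧ P.σ < R₁ - R₂ ∧ R₂ < P.a p := by
  obtain ⟨ht, h_hyp⟩ := mem_DD_iff.1 hp
  obtain ⟨σ, hσ_one, hσR, hσ_hyp, hσ⟩ := ((eventually_mul_lt 1 one_pos).and <|
    (eventually_mul_lt 1 (sub_pos.2 (abs_lt.1 hR₂).2)).and <|
    (eventually_mul_lt (2 * p.1) h_hyp).and self_mem_nhdsWithin).exists
  rw [mul_one] at hσ_one hσR
  let P : CarlemanParams := ⟨σ, R₁ ^ 2 - σ ^ 2 - 2 * σ * R₂, 0, γ, 0, 0, 0, 0⟩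
  have hT : 0 < P.T p := add_pos ht hσ
  refine ⟨P, rfl, hσ, hσ_one.le, rfl, hσR, sub_pos.1 (pos_of_mul_pos_right ?_ hT.le)⟩
  have h_eq := hyperboloid_eq (P := P) rfl hT
  change _ = _ + 2 * σ * p.1 at h_eq
  linarith

lemma exists_admissible {γ : ℝ} (hγ₀ : 0 < γ) (hγ : γ ≤ 1 / 2) (hR₂ : |R₂| < R₁)
    (hp : p ∈ DD R₁ R₂) :
    ∃ P : CarlemanParams, P.γ = γ ∧ P.Admissible R₁ R₂ ∧ R₂ < P.k₁ ∧ P.k₁ < P.k₂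
      ∧ P.k₂ < P.F p := by
  obtain ⟨P, rfl, hσ, hσ_one, hd, hσR, ha⟩ := exists_lt_a hR₂ hp γ
  have h_neg := (abs_lt.1 hR₂).1
  obtain ⟨ε, hε_le, hε_small, hε_F, hε⟩ :=
    ((eventually_mul_lt 1 (rpow_pos_of_pos hσ (1 + P.γ))).and <|
    (eventually_mul_lt (2 * R₁ * P.σ ^ (-P.γ)) (gap_pos hσ h_neg hσR)).and <|
    (eventually_mul_lt (P.T p ^ (-P.γ) / P.γ) (half_pos (sub_pos.2 ha))).and
      self_mem_nhdsWithin).exists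
  refine ⟨{ P with ε := ε, k₁ := R₂ + (P.a p - R₂) / 6, k₂ := R₂ + (P.a p - R₂) / 3 }, rfl,
    ⟨hσ, hσ_one, hd, h_neg, hσR, hγ₀, hγ, hε, by linarith, by linarith⟩, ?_, ?_, ?_⟩
  · change R₂ < R₂ + (P.a p - R₂) / 6
    linarith
  · change R₂ + (P.a p - R₂) / 6 < R₂ + (P.a p - R₂) / 3
    linarith
  · change R₂ + (P.a p - R₂) / 3 < P.a p - ε / P.γ * P.T p ^ (-P.γ)
    rw [div_mul_eq_mul_div, ← mul_div_assoc']
    linarith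

lemma Admissible.exists_calibrated {P : CarlemanParams} (H : P.Admissible R₁ R₂)
    (hk₁ : R₂ < P.k₁) (hk₂ : P.k₁ < P.k₂) (hp : p ∈ P.supportSet R₁ R₂) :
    ∃ M c μ, { P with c := c, μ := μ }.Calibrated R₁ R₂ M := by
  have H₁ : { P with c := 1 }.Admissible R₁ R₂ := { H with }
  obtain ⟨M, hM⟩ := H₁.exists_geometryBounds
  have hM₁ : 1 ≤ M := (hM p (H.supportSet_subset_region hk₁ hp)).one_le_M
  have hM₄ : 1 ≤ 16 * (M + 2) ^ 4 := by
    linarith [one_le_pow₀ (by linarith : 1 ≤ M + 2) (n := 4)]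
  have hc : 1 / (16 * (M + 2) ^ 4) ∈ Icc (0 : ℝ) 1 :=
    ⟨by positivity, div_le_one_of_le₀ hM₄ (by positivity)⟩
  refine ⟨M + 2, 1 / (16 * (M + 2) ^ 4), M + 2, { H with
    lt_k₁ := hk₁
    k₁_lt_k₂ := hk₂
    c_pos := by positivity
    c_mul_le := (one_div_mul_cancel (by positivity)).le
    one_le_M := by linarith
    le_μ := le_rfl
    geometryBounds := fun q hq =>
      (hM q (H.supportSet_subset_region hk₁ hq)).update hc (M + 2) }⟩

end CarlemanParams

end Parameters

section UniqueContinuation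

variable {N : ℕ} {R₁ R₂ γ γ' C C₁ C₂ : ℝ} {p : Spc}

lemma le_sum_abs {ι : Type*} [Fintype ι] (f : ι → ℝ) (i : ι) : |f i| ≤ ∑ i, |f i| :=
  Finset.single_le_sum (f := fun i => |f i|) (fun _ _ => abs_nonneg _) (Finset.mem_univ i)

lemma sum_sum_abs_nonneg {ι κ : Type*} [Fintype ι] [Fintype κ] (f : ι → κ → ℝ) :
    0 ≤ ∑ i, ∑ j, |f i j| :=
  Finset.sum_nonneg fun _ _ => Finset.sum_nonneg fun _ _ => abs_nonneg _

lemma le_sum_sum_abs {ι κ : Type*} [Fintype ι] [Fintype κ] (f : ι → κ → ℝ) (i : ι) (j : κ) :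
    |f i j| ≤ ∑ i, ∑ j, |f i j| :=
  (le_sum_abs (f i) j).trans
    (Finset.single_le_sum (f := fun i => ∑ j, |f i j|)
      (fun _ _ => Finset.sum_nonneg fun _ _ => abs_nonneg _) (Finset.mem_univ i))

namespace CarlemanParams.Admissible

variable {P : CarlemanParams} (H : P.Admissible R₁ R₂)
include H

lemma mul_rpow_le (hC : 0 ≤ C) (hp : p ∈ DD R₁ R₂) {s s' : ℝ} (hss' : s ≤ s') (hs' : s' ≤ 0) :
    C * (1 + p.1 + rr p) ^ s ≤ C * P.T p ^ s' := by
  have hr : 0 ≤ rr p := norm_nonneg _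
  have hT_le : P.T p ≤ 1 + p.1 + rr p := by
    rw [T]
    linarith [H.σ_le_one]
  refine mul_le_mul_of_nonneg_left ?_ hC
  exact (rpow_le_rpow_of_exponent_le (by linarith [hp.1]) hss').trans
    (rpow_le_rpow_of_nonpos (H.T_pos_of_time_pos hp.1) hT_le hs')

lemma mul_rpow_le_y (hC : 0 ≤ C) (hγ : P.γ ≤ γ) (hp : p ∈ DD R₁ R₂) :
    C * (1 + p.1 + rr p) ^ (-1 - γ) ≤ (C + C / P.ε) * P.y p := by
  have hε := H.ε_pos
  have hT := H.T_pos_of_time_pos hp.1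
  calc C * (1 + p.1 + rr p) ^ (-1 - γ)
      ≤ C * P.T p ^ (-1 - P.γ) := H.mul_rpow_le hC hp (by linarith) (by linarith [H.γ_pos])
    _ = C / P.ε * P.y p := by
        rw [y]
        field_simp
    _ ≤ (C + C / P.ε) * P.y p :=
        mul_le_mul_of_nonneg_right (le_add_of_nonneg_left hC) (by rw [y]; positivity)

variable {V : Fin N → Fin N → Fin 4 → Spc → ℝ} {W : Fin N → Fin N → Spc → ℝ}
  {φ : Fin N → Spc → ℝ}

lemma decayingSolution (hγ : P.γ ≤ γ) (hγ' : 0 < γ') (hC₁ : 0 ≤ C₁) (hC₂ : 0 ≤ C₂)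
    (hV : ∀ p ∈ DD R₁ R₂, ∑ I, ∑ J, ∑ α, |V I J α p| ≤ C₁ * (1 + p.1 + rr p) ^ (-1 : ℝ))
    (hVW : ∀ p ∈ DD R₁ R₂,
      (∑ I, ∑ J, |∑ α, V I J α p * hatom p α|) + (∑ I, ∑ J, |W I J p|)
        ≤ C₁ * (1 + p.1 + rr p) ^ (-1 - γ))
    (hφ : ∀ I, ContDiffOn ℝ 2 (φ I) (DD R₁ R₂))
    (h_eq : ∀ p ∈ DD R₁ R₂, ∀ I, boxT V W φ I p = 0)
    (h_zero : ∀ p ∈ DD R₁ R₂, R₁ ≤ rr p - p.1 → ∀ I, φ I p = 0)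
    (h_decay : ∀ p ∈ DD R₁ R₂,
      (∑ I, |φ I p|) + (∑ I, ∑ α, |pd α (φ I) p|)
        ≤ C₂ * (1 + p.1 + rr p) ^ (-(3 : ℝ) / 2 - γ'))
    (h_good : ∀ p ∈ DD R₁ R₂,
      (∑ I, |dt (φ I) p + dr (φ I) p|) ≤ C₂ * (1 + p.1 + rr p) ^ (-(5 : ℝ) / 2 - γ')) :
    P.DecayingSolution R₁ R₂ (C₁ + C₁ / P.ε) C₂ (3 + 2 * γ') V W φ where
  contDiffAt I p hp := (hφ I).contDiffAt ((isOpen_DD R₁ R₂).mem_nhds hp)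
  boxT_eq_zero I p hp := h_eq p hp I
  eq_zero I p hp hr := h_zero p hp hr I
  K_nonneg := add_nonneg hC₁ (div_nonneg hC₁ H.ε_pos.le)
  abs_V_le p hp I J α := by
    have h_term : |V I J α p| ≤ ∑ I, ∑ J, ∑ α, |V I J α p| :=
      (le_sum_sum_abs (V I · · p) J α).trans (Finset.single_le_sum
        (f := fun I => ∑ J, ∑ α, |V I J α p|) (fun I _ => sum_sum_abs_nonneg (V I · · p))
        (Finset.mem_univ I))
    have h_K : C₁ ≤ C₁ + C₁ / P.ε := le_add_of_nonneg_right (div_nonneg hC₁ H.ε_pos.le)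
    rw [← rpow_neg_one]
    exact h_term.trans ((hV p hp).trans ((H.mul_rpow_le hC₁ hp le_rfl (by norm_num)).trans
      (mul_le_mul_of_nonneg_right h_K (rpow_nonneg (H.T_pos_of_time_pos hp.1).le _))))
  abs_sum_V_mul_hatom_le p hp I J := by
    linarith [le_sum_sum_abs (fun I J => ∑ α, V I J α p * hatom p α) I J,
      sum_sum_abs_nonneg (W · · p), hVW p hp, H.mul_rpow_le_y hC₁ hγ hp]
  abs_W_le p hp I J := by
    linarith [le_sum_sum_abs (W · · p) I J,
      sum_sum_abs_nonneg fun I J => ∑ α, V I J α p * hatom p α, hVW p hp,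
      H.mul_rpow_le_y hC₁ hγ hp]
  abs_le p hp J := by
    linarith [le_sum_abs (φ · p) J, sum_sum_abs_nonneg fun I α => pd α (φ I) p, h_decay p hp,
      H.mul_rpow_le hC₂ hp (s := -3 / 2 - γ') (s' := -((3 + 2 * γ') / 2)) (by linarith)
        (by linarith)]
  abs_pd_le p hp J α := by
    linarith [le_sum_sum_abs (fun I α => pd α (φ I) p) J α, le_sum_abs (φ · p) J,
      abs_nonneg (φ J p), h_decay p hp,
      H.mul_rpow_le hC₂ hp (s := -3 / 2 - γ') (s' := -((3 + 2 * γ') / 2)) (by linarith)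
        (by linarith)]
  abs_dt_add_dr_le p hp J := by
    have hT := H.T_pos_of_time_pos hp.1
    rw [mul_left_comm, ← rpow_neg_one, ← rpow_add hT]
    exact (le_sum_abs (fun I => dt (φ I) p + dr (φ I) p) J).trans ((h_good p hp).trans
      (H.mul_rpow_le hC₂ hp (by linarith) (by linarith)))

end CarlemanParams.Admissible

end UniqueContinuation

theorem stmt2_general {N : ℕ} (R₁ R₂ γ γ' C₁ C₂ : ℝ)
    (hR₂ : |R₂| < R₁) (hγ : 0 < γ) (hγ' : 0 < γ')
    (V : Fin N → Fin N → Fin 4 → Spc → ℝ) (W : Fin N → Fin N → Spc → ℝ)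
    (hV1 : ∀ p ∈ DD R₁ R₂,
      (∑ I : Fin N, ∑ J : Fin N, ∑ α : Fin 4, |V I J α p|)
        ≤ C₁ * (1 + p.1 + rr p) ^ (-1 : ℝ))
    (hVW2 : ∀ p ∈ DD R₁ R₂,
      (∑ I : Fin N, ∑ J : Fin N, |∑ α : Fin 4, V I J α p * hatom p α|)
        + (∑ I : Fin N, ∑ J : Fin N, |W I J p|)
        ≤ C₁ * (1 + p.1 + rr p) ^ (-1 - γ))
    (φ : Fin N → Spc → ℝ)
    (hφ : ∀ I, ContDiffOn ℝ 2 (φ I) (DD R₁ R₂))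
    (heq : ∀ p ∈ DD R₁ R₂, ∀ I, boxT V W φ I p = 0)
    (hvan : ∀ p ∈ DD R₁ R₂, R₁ ≤ rr p - p.1 → ∀ I, φ I p = 0)
    (hdec1 : ∀ p ∈ DD R₁ R₂,
      (∑ I : Fin N, |φ I p|) + (∑ I : Fin N, ∑ α : Fin 4, |pd α (φ I) p|)
        ≤ C₂ * (1 + p.1 + rr p) ^ (-(3 : ℝ) / 2 - γ'))
    (hdec2 : ∀ p ∈ DD R₁ R₂,
      (∑ I : Fin N, |dt (φ I) p + dr (φ I) p|)
        ≤ C₂ * (1 + p.1 + rr p) ^ (-(5 : ℝ) / 2 - γ')) :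
    ∀ p ∈ DD R₁ R₂, ∀ I, φ I p = 0 := by
  intro p hp
  have h_pos : 0 < 1 + p.1 + rr p := add_pos_of_pos_of_nonneg (by linarith [hp.1]) (norm_nonneg p.2)
  have hC₁ : 0 ≤ C₁ := nonneg_of_mul_nonneg_left
    ((Finset.sum_nonneg fun I _ => sum_sum_abs_nonneg (V I · · p)).trans (hV1 p hp))
    (rpow_pos_of_pos h_pos _)
  have hC₂ : 0 ≤ C₂ := nonneg_of_mul_nonneg_left
    ((Finset.sum_nonneg fun _ _ => abs_nonneg _).trans (hdec2 p hp)) (rpow_pos_of_pos h_pos _)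
  obtain ⟨P, hPγ, H, hk₁, hk₂, hF⟩ :=
    CarlemanParams.exists_admissible (lt_min hγ one_half_pos) (min_le_right γ (1 / 2)) hR₂ hp
  rcases le_or_gt R₁ (rr p - p.1) with h_cone | h_cone
  · exact hvan p hp h_cone
  have h_mem : p ∈ P.supportSet R₁ R₂ :=
    have hF₁ := hk₂.le.trans hF.le
    ⟨H.minTime_le hk₁ hp.1 h_cone.le hF₁, hF₁, h_cone.le⟩
  obtain ⟨M, c, μ, H'⟩ := H.exists_calibrated hk₁ hk₂ h_mem
  have S := H'.toAdmissible.decayingSolution (hPγ.trans_le (min_le_left γ (1 / 2))) hγ' hC₁ hC₂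
    hV1 hVW2 hφ heq hvan hdec1 hdec2
  exact H'.eq_zero_of_k₂_lt S (by linarith) hp hF

/-- Theorem 1.2 of the paper: unique continuation from the exterior
of a hyperboloid for the linear operator `□̃`. -/
theorem stmt2 {N : ℕ} (R₁ R₂ γ γ' C₁ C₂ : ℝ)
    (hR₁ : 0 < R₁) (hR₂ : |R₂| < R₁)
    (hγ0 : 0 < γ) (hγ1 : γ ≤ 1) (hγ' : 0 < γ') (hC₁ : 0 < C₁) (hC₂ : 0 < C₂)
    (V : Fin N → Fin N → Fin 4 → Spc → ℝ) (W : Fin N → Fin N → Spc → ℝ)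
    (hVcont : ∀ I J α, ContinuousOn (V I J α) (DD R₁ R₂))
    (hWcont : ∀ I J, ContinuousOn (W I J) (DD R₁ R₂))
    (hV1 : ∀ p ∈ DD R₁ R₂,
      (∑ I : Fin N, ∑ J : Fin N, ∑ α : Fin 4, |V I J α p|)
        ≤ C₁ * (1 + p.1 + rr p) ^ (-1 : ℝ))
    (hVW2 : ∀ p ∈ DD R₁ R₂,
      (∑ I : Fin N, ∑ J : Fin N, |∑ α : Fin 4, V I J α p * hatom p α|)
        + (∑ I : Fin N, ∑ J : Fin N, |W I J p|)
        ≤ C₁ * (1 + p.1 + rr p) ^ (-1 - γ))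
    (φ : Fin N → Spc → ℝ)
    (hφ : ∀ I, ContDiffOn ℝ 2 (φ I) (DD R₁ R₂))
    (heq : ∀ p ∈ DD R₁ R₂, ∀ I, boxT V W φ I p = 0)
    (hvan : ∀ p ∈ DD R₁ R₂, R₁ ≤ rr p - p.1 → ∀ I, φ I p = 0)
    (hdec1 : ∀ p ∈ DD R₁ R₂,
      (∑ I : Fin N, |φ I p|) + (∑ I : Fin N, ∑ α : Fin 4, |pd α (φ I) p|)
        ≤ C₂ * (1 + p.1 + rr p) ^ (-(3 : ℝ) / 2 - γ'))
    (hdec2 : ∀ p ∈ DD R₁ R₂,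
      (∑ I : Fin N, |dt (φ I) p + dr (φ I) p|)
        ≤ C₂ * (1 + p.1 + rr p) ^ (-(5 : ℝ) / 2 - γ')) :
    ∀ p ∈ DD R₁ R₂, ∀ I, φ I p = 0 :=
  stmt2_general R₁ R₂ γ γ' C₁ C₂ hR₂ hγ0 hγ' V W hV1 hVW2 φ hφ heq hvan hdec1 hdec2

end UCP
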